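/- Assume the Riemann Hypothesis. Then for all x ≥ 10^13 and all δ ∈ (0, 10^{-13}], one has J_θ(x,δ) ≤ 2.5571 · δ · (log(2.0001/δ))² · x². -/

import Mathlib

/-- The Chebyshev theta function `θ(x) = ∑_{p ≤ x} log p`. -/
noncomputable def chebyshevTheta (x : ℝ) : ℝ :=
  ∑ p ∈ (Finset.Iic ⌊x⌋₊).filter Nat.Prime, Real.log p

section

open Filter Topology MeasureTheory Set

theorem exists_entire_factor {f : ℂ → ℂ} (hf : Differentiable ℂ f) (a : ℂ)
    (hord : analyticOrderAt f a ≠ ⊤) :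
    ∃ h : ℂ → ℂ, Differentiable ℂ h ∧ h a ≠ 0 ∧
      ∀ z, f z = (z - a) ^ analyticOrderNatAt f a * h z := by
  have hfa : AnalyticAt ℂ f a := hf.analyticAt a
  obtain ⟨g, hg, hga, hfg⟩ := hfa.analyticOrderAt_ne_top.1 hord
  set m := analyticOrderNatAt f a
  refine ⟨fun z => if z = a then g a else f z / (z - a) ^ m, ?_, ?_, ?_⟩
  · intro z
    by_cases hz : z = a
    · subst hz
      refine hg.differentiableAt.congr_of_eventuallyEq ?_
      filter_upwards [hfg] with w hw
      by_cases hwz : w = z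
      · simp [hwz]
      · have : (w - z) ^ m ≠ 0 := pow_ne_zero _ (sub_ne_zero.2 hwz)
        simp only [hwz, if_false, hw, smul_eq_mul]
        field_simp
    · have h1 : DifferentiableAt ℂ (fun z => f z / (z - a) ^ m) z :=
        (hf z).div (by fun_prop) (pow_ne_zero _ (sub_ne_zero.2 hz))
      refine h1.congr_of_eventuallyEq ?_
      filter_upwards [isOpen_ne.mem_nhds hz] with w hw
      simp [show w ≠ a from hw]
  · simpa using hga
  · intro z
    by_cases hz : z = a
    · subst hz
      have := hfg.self_of_nhds
      simpa using this
    · have : (z - a) ^ m ≠ 0 := pow_ne_zero _ (sub_ne_zero.2 hz)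
      simp only [hz, if_false]
      field_simp

theorem exists_entire_factor_finset {f : ℂ → ℂ} (hf : Differentiable ℂ f)
    (hord : ∀ a, analyticOrderAt f a ≠ ⊤) (S : Finset ℂ) :
    ∃ h : ℂ → ℂ, Differentiable ℂ h ∧ (∀ a ∈ S, h a ≠ 0) ∧
      ∀ z, f z = (∏ a ∈ S, (z - a) ^ analyticOrderNatAt f a) * h z := by
  classical
  induction S using Finset.induction_on with
  | empty => exact ⟨f, hf, by simp, by simp⟩
  | insert b S hb ih =>
    obtain ⟨h, hh, hne, hfac⟩ := ih
    set P : ℂ → ℂ := fun z => ∏ a ∈ S, (z - a) ^ analyticOrderNatAt f a with hP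
    have hPd : Differentiable ℂ P := by fun_prop
    have hPb : P b ≠ 0 := by
      refine Finset.prod_ne_zero_iff.2 fun a ha => pow_ne_zero _ (sub_ne_zero.2 ?_)
      rintro rfl
      exact hb ha
    have hfeq : f = P * h := funext hfac
    have hordb : analyticOrderAt f b = analyticOrderAt h b := by
      rw [hfeq, analyticOrderAt_mul (hPd.analyticAt b) (hh.analyticAt b),
        (hPd.analyticAt b).analyticOrderAt_eq_zero.2 hPb, zero_add]
    obtain ⟨k, hk, hkb, hkf⟩ := exists_entire_factor hh b (hordb ▸ hord b)
    have hm : analyticOrderNatAt h b = analyticOrderNatAt f b := by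
      simp [analyticOrderNatAt, hordb]
    have hall : ∀ z, f z = (∏ a ∈ insert b S, (z - a) ^ analyticOrderNatAt f a) * k z := by
      intro z
      rw [hfac z, hkf z, Finset.prod_insert hb, hm]
      ring
    refine ⟨k, hk, ?_, hall⟩
    intro a ha
    rcases Finset.mem_insert.1 ha with rfl | ha
    · exact hkb
    · intro h0
      apply hne a ha
      rw [hkf a, h0, mul_zero]

theorem logDeriv_sub_le_of_nonvanishing {h : ℂ → ℂ} (hh : Differentiable ℂ h) {R E : ℝ}
    (hR : 0 < R) (hE : 0 < E) (hne : ∀ z ∈ Metric.closedBall (0 : ℂ) R, h z ≠ 0)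
    (hbd : ∀ z ∈ Metric.closedBall (0 : ℂ) R, ‖h z‖ ≤ ‖h 0‖ * Real.exp E)
    {z w : ℂ} (hz : ‖z‖ ≤ R / 8) (hw : ‖w‖ ≤ R / 8) :
    ‖logDeriv h z - logDeriv h w‖ ≤ 64 * E / R ^ 2 * ‖z - w‖ := by
  have hsub : Metric.ball (0 : ℂ) R ⊆ Metric.closedBall 0 R := Metric.ball_subset_closedBall
  have hld : DifferentiableOn ℂ (logDeriv h) (Metric.ball 0 R) := by
    intro x hx
    refine DifferentiableAt.differentiableWithinAt ?_
    exact ((hh.analyticAt x).deriv.differentiableAt).div (hh x) (hne x (hsub hx))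
  obtain ⟨p, hp⟩ := hld.isExactOn_ball
  set φ : ℂ → ℂ := fun x => p x - p 0 with hφ
  have hφd : ∀ x ∈ Metric.ball (0 : ℂ) R, HasDerivAt φ (logDeriv h x) x := fun x hx =>
    (hp x hx).sub_const _
  have h0 : (0 : ℂ) ∈ Metric.ball (0 : ℂ) R := by simpa using hR
  have hexp : ∀ x ∈ Metric.ball (0 : ℂ) R, h x = h 0 * Complex.exp (φ x) := by
    have key : ∀ x ∈ Metric.ball (0 : ℂ) R,
        HasDerivAt (fun x => h x * Complex.exp (-φ x)) 0 x := by
      intro x hx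
      have := (hh x).hasDerivAt.mul ((hφd x hx).neg.cexp)
      refine this.congr_deriv ?_
      have := hne x (hsub hx)
      rw [logDeriv_apply]
      simp only [Pi.neg_apply]
      field_simp
      ring
    have hconst : ∀ x ∈ Metric.ball (0 : ℂ) R, h x * Complex.exp (-φ x) = h 0 := by
      intro x hx
      have := (convex_ball (0 : ℂ) R).is_const_of_fderivWithin_eq_zero (𝕜 := ℂ)
        (f := fun x => h x * Complex.exp (-φ x))
        (fun y hy => (key y hy).differentiableAt.differentiableWithinAt)
        (fun y hy => by
          rw [fderivWithin_of_isOpen Metric.isOpen_ball hy]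
          ext
          simpa using (key y hy).deriv) hx h0
      simpa [hφ] using this
    intro x hx
    rw [← hconst x hx, mul_assoc, ← Complex.exp_add]
    simp
  have hφdiff : DifferentiableOn ℂ φ (Metric.ball 0 R) := fun x hx =>
    (hφd x hx).differentiableAt.differentiableWithinAt
  have hmaps : Set.MapsTo φ (Metric.ball 0 R) {z | z.re ≤ E} := by
    intro x hx
    have h1 := hbd x (hsub hx)
    rw [hexp x hx, norm_mul, Complex.norm_exp] at h1
    have h2 : 0 < ‖h 0‖ := norm_pos_iff.2 (hne 0 (hsub h0))
    exact Real.exp_le_exp.1 (le_of_mul_le_mul_left h1 h2)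
  have hφ0 : φ 0 = 0 := by simp [hφ]
  have hb1 : ∀ x : ℂ, ‖x‖ ≤ R / 2 → ‖φ x‖ ≤ 2 * E := by
    intro x hx
    have hx' : x ∈ Metric.ball (0 : ℂ) R := by simp; linarith
    refine (Complex.borelCaratheodory_zero hE hφdiff hmaps hR hx' hφ0).trans ?_
    rw [div_le_iff₀ (by linarith)]
    nlinarith
  have hderiv : ∀ x ∈ Metric.ball (0 : ℂ) R, deriv φ x = logDeriv h x := fun x hx =>
    (hφd x hx).deriv
  have hb2 : ∀ x : ℂ, ‖x‖ ≤ R / 4 → ‖logDeriv h x‖ ≤ 8 * E / R := by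
    intro x hx
    have hx' : x ∈ Metric.ball (0 : ℂ) R := by simp; linarith
    rw [← hderiv x hx']
    have hcb : Metric.closedBall x (R / 4) ⊆ Metric.ball 0 R := by
      intro y hy
      have := norm_le_norm_add_norm_sub x y
      simp [dist_eq_norm] at hy ⊢
      rw [norm_sub_rev] at this
      linarith
    have hcl : DiffContOnCl ℂ φ (Metric.ball x (R / 4)) := by
      refine DifferentiableOn.diffContOnCl ?_
      refine hφdiff.mono ((closure_mono Metric.ball_subset_closedBall).trans ?_)
      rw [Metric.isClosed_closedBall.closure_eq]
      exact hcb
    refine (Complex.norm_deriv_le_of_forall_mem_sphere_norm_le (by positivity) hcl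
      (C := 2 * E) ?_).trans (le_of_eq (by field_simp; ring))
    intro y hy
    apply hb1
    have := norm_le_norm_add_norm_sub x y
    simp at hy
    rw [norm_sub_rev] at this
    linarith
  have hb3 : ∀ x : ℂ, ‖x‖ ≤ R / 8 → ‖deriv (logDeriv h) x‖ ≤ 64 * E / R ^ 2 := by
    intro x hx
    have hcb : Metric.closedBall x (R / 8) ⊆ Metric.ball 0 R := by
      intro y hy
      have := norm_le_norm_add_norm_sub x y
      simp [dist_eq_norm] at hy ⊢
      rw [norm_sub_rev] at this
      linarith
    have hcl : DiffContOnCl ℂ (logDeriv h) (Metric.ball x (R / 8)) := by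
      refine DifferentiableOn.diffContOnCl ?_
      refine hld.mono ((closure_mono Metric.ball_subset_closedBall).trans ?_)
      rw [Metric.isClosed_closedBall.closure_eq]
      exact hcb
    refine (Complex.norm_deriv_le_of_forall_mem_sphere_norm_le (by positivity) hcl
      (C := 8 * E / R) ?_).trans (le_of_eq (by field_simp; ring))
    intro y hy
    apply hb2
    have := norm_le_norm_add_norm_sub x y
    simp at hy
    rw [norm_sub_rev] at this
    linarith
  have := (convex_closedBall (0 : ℂ) (R / 8)).norm_image_sub_le_of_norm_deriv_le
    (f := logDeriv h) (C := 64 * E / R ^ 2) (x := w) (y := z)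
    (fun x hx => by
      have hx' : x ∈ Metric.ball (0 : ℂ) R := by simp at hx ⊢; linarith
      exact (hld x hx').differentiableAt (Metric.isOpen_ball.mem_nhds hx'))
    (fun x hx => hb3 x (by simpa using hx)) (by simpa using hw) (by simpa using hz)
  exact this

theorem finite_zeros_inter_closedBall {f : ℂ → ℂ} (hf : Differentiable ℂ f) (h0 : f 0 ≠ 0) (R : ℝ) :
    ({z | f z = 0} ∩ Metric.closedBall 0 R).Finite := by
  have hA : AnalyticOnNhd ℂ f Set.univ := fun x _ => hf.analyticAt x
  have h1 := mem_codiscrete'.1 (hA.preimage_zero_mem_codiscrete h0)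
  have h2 : (f ⁻¹' {0}ᶜ)ᶜ = {z | f z = 0} := by ext; simp
  have hcl : IsClosed {z | f z = 0} := isClosed_eq hf.continuous continuous_const
  rw [Set.inter_comm]
  refine ((isCompact_closedBall (0 : ℂ) R).inter_right hcl).finite ?_
  rw [h2] at h1
  exact h1.2.mono Set.inter_subset_right

theorem tendsto_sum_zeros_logDeriv_sub {f : ℂ → ℂ} (hf : Differentiable ℂ f) (h0 : f 0 ≠ 0)
    {C α : ℝ} (hα0 : 0 ≤ α) (hα : α < 2)
    (hgrowth : ∀ z, ‖f z‖ ≤ Real.exp (C * (1 + ‖z‖) ^ α))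
    {z w : ℂ} (hz : f z ≠ 0) (hw : f w ≠ 0) :
    Tendsto (fun R : ℝ => ∑ a ∈ (finite_zeros_inter_closedBall hf h0 R).toFinset,
      (analyticOrderNatAt f a : ℂ) * (1 / (z - a) - 1 / (w - a))) atTop
      (𝓝 (logDeriv f z - logDeriv f w)) := by
  have hA : AnalyticOnNhd ℂ f Set.univ := fun x _ => hf.analyticAt x
  have hord : ∀ a, analyticOrderAt f a ≠ ⊤ := fun a =>
    hA.analyticOrderAt_ne_top_of_isPreconnected isPreconnected_univ (Set.mem_univ 0)
      (Set.mem_univ a) (by rw [(hf.analyticAt 0).analyticOrderAt_eq_zero.2 h0]; simp)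
  set E : ℝ → ℝ := fun R => |C| * (1 + 3 * R) ^ α + |Real.log ‖f 0‖| + 1 with hE
  have hquant : ∀ᶠ R : ℝ in atTop,
      ‖∑ a ∈ (finite_zeros_inter_closedBall hf h0 R).toFinset,
        (analyticOrderNatAt f a : ℂ) * (1 / (z - a) - 1 / (w - a)) -
        (logDeriv f z - logDeriv f w)‖ ≤ 64 * E R / R ^ 2 * ‖z - w‖ := by
    filter_upwards [eventually_ge_atTop (8 * ‖z‖), eventually_ge_atTop (8 * ‖w‖),
      eventually_gt_atTop 0] with R hRz hRw hR
    set S := (finite_zeros_inter_closedBall hf h0 R).toFinset with hS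
    have hSmem : ∀ a, a ∈ S ↔ f a = 0 ∧ ‖a‖ ≤ R := by intro a; simp [hS]
    obtain ⟨h, hh, hne, hfac⟩ := exists_entire_factor_finset hf hord S
    set P : ℂ → ℂ := fun z => ∏ a ∈ S, (z - a) ^ analyticOrderNatAt f a with hP
    have hPd : Differentiable ℂ P := by fun_prop
    have hP0 : P 0 ≠ 0 := fun h' => h0 (by rw [hfac 0]; exact mul_eq_zero_of_left h' _)
    have hh0 : h 0 ≠ 0 := fun h' => h0 (by rw [hfac 0, h', mul_zero])
    have hEpos : 0 < E R := by positivity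
    have hne' : ∀ x ∈ Metric.closedBall (0 : ℂ) R, h x ≠ 0 := by
      intro x hx hx0
      have hfx : f x = 0 := by rw [hfac x, hx0, mul_zero]
      exact hne x ((hSmem x).2 ⟨hfx, by simpa using hx⟩) hx0
    have hsph : ∀ x : ℂ, ‖x‖ = 3 * R → ‖h x‖ ≤ ‖h 0‖ * Real.exp (E R) := by
      intro x hx
      have hPle : ‖P 0‖ ≤ ‖P x‖ := by
        simp only [hP, norm_prod, norm_pow]
        refine Finset.prod_le_prod (fun a _ => by positivity) fun a ha => ?_
        refine pow_le_pow_left₀ (norm_nonneg _) ?_ _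
        have h1 := ((hSmem a).1 ha).2
        have h2 := norm_sub_norm_le x a
        rw [zero_sub, norm_neg]
        linarith
      have hf0 : ‖f 0‖ = ‖P 0‖ * ‖h 0‖ := by rw [hfac 0, norm_mul]
      have hfx : ‖f x‖ = ‖P x‖ * ‖h x‖ := by rw [hfac x, norm_mul]
      have hg := hgrowth x
      rw [hx] at hg
      have hf0pos : 0 < ‖f 0‖ := norm_pos_iff.2 h0
      have h3 : ‖f x‖ ≤ ‖f 0‖ * Real.exp (E R) := by
        refine hg.trans ?_
        rw [← Real.exp_log hf0pos, ← Real.exp_add]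
        apply Real.exp_le_exp.2
        have h4 : C * (1 + 3 * R) ^ α ≤ |C| * (1 + 3 * R) ^ α := by
          gcongr; exact le_abs_self C
        have h5 := neg_abs_le (Real.log ‖f 0‖)
        simp only [hE]; linarith
      have hP0pos : 0 < ‖P 0‖ := norm_pos_iff.2 hP0
      have h6 : ‖P 0‖ * ‖h x‖ ≤ ‖P 0‖ * (‖h 0‖ * Real.exp (E R)) := by
        calc ‖P 0‖ * ‖h x‖ ≤ ‖P x‖ * ‖h x‖ := by gcongr
          _ = ‖f x‖ := hfx.symm
          _ ≤ _ := h3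
          _ = _ := by rw [hf0]; ring
      exact le_of_mul_le_mul_left h6 hP0pos
    have hbd : ∀ x ∈ Metric.closedBall (0 : ℂ) R, ‖h x‖ ≤ ‖h 0‖ * Real.exp (E R) := by
      intro x hx
      have hx' : ‖x‖ ≤ R := by simpa using hx
      refine Complex.norm_le_of_forall_mem_frontier_norm_le (U := Metric.ball (0 : ℂ) (3 * R))
        Metric.isBounded_ball hh.diffContOnCl ?_ (subset_closure (by simp; linarith))
      intro y hy
      rw [frontier_ball _ (by positivity)] at hy
      exact hsph y (by simpa using hy)
    have hmain := logDeriv_sub_le_of_nonvanishing hh hR hEpos hne' hbd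
      (z := z) (w := w) (by linarith) (by linarith)
    have hld : ∀ x, f x ≠ 0 → logDeriv f x =
        ∑ a ∈ S, (analyticOrderNatAt f a : ℂ) * (1 / (x - a)) + logDeriv h x := by
      intro x hx
      have hPx : P x ≠ 0 := fun h' => hx (by rw [hfac x]; exact mul_eq_zero_of_left h' _)
      have hhx : h x ≠ 0 := fun h' => hx (by rw [hfac x, h', mul_zero])
      have hfeq : f = fun x => P x * h x := funext hfac
      rw [hfeq, logDeriv_mul x hPx hhx (hPd x) (hh x)]
      congr 1
      have hxa : ∀ a ∈ S, x - a ≠ 0 := by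
        intro a ha h'
        rw [sub_eq_zero.1 h'] at hx
        exact hx ((hSmem a).1 ha).1
      simp only [hP]
      rw [logDeriv_prod (f := fun a x => (x - a) ^ analyticOrderNatAt f a)]
      · refine Finset.sum_congr rfl fun a ha => ?_
        rw [logDeriv_fun_pow (by fun_prop)]
        congr 1
        · rw [← hfeq]
        · rw [logDeriv_apply]
          simp
      · exact fun a ha => pow_ne_zero _ (hxa a ha)
      · intro a ha; fun_prop
    rw [hld z hz, hld w hw]
    calc _ = ‖logDeriv h z - logDeriv h w‖ := by
          rw [← norm_neg]
          congr 1
          simp only [mul_sub, Finset.sum_sub_distrib]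
          ring
      _ ≤ _ := hmain
  have hlim : Tendsto (fun R : ℝ => 64 * E R / R ^ 2 * ‖z - w‖) atTop (𝓝 0) := by
    have hα' : Tendsto (fun R : ℝ => R ^ (α - 2)) atTop (𝓝 0) := by
      have := tendsto_rpow_neg_atTop (y := 2 - α) (by linarith)
      simpa using this
    have h2' : Tendsto (fun R : ℝ => R ^ (-2 : ℝ)) atTop (𝓝 0) :=
      tendsto_rpow_neg_atTop (y := 2) (by norm_num)
    set K := |Real.log ‖f 0‖| + 1 with hK
    have h3 : Tendsto (fun R : ℝ => 64 * (|C| * 4 ^ α * R ^ (α - 2) + K * R ^ (-2 : ℝ)) * ‖z - w‖)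
        atTop (𝓝 (64 * (|C| * 4 ^ α * 0 + K * 0) * ‖z - w‖)) :=
      (((hα'.const_mul _).add (h2'.const_mul _)).const_mul _).mul_const _
    simp only [mul_zero, add_zero, zero_mul] at h3
    refine squeeze_zero' ?_ ?_ h3
    · filter_upwards [eventually_gt_atTop 0] with R hR
      positivity
    · filter_upwards [eventually_ge_atTop 1] with R hR
      have hR0 : 0 < R := by linarith
      have h4 : (1 + 3 * R) ^ α ≤ 4 ^ α * R ^ α := by
        rw [← Real.mul_rpow (by norm_num) hR0.le]
        exact Real.rpow_le_rpow (by positivity) (by linarith) hα0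
      have h5 : R ^ (α - 2) = R ^ α / R ^ 2 := by
        rw [Real.rpow_sub hR0]; norm_num
      have h6 : R ^ (-2 : ℝ) = 1 / R ^ 2 := by
        rw [Real.rpow_neg hR0.le]; norm_num
      rw [h5, h6]
      gcongr ?_ * _
      rw [mul_div_assoc]
      gcongr
      rw [div_le_iff₀ (by positivity)]
      have : (|C| * 4 ^ α * (R ^ α / R ^ 2) + K * (1 / R ^ 2)) * R ^ 2 =
        |C| * (4 ^ α * R ^ α) + K := by field_simp
      rw [this]
      simp only [hE]
      have : |C| * (1 + 3 * R) ^ α ≤ |C| * (4 ^ α * R ^ α) := by gcongr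
      linarith
  rw [tendsto_iff_norm_sub_tendsto_zero]
  refine squeeze_zero' (Eventually.of_forall fun _ => norm_nonneg _) hquant hlim

/-- The entire function `ξ(s) = s(s-1)Λ₀(s) + 1`, equal to `s(s-1)Λ(s)` off `{0, 1}`. -/
noncomputable def entireXi (s : ℂ) : ℂ := s * (s - 1) * completedRiemannZeta₀ s + 1

theorem differentiable_entireXi : Differentiable ℂ entireXi := by
  unfold entireXi
  have := differentiable_completedZeta₀
  fun_prop

theorem entireXi_zero : entireXi 0 = 1 := by simp [entireXi]

theorem entireXi_one_sub (s : ℂ) : entireXi (1 - s) = entireXi s := by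
  simp only [entireXi, completedRiemannZeta₀_one_sub]
  ring

theorem entireXi_eq {s : ℂ} (h0 : s ≠ 0) (h1 : s ≠ 1) :
    entireXi s = s * (s - 1) * completedRiemannZeta s := by
  have : 1 - s ≠ 0 := sub_ne_zero.2 h1.symm
  rw [completedRiemannZeta_eq, entireXi]
  field_simp
  ring

theorem exists_norm_completedRiemannZeta₀_le :
    ∃ T K C p : ℝ, 1 ≤ T ∧ 0 ≤ K ∧ 0 ≤ C ∧ 0 < p ∧ ∀ (n : ℕ) (s : ℂ), 1 / 2 ≤ s.re → s.re ≤ n →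
      ‖completedRiemannZeta₀ s‖ ≤ K * T ^ n + C * (n.factorial / p ^ (n + 1)) := by
  set P := HurwitzZeta.hurwitzEvenFEPair 0 with hP
  obtain ⟨p, hp, hO⟩ := HurwitzZeta.isBigO_atTop_evenKernel_sub 0
  obtain ⟨C, hC0, hC⟩ := hO.exists_pos
  obtain ⟨T₀, hT₀⟩ := eventually_atTop.1 hC.bound
  set T := max T₀ 2
  have hconv : ∀ s : ℂ, MellinConvergent P.f_modif s := fun s =>
    (P.isStrongFEPair_toStrongFEPair.hasMellin s).1
  have hnorm : ∀ u : ℝ, IntegrableOn (fun t : ℝ => t ^ (u - 1) * ‖P.f_modif t‖) (Ioi 0) := by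
    intro u
    have := (hconv u).norm
    refine this.congr ?_
    filter_upwards [ae_restrict_mem measurableSet_Ioi] with t ht
    rw [norm_smul, Complex.norm_cpow_eq_rpow_re_of_pos ht]
    simp
  refine ⟨T, ∫ t in Ioi (0 : ℝ), t ^ ((1 / 4 : ℝ) - 1) * ‖P.f_modif t‖, C, p,
    le_max_of_le_right (by norm_num), setIntegral_nonneg measurableSet_Ioi (fun t ht => ?_),
    hC0.le, hp, fun n s hs hn => ?_⟩
  · have : (0 : ℝ) < t := ht
    positivity
  set K := ∫ t in Ioi (0 : ℝ), t ^ ((1 / 4 : ℝ) - 1) * ‖P.f_modif t‖ with hK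
  have hT1 : 1 ≤ T := le_max_of_le_right (by norm_num)
  have hT2 : 2 ≤ T := le_max_right _ _
  set u : ℝ := s.re / 2 with hu
  have hI : Integrable (fun t : ℝ => t ^ n * Real.exp (-p * t)) (volume.restrict (Ioi 0)) := by
    have := integrableOn_rpow_mul_exp_neg_mul_rpow (s := n) (p := 1) (b := p)
      (by have : (0 : ℝ) ≤ n := by positivity
          linarith) one_pos hp
    refine this.congr ?_
    filter_upwards [ae_restrict_mem measurableSet_Ioi] with t ht
    simp
  have hIv : ∫ t in Ioi (0 : ℝ), t ^ n * Real.exp (-p * t) = n.factorial / p ^ (n + 1) := by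
    have := Real.integral_rpow_mul_exp_neg_mul_Ioi (a := n + 1) (r := p) (by positivity) hp
    rw [Real.Gamma_nat_eq_factorial] at this
    rw [show (n.factorial : ℝ) / p ^ (n + 1) = (1 / p) ^ ((n : ℝ) + 1) * n.factorial by
      rw [← Nat.cast_succ, Real.rpow_natCast, one_div_pow]; field_simp, ← this]
    refine setIntegral_congr_fun measurableSet_Ioi fun t ht => ?_
    simp
  have h1 : ‖completedRiemannZeta₀ s‖ ≤ ∫ t in Ioi (0 : ℝ), t ^ (u - 1) * ‖P.f_modif t‖ := by
    have : completedRiemannZeta₀ s = mellin P.f_modif (s / 2) / 2 := rfl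
    rw [this, norm_div]
    have h2 : ‖mellin P.f_modif (s / 2)‖ ≤ ∫ t in Ioi (0 : ℝ), t ^ (u - 1) * ‖P.f_modif t‖ := by
      rw [mellin]
      refine (norm_integral_le_integral_norm _).trans (le_of_eq ?_)
      refine setIntegral_congr_fun measurableSet_Ioi fun t ht => ?_
      rw [norm_smul, Complex.norm_cpow_eq_rpow_re_of_pos ht]
      simp [hu]
    have h3 := norm_nonneg (mellin P.f_modif (s / 2))
    simp only [Complex.norm_ofNat]
    linarith
  refine h1.trans ?_
  rw [hK, ← hIv, mul_comm, ← integral_const_mul, ← integral_const_mul,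
    ← integral_add ((hnorm _).const_mul _) (hI.const_mul _)]
  refine setIntegral_mono_on (hnorm u) (((hnorm _).const_mul _).add (hI.const_mul _))
    measurableSet_Ioi fun t ht => ?_
  have ht0 : (0 : ℝ) < t := ht
  rcases le_or_gt t T with htT | htT
  · have : t ^ (u - 1) ≤ T ^ n * t ^ ((1 / 4 : ℝ) - 1) := by
      have e : t ^ (u - 1) = t ^ (u - 1 / 4) * t ^ ((1 / 4 : ℝ) - 1) := by
        rw [← Real.rpow_add ht0]; ring_nf
      rw [e]
      gcongr
      calc t ^ (u - 1 / 4) ≤ T ^ (u - 1 / 4) :=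
            Real.rpow_le_rpow ht0.le htT (by rw [hu]; linarith)
        _ ≤ T ^ (n : ℝ) := Real.rpow_le_rpow_of_exponent_le hT1 (by rw [hu]; linarith)
        _ = T ^ n := Real.rpow_natCast _ _
    have h5 : 0 ≤ C * (t ^ n * Real.exp (-p * t)) := by positivity
    have := mul_le_mul_of_nonneg_right this (norm_nonneg (P.f_modif t))
    linarith
  · have hb := hT₀ t ((le_max_left _ _).trans htT.le)
    have hfm : ‖P.f_modif t‖ ≤ C * Real.exp (-p * t) := by
      rw [WeakFEPair.f_modif, Pi.add_apply, indicator_of_mem (mem_Ioi.2 (by linarith)),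
        indicator_of_notMem (notMem_Ioo_of_ge (by linarith)), add_zero]
      refine le_trans (le_of_eq ?_) (hb.trans (le_of_eq ?_))
      · simp only [hP, HurwitzZeta.hurwitzEvenFEPair, Function.comp, if_true]
        rw [← Complex.norm_real]; simp
      · simp
    have h6 : t ^ (u - 1) ≤ t ^ n := by
      rw [← Real.rpow_natCast]
      exact Real.rpow_le_rpow_of_exponent_le (by linarith) (by rw [hu]; linarith)
    have h5 : 0 ≤ T ^ n * (t ^ ((1 / 4 : ℝ) - 1) * ‖P.f_modif t‖) := by positivity
    have : t ^ (u - 1) * ‖P.f_modif t‖ ≤ t ^ n * (C * Real.exp (-p * t)) := by gcongr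
    linarith

theorem exists_norm_entireXi_le :
    ∃ C : ℝ, ∀ s : ℂ, ‖entireXi s‖ ≤ Real.exp (C * (1 + ‖s‖) ^ (3 / 2 : ℝ)) := by
  obtain ⟨T, K, C, p, hT, hK, hC, hp, hb⟩ := exists_norm_completedRiemannZeta₀_le
  set q := max (1 / p) 1 with hq
  have hq1 : 1 ≤ q := le_max_right _ _
  have hlogT := Real.log_nonneg hT
  have hlogq := Real.log_nonneg hq1
  set B : ℝ := K + C + 2 * Real.log T + 4 * Real.log q + 100 with hB
  have hhalf : ∀ s : ℂ, 1 / 2 ≤ s.re → ‖entireXi s‖ ≤ Real.exp (B * (1 + ‖s‖) ^ (3 / 2 : ℝ)) := by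
    intro s hs
    set r := ‖s‖ with hr
    have hr0 : 0 ≤ r := norm_nonneg _
    set n := ⌈r⌉₊ with hn
    have hrn : r ≤ n := Nat.le_ceil r
    have hnr : (n : ℝ) ≤ 1 + r := by linarith [Nat.ceil_lt_add_one hr0]
    have hb' := hb n s hs ((Complex.re_le_norm s).trans hrn)
    set x := 1 + r with hx
    have hx1 : 1 ≤ x := by linarith
    set G := x ^ (3 / 2 : ℝ) with hG
    have hxG : x ≤ G := by
      have := Real.rpow_le_rpow_of_exponent_le hx1 (show (1 : ℝ) ≤ 3 / 2 by norm_num)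
      rwa [Real.rpow_one] at this
    have hG1 : 1 ≤ G := hx1.trans hxG
    have hTn : T ^ n ≤ Real.exp (Real.log T * G) := by
      rw [← Real.exp_log (show 0 < T by linarith), ← Real.exp_nat_mul, Real.log_exp]
      apply Real.exp_le_exp.2
      rw [mul_comm]
      gcongr
      linarith
    have hfac : (n.factorial : ℝ) ≤ Real.exp (2 * G) := by
      have h1 : (n.factorial : ℝ) ≤ x ^ x := by
        have h2 : (n.factorial : ℝ) ≤ (n : ℝ) ^ n := by exact_mod_cast Nat.factorial_le_pow n
        calc (n.factorial : ℝ) ≤ (n : ℝ) ^ n := h2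
          _ ≤ x ^ n := by gcongr
          _ = x ^ (n : ℝ) := (Real.rpow_natCast _ _).symm
          _ ≤ x ^ x := Real.rpow_le_rpow_of_exponent_le hx1 hnr
      refine h1.trans ?_
      rw [Real.rpow_def_of_pos (by linarith)]
      apply Real.exp_le_exp.2
      have h3 := Real.log_le_rpow_div (x := x) (ε := 1 / 2) (by linarith) (by norm_num)
      have h4 : G = x ^ (1 / 2 : ℝ) * x := by
        rw [hG, ← Real.rpow_add_one (by linarith)]; norm_num
      rw [h4]
      nlinarith
    have hpn : 1 / p ^ (n + 1) ≤ Real.exp (2 * Real.log q * G) := by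
      have h1 : 1 / p ^ (n + 1) ≤ q ^ (n + 1) := by
        rw [← one_div_pow]
        gcongr
        exact le_max_left _ _
      refine h1.trans ?_
      rw [← Real.exp_log (show 0 < q by linarith), ← Real.exp_nat_mul, Real.log_exp]
      apply Real.exp_le_exp.2
      push_cast
      nlinarith
    have hcz : ‖completedRiemannZeta₀ s‖ ≤
        Real.exp ((K + C + Real.log T + 2 * Real.log q + 2) * G) := by
      have hK' : K * T ^ n ≤ (K * G) * Real.exp (Real.log T * G) := by
        gcongr
        nlinarith
      have hC' : C * (n.factorial / p ^ (n + 1)) ≤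
          (C * G) * Real.exp (2 * G + 2 * Real.log q * G) := by
        rw [Real.exp_add, div_eq_mul_one_div]
        gcongr
        nlinarith
      have e1 : Real.exp (Real.log T * G) ≤
          Real.exp ((Real.log T + 2 * Real.log q + 2) * G) := by
        apply Real.exp_le_exp.2; nlinarith
      have e2 : Real.exp (2 * G + 2 * Real.log q * G) ≤
          Real.exp ((Real.log T + 2 * Real.log q + 2) * G) := by
        apply Real.exp_le_exp.2; nlinarith
      have e3 : (K + C) * G ≤ Real.exp ((K + C) * G) := by
        linarith [Real.add_one_le_exp ((K + C) * G)]
      calc _ ≤ _ := hb'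
        _ ≤ K * G * Real.exp ((Real.log T + 2 * Real.log q + 2) * G) +
            C * G * Real.exp ((Real.log T + 2 * Real.log q + 2) * G) :=
          add_le_add (hK'.trans (by gcongr)) (hC'.trans (by gcongr))
        _ = (K + C) * G * Real.exp ((Real.log T + 2 * Real.log q + 2) * G) := by ring
        _ ≤ Real.exp ((K + C) * G) * Real.exp ((Real.log T + 2 * Real.log q + 2) * G) := by
          gcongr
        _ = _ := by rw [← Real.exp_add]; ring_nf
    have hs1 : ‖s - 1‖ ≤ x := by
      have := norm_sub_le s 1
      simp at this; linarith
    have hxe : x ≤ Real.exp G := by linarith [Real.add_one_le_exp G]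
    set E := (K + C + Real.log T + 2 * Real.log q + 2) * G with hE
    have hE0 : 0 ≤ E := by positivity
    calc ‖entireXi s‖ ≤ ‖s‖ * ‖s - 1‖ * ‖completedRiemannZeta₀ s‖ + 1 := by
          rw [entireXi]
          refine (norm_add_le _ _).trans ?_
          simp
      _ ≤ Real.exp G * Real.exp G * Real.exp E + 1 := by
          gcongr
          · linarith
          · exact hs1.trans hxe
      _ = Real.exp (G + G + E) + 1 := by rw [Real.exp_add, Real.exp_add]
      _ ≤ Real.exp (G + G + E) * Real.exp 1 := by
          have h1 : 1 ≤ Real.exp (G + G + E) := Real.one_le_exp (by linarith)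
          have h2 : 2 ≤ Real.exp 1 := by linarith [Real.add_one_le_exp 1]
          nlinarith
      _ = Real.exp (G + G + E + 1) := by rw [← Real.exp_add]
      _ ≤ Real.exp (B * G) := by
          apply Real.exp_le_exp.2
          rw [hE, hB]
          nlinarith
  have hB0 : 0 ≤ B := by positivity
  refine ⟨B * 2 ^ (3 / 2 : ℝ), fun s => ?_⟩
  have h2 : (1 : ℝ) ≤ 2 ^ (3 / 2 : ℝ) := Real.one_le_rpow (by norm_num) (by norm_num)
  have hmono : ∀ y, 0 ≤ y → y ≤ 1 + ‖s‖ → B * (1 + y) ^ (3 / 2 : ℝ) ≤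
      B * 2 ^ (3 / 2 : ℝ) * (1 + ‖s‖) ^ (3 / 2 : ℝ) := by
    intro y hy0 hy
    rw [mul_assoc, ← Real.mul_rpow (by norm_num) (by positivity)]
    gcongr
    linarith [norm_nonneg s]
  rcases le_or_gt (1 / 2) s.re with h | h
  · exact (hhalf s h).trans (Real.exp_le_exp.2 (hmono _ (norm_nonneg _) (by linarith)))
  · rw [← entireXi_one_sub]
    refine (hhalf (1 - s) (by simp; linarith)).trans
      (Real.exp_le_exp.2 (hmono _ (norm_nonneg _) ?_))
    have := norm_sub_le 1 s
    simpa using this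

theorem riemannZeta_eq_zero_of_entireXi_eq_zero {s : ℂ} (h : entireXi s = 0) :
    s ≠ 0 ∧ s ≠ 1 ∧ riemannZeta s = 0 := by
  have h0 : s ≠ 0 := by rintro rfl; simp [entireXi_zero] at h
  have h1 : s ≠ 1 := by
    rintro rfl
    rw [← entireXi_one_sub] at h
    simp [entireXi_zero] at h
  refine ⟨h0, h1, ?_⟩
  rw [entireXi_eq h0 h1] at h
  have : completedRiemannZeta s = 0 := by
    simpa [h0, sub_ne_zero.2 h1] using h
  rw [riemannZeta_def_of_ne_zero h0, this, zero_div]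

theorem re_eq_half_of_entireXi_eq_zero (hRH : RiemannHypothesis) {s : ℂ} (h : entireXi s = 0) :
    s.re = 1 / 2 := by
  obtain ⟨-, h1, hz⟩ := riemannZeta_eq_zero_of_entireXi_eq_zero h
  refine hRH s hz ?_ h1
  rintro ⟨n, hn⟩
  have h' : entireXi (1 - s) = 0 := by rw [entireXi_one_sub, h]
  obtain ⟨-, -, hz'⟩ := riemannZeta_eq_zero_of_entireXi_eq_zero h'
  refine riemannZeta_ne_zero_of_one_le_re ?_ hz'
  have : 0 ≤ (n : ℝ) := n.cast_nonneg
  simp [hn]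
  linarith

theorem logDeriv_entireXi_one_sub (s : ℂ) : logDeriv entireXi (1 - s) = -logDeriv entireXi s := by
  have h : entireXi = fun s => entireXi (1 - s) := by ext s; rw [entireXi_one_sub]
  have h2 : deriv entireXi s = -deriv entireXi (1 - s) := by
    conv_lhs => rw [h]
    rw [deriv_comp_const_sub]
  rw [logDeriv_apply, logDeriv_apply, h2, entireXi_one_sub]
  ring

theorem one_add_sq_le_mul_norm_sq_add_sq {w : ℂ} (hw : 0 < w.re) (γ : ℝ) :
    1 + γ ^ 2 ≤ (1 + (1 + ‖w‖ ^ 2) / w.re ^ 2) * ‖w ^ 2 + (γ : ℂ) ^ 2‖ := by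
  set N := ‖w ^ 2 + (γ : ℂ) ^ 2‖ with hN
  have h1 : γ ^ 2 ≤ N + ‖w‖ ^ 2 := by
    have := norm_sub_le (w ^ 2 + (γ : ℂ) ^ 2) (w ^ 2)
    rw [add_sub_cancel_left, norm_pow, norm_pow, Complex.norm_real, Real.norm_eq_abs, sq_abs] at this
    exact this
  have h2 : w.re ^ 2 ≤ N := by
    have e : w ^ 2 + (γ : ℂ) ^ 2 = (w - γ * Complex.I) * (w + γ * Complex.I) := by
      ring_nf; simp
    rw [hN, e, norm_mul, sq]
    have a1 : w.re ≤ ‖w - γ * Complex.I‖ := by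
      refine le_trans (le_of_eq ?_) (Complex.re_le_norm _); simp
    have a2 : w.re ≤ ‖w + γ * Complex.I‖ := by
      refine le_trans (le_of_eq ?_) (Complex.re_le_norm _); simp
    gcongr
  have h3 : (1 + ‖w‖ ^ 2) ≤ (1 + ‖w‖ ^ 2) / w.re ^ 2 * N := by
    rw [div_mul_eq_mul_div, le_div_iff₀ (by positivity)]
    gcongr
  linarith

/-- Under the Riemann hypothesis, the partial fraction expansion of `ξ'/ξ` over the ordinates `γ`
of the zeros, counted with multiplicity. -/
theorem exists_hasSum_logDeriv_entireXi (hRH : RiemannHypothesis) :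
    ∃ (ι : Type) (γ : ι → ℝ), ∀ w : ℂ, 0 < w.re →
      HasSum (fun i => w / (w ^ 2 + (γ i : ℂ) ^ 2)) (logDeriv entireXi (1 / 2 + w)) := by
  obtain ⟨C, hC⟩ := exists_norm_entireXi_le
  have h0 : entireXi 0 ≠ 0 := by simp [entireXi_zero]
  have hfin := finite_zeros_inter_closedBall differentiable_entireXi h0
  set Z := {ρ : ℂ // entireXi ρ = 0}
  set m : ℂ → ℕ := fun a => analyticOrderNatAt entireXi a with hm
  set ι := Σ ρ : Z, Fin (m ρ)
  set γ : ι → ℝ := fun i => i.1.1.im with hγ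
  classical
  set T : ℝ → Finset ι := fun R =>
    ((hfin R).toFinset.subtype (fun ρ => entireXi ρ = 0)).sigma fun ρ => Finset.univ with hT
  have hTmono : Monotone T := by
    intro R R' h
    refine Finset.sigma_mono (fun ρ hρ => ?_) fun _ => le_rfl
    simp only [Finset.mem_subtype, Set.Finite.mem_toFinset, Set.mem_inter_iff,
      mem_closedBall_zero_iff] at hρ ⊢
    exact ⟨hρ.1, hρ.2.trans h⟩
  have hTlim : Tendsto T atTop atTop := by
    refine tendsto_atTop_finset_of_monotone hTmono fun i => ⟨‖i.1.1‖, ?_⟩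
    exact Finset.mem_sigma.2 ⟨Finset.mem_subtype.2 ((hfin _).mem_toFinset.2 ⟨i.1.2, by simp⟩),
      Finset.mem_univ _⟩
  have hne : ∀ w : ℂ, w.re ≠ 0 → entireXi (1 / 2 + w) ≠ 0 := by
    intro w hw h
    have := re_eq_half_of_entireXi_eq_zero hRH h
    apply hw
    simp at this; exact this
  have hlim : ∀ w : ℂ, 0 < w.re → Tendsto (fun R => ∑ i ∈ T R, w / (w ^ 2 + (γ i : ℂ) ^ 2)) atTop
      (𝓝 (logDeriv entireXi (1 / 2 + w))) := by
    intro w hw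
    have hl := tendsto_sum_zeros_logDeriv_sub differentiable_entireXi h0 (by norm_num)
      (by norm_num) hC (hne w hw.ne') (hne (-w) (by simpa using hw.ne'))
    have e : (1 / 2 : ℂ) + -w = 1 - (1 / 2 + w) := by ring
    have hl2 := hl.div_const 2
    have e2 : (logDeriv entireXi (1 / 2 + w) - logDeriv entireXi (1 / 2 + -w)) / 2 =
        logDeriv entireXi (1 / 2 + w) := by
      rw [e, logDeriv_entireXi_one_sub]; ring
    rw [e2] at hl2
    refine hl2.congr fun R => ?_
    rw [Finset.sum_div, hT, Finset.sum_sigma]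
    have e3 : ∑ ρ ∈ (hfin R).toFinset.subtype (fun ρ => entireXi ρ = 0),
        ∑ j : Fin (m ρ), w / (w ^ 2 + (γ ⟨ρ, j⟩ : ℂ) ^ 2) =
        ∑ a ∈ (hfin R).toFinset, (m a : ℂ) * (w / (w ^ 2 + (a.im : ℂ) ^ 2)) := by
      rw [← Finset.sum_subtype_of_mem (p := fun ρ => entireXi ρ = 0)
        (fun a => (m a : ℂ) * (w / (w ^ 2 + (a.im : ℂ) ^ 2)))]
      · refine Finset.sum_congr rfl fun ρ _ => ?_
        simp [hγ]
      · intro x hx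
        simp at hx; exact hx.1
    rw [e3]
    refine Finset.sum_congr rfl fun a ha => ?_
    have ha' : a.re = 1 / 2 := re_eq_half_of_entireXi_eq_zero hRH (by simp at ha; exact ha.1)
    have ea : a = 1 / 2 + a.im * Complex.I := by
      apply Complex.ext <;> simp [ha']
    have n1 : w - a.im * Complex.I ≠ 0 := by
      intro h; apply hw.ne'; simpa using congrArg Complex.re h
    have n2 : w + a.im * Complex.I ≠ 0 := by
      intro h; apply hw.ne'; simpa using congrArg Complex.re h
    have e5 : w ^ 2 + (a.im : ℂ) ^ 2 = (w - a.im * Complex.I) * (w + a.im * Complex.I) := by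
      ring_nf; simp
    have e6 : 1 / 2 + w - a = w - a.im * Complex.I := by
      conv_lhs => rw [ea]
      ring
    have e7 : 1 / 2 + -w - a = -(w + a.im * Complex.I) := by
      conv_lhs => rw [ea]
      ring
    rw [e6, e7, e5]
    field_simp
    ring
  have hsum1 : Summable fun i => 1 / (1 + γ i ^ 2) := by
    have h1 := hlim 1 (by simp)
    have h2 := (Complex.continuous_re.tendsto _).comp h1
    have hcast : ∀ i, (1 / (1 ^ 2 + (γ i : ℂ) ^ 2)).re = 1 / (1 + γ i ^ 2) := by
      intro i
      have : (1 / (1 ^ 2 + (γ i : ℂ) ^ 2)) = ((1 / (1 + γ i ^ 2) : ℝ) : ℂ) := by push_cast; simp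
      rw [this, Complex.ofReal_re]
    have h3 : Tendsto (fun R => ∑ i ∈ T R, 1 / (1 + γ i ^ 2)) atTop
        (𝓝 (logDeriv entireXi (1 / 2 + 1)).re) := by
      refine h2.congr fun R => ?_
      simp only [Function.comp, Complex.re_sum, hcast]
    refine summable_of_sum_le (fun i => by positivity) (c := (logDeriv entireXi (1 / 2 + 1)).re)
      fun u => ?_
    refine ge_of_tendsto h3 ?_
    filter_upwards [hTlim.eventually_ge_atTop u] with R hR
    exact Finset.sum_le_sum_of_subset_of_nonneg hR fun i _ _ => by positivity
  refine ⟨ι, γ, fun w hw => ?_⟩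
  have hs : Summable fun i => w / (w ^ 2 + (γ i : ℂ) ^ 2) := by
    refine Summable.of_norm_bounded
      (hsum1.mul_left (‖w‖ * (1 + (1 + ‖w‖ ^ 2) / w.re ^ 2))) fun i => ?_
    have h1 := one_add_sq_le_mul_norm_sq_add_sq hw (γ i)
    have hpos : 0 < ‖w ^ 2 + (γ i : ℂ) ^ 2‖ := by
      by_contra h
      have : ‖w ^ 2 + (γ i : ℂ) ^ 2‖ = 0 := le_antisymm (not_lt.1 h) (norm_nonneg _)
      rw [this] at h1
      nlinarith [sq_nonneg (γ i)]
    rw [norm_div, mul_one_div, div_le_div_iff₀ hpos (by positivity), mul_assoc]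
    gcongr
  have := tendsto_nhds_unique (hs.hasSum.comp hTlim) (hlim w hw)
  rw [← this]
  exact hs.hasSum

theorem digamma_ofReal {x : ℝ} (hx : 0 < x) :
    Complex.digamma x = (deriv (Real.log ∘ Real.Gamma) x : ℝ) := by
  have hd : DifferentiableAt ℝ Real.Gamma x :=
    Real.differentiableAt_Gamma fun m => by
      have : (0 : ℝ) ≤ m := m.cast_nonneg
      linarith
  have hdc : DifferentiableAt ℂ Complex.Gamma x :=
    Complex.differentiableAt_Gamma _ fun m h => by
      have : (0 : ℝ) ≤ m := m.cast_nonneg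
      have := congrArg Complex.re h
      simp at this
      linarith
  have h1 : deriv Complex.Gamma x = (deriv Real.Gamma x : ℝ) := by
    have h2 : HasDerivAt (fun y : ℝ => Complex.Gamma y) (deriv Complex.Gamma x) x :=
      hdc.hasDerivAt.comp_ofReal
    have h3 : HasDerivAt (fun y : ℝ => Complex.Gamma y) ((deriv Real.Gamma x : ℝ) : ℂ) x := by
      have := hd.hasDerivAt.ofReal_comp
      refine this.congr_of_eventuallyEq (Eventually.of_forall fun y => ?_)
      exact Complex.Gamma_ofReal y
    exact h2.unique h3
  have h4 : deriv (Real.log ∘ Real.Gamma) x = deriv Real.Gamma x / Real.Gamma x :=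
    (hd.hasDerivAt.log (Real.Gamma_pos_of_pos hx).ne').deriv
  rw [Complex.digamma_def, logDeriv_apply, h1, h4, Complex.Gamma_ofReal]
  push_cast
  rfl

theorem differentiableAt_log_Gamma {x : ℝ} (hx : 0 < x) :
    DifferentiableAt ℝ (Real.log ∘ Real.Gamma) x := by
  have hd : DifferentiableAt ℝ Real.Gamma x :=
    Real.differentiableAt_Gamma fun m => by
      have : (0 : ℝ) ≤ m := m.cast_nonneg
      linarith
  exact (hd.hasDerivAt.log (Real.Gamma_pos_of_pos hx).ne').differentiableAt

theorem log_Gamma_add_one_sub {x : ℝ} (hx : 0 < x) :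
    (Real.log ∘ Real.Gamma) (x + 1) - (Real.log ∘ Real.Gamma) x = Real.log x := by
  simp only [Function.comp, Real.Gamma_add_one hx.ne']
  rw [Real.log_mul hx.ne' (Real.Gamma_pos_of_pos hx).ne']
  ring

theorem deriv_log_Gamma_le_log {x : ℝ} (hx : 0 < x) :
    deriv (Real.log ∘ Real.Gamma) x ≤ Real.log x := by
  have := Real.convexOn_log_Gamma.deriv_le_slope (x := x) (y := x + 1) hx
    (by simp; linarith) (by linarith) (differentiableAt_log_Gamma hx)
  rwa [slope_def_field, log_Gamma_add_one_sub hx, add_sub_cancel_left, div_one] at this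

theorem log_le_deriv_log_Gamma_add_one {x : ℝ} (hx : 0 < x) :
    Real.log x ≤ deriv (Real.log ∘ Real.Gamma) (x + 1) := by
  have := Real.convexOn_log_Gamma.slope_le_deriv (x := x) (y := x + 1) hx
    (by simp; linarith) (by linarith) (differentiableAt_log_Gamma (by linarith))
  rwa [slope_def_field, log_Gamma_add_one_sub hx, add_sub_cancel_left, div_one] at this

theorem deriv_log_Gamma_add_nat {x : ℝ} (hx : 0 < x) (N : ℕ) :
    deriv (Real.log ∘ Real.Gamma) (x + N) =
      deriv (Real.log ∘ Real.Gamma) x + ∑ j ∈ Finset.range N, 1 / (x + j) := by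
  induction N with
  | zero => simp
  | succ N ih =>
    have hp : 0 < x + N := by positivity
    have h := Complex.digamma_apply_add_one ((x + N : ℝ) : ℂ) fun m h => by
      have h0 : (0 : ℝ) ≤ m := m.cast_nonneg
      have := congrArg Complex.re h
      rw [Complex.ofReal_re] at this
      simp at this
      linarith
    rw [digamma_ofReal hp, ← Complex.ofReal_one, ← Complex.ofReal_add,
      digamma_ofReal (by positivity)] at h
    have h' : deriv (Real.log ∘ Real.Gamma) (x + N + 1) =
      deriv (Real.log ∘ Real.Gamma) (x + N) + (x + N)⁻¹ := by exact_mod_cast h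
    rw [Finset.sum_range_succ, ← add_assoc, ← ih, one_div, ← h']
    push_cast
    ring_nf

theorem summable_one_div_nat_add_one_sq : Summable fun j : ℕ => 1 / ((j : ℝ) + 1) ^ 2 := by
  have := (summable_nat_add_iff 1).2 (Real.summable_one_div_nat_pow.2 (by norm_num : 1 < 2))
  simpa using this

theorem norm_digamma_term_le {z : ℂ} {ε R : ℝ} (hε : 0 < ε) (hε1 : ε ≤ 1) (hz : ε ≤ z.re)
    (hR : ‖z‖ ≤ R) (j : ℕ) :
    ‖1 / (1 + (j : ℂ)) - 1 / (z + j)‖ ≤ (R + 1) / ε * (1 / ((j : ℝ) + 1) ^ 2) := by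
  have hj : (0 : ℝ) ≤ j := j.cast_nonneg
  have h1 : ε * (j + 1) ≤ ‖z + j‖ := by
    refine le_trans ?_ (Complex.re_le_norm _)
    simp
    nlinarith
  have h2 : ‖1 + (j : ℂ)‖ = j + 1 := by
    rw [add_comm]; exact_mod_cast Complex.norm_natCast (j + 1)
  have n1 : 1 + (j : ℂ) ≠ 0 := by rw [← norm_pos_iff, h2]; positivity
  have n2 : z + (j : ℂ) ≠ 0 := by
    rw [← norm_pos_iff]; exact lt_of_lt_of_le (by positivity) h1
  have h3 : 1 / (1 + (j : ℂ)) - 1 / (z + j) = (z - 1) / ((1 + j) * (z + j)) := by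
    field_simp; ring
  have h4 : ‖z - 1‖ ≤ R + 1 := by
    have := norm_sub_le z 1
    simp at this; linarith
  have hR0 : 0 ≤ R := (norm_nonneg _).trans hR
  rw [h3, norm_div, norm_mul, h2]
  calc ‖z - 1‖ / ((j + 1) * ‖z + j‖) ≤ (R + 1) / ((j + 1) * (ε * (j + 1))) := by gcongr
    _ = _ := by field_simp

theorem summable_digamma_term {z : ℂ} (hz : 0 < z.re) :
    Summable fun j : ℕ => 1 / (1 + (j : ℂ)) - 1 / (z + j) :=
  Summable.of_norm_bounded (summable_one_div_nat_add_one_sq.mul_left _)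
    fun j => norm_digamma_term_le (lt_min hz one_pos) (min_le_right _ _) (min_le_left _ _) le_rfl j

theorem hasSum_digamma_sub_digamma_ofReal {x : ℝ} (hx : 0 < x) :
    HasSum (fun j : ℕ => 1 / (1 + (j : ℂ)) - 1 / (x + j))
      (Complex.digamma x - Complex.digamma 1) := by
  have hs := summable_digamma_term (z := x) (by simpa using hx)
  have hreal : Tendsto (fun N : ℕ => ∑ j ∈ Finset.range N, (1 / (1 + (j : ℝ)) - 1 / (x + j))) atTop
      (𝓝 (deriv (Real.log ∘ Real.Gamma) x - deriv (Real.log ∘ Real.Gamma) 1)) := by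
    set g := deriv (Real.log ∘ Real.Gamma) with hg
    have e : ∀ N : ℕ, ∑ j ∈ Finset.range N, (1 / (1 + (j : ℝ)) - 1 / (x + j)) =
        (g x - g 1) + (g (1 + N) - g (x + N)) := by
      intro N
      rw [Finset.sum_sub_distrib, hg, deriv_log_Gamma_add_nat hx, deriv_log_Gamma_add_nat one_pos]
      ring
    have hlog : ∀ a b : ℝ, Tendsto (fun N : ℕ => Real.log (a + N) - Real.log (b + N)) atTop
        (𝓝 0) := by
      intro a b
      have h1 : Tendsto (fun N : ℕ => (a + N) / (b + N : ℝ)) atTop (𝓝 1) := by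
        have hb : Tendsto (fun N : ℕ => (b + N : ℝ)) atTop atTop :=
          tendsto_atTop_add_const_left _ _ tendsto_natCast_atTop_atTop
        have := (tendsto_const_nhds (x := a - b)).div_atTop hb
        have h2 := this.add_const 1
        rw [zero_add] at h2
        refine h2.congr' ?_
        filter_upwards [hb.eventually_gt_atTop 0] with N hN
        field_simp
        ring
      have h2 := ((Real.continuousAt_log one_ne_zero).tendsto).comp h1
      rw [Real.log_one] at h2
      refine h2.congr' ?_
      have hb : Tendsto (fun N : ℕ => (b + N : ℝ)) atTop atTop :=
        tendsto_atTop_add_const_left _ _ tendsto_natCast_atTop_atTop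
      have ha : Tendsto (fun N : ℕ => (a + N : ℝ)) atTop atTop :=
        tendsto_atTop_add_const_left _ _ tendsto_natCast_atTop_atTop
      filter_upwards [hb.eventually_gt_atTop 0, ha.eventually_gt_atTop 0] with N hN hN'
      rw [Function.comp, Real.log_div hN'.ne' hN.ne']
    have hz : Tendsto (fun N : ℕ => g (1 + N) - g (x + N)) atTop (𝓝 0) := by
      refine tendsto_of_tendsto_of_tendsto_of_le_of_le' (hlog 0 x) (hlog 1 (x - 1)) ?_ ?_
      · filter_upwards [eventually_gt_atTop 0] with N hN
        have hN' : (0 : ℝ) < N := by exact_mod_cast hN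
        have a1 := log_le_deriv_log_Gamma_add_one hN'
        have a2 := deriv_log_Gamma_le_log (x := x + N) (by positivity)
        rw [add_comm] at a1
        rw [zero_add]
        linarith
      · filter_upwards [eventually_gt_atTop 1] with N hN
        have hN' : (1 : ℝ) < N := by exact_mod_cast hN
        have a1 := log_le_deriv_log_Gamma_add_one (x := x - 1 + N) (by linarith)
        have a2 := deriv_log_Gamma_le_log (x := 1 + N) (by positivity)
        rw [show x - 1 + N + 1 = x + N by ring] at a1
        linarith
    have := hz.const_add (g x - g 1)
    rw [add_zero] at this
    exact this.congr fun N => (e N).symm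
  have h2 := (Complex.continuous_ofReal.tendsto _).comp hreal
  have h3 : Tendsto (fun N : ℕ => ∑ j ∈ Finset.range N, (1 / (1 + (j : ℂ)) - 1 / ((x : ℂ) + j)))
      atTop (𝓝 (Complex.digamma x - Complex.digamma 1)) := by
    have e1 := digamma_ofReal hx
    have e2 := digamma_ofReal one_pos
    rw [Complex.ofReal_one] at e2
    rw [e1, e2, ← Complex.ofReal_sub]
    refine h2.congr fun N => ?_
    simp
  rw [← tendsto_nhds_unique hs.hasSum.tendsto_sum_nat h3]
  exact hs.hasSum

theorem hasSum_digamma_sub_digamma_one {z : ℂ} (hz : 0 < z.re) :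
    HasSum (fun j : ℕ => 1 / (1 + (j : ℂ)) - 1 / (z + j))
      (Complex.digamma z - Complex.digamma 1) := by
  set U : Set ℂ := {z | 0 < z.re} with hU
  have hUo : IsOpen U := isOpen_lt continuous_const Complex.continuous_re
  set G : ℂ → ℂ := fun z => ∑' j : ℕ, (1 / (1 + (j : ℂ)) - 1 / (z + j)) with hG
  have hGd : DifferentiableOn ℂ G U := by
    intro w hw
    have hw' : 0 < w.re := hw
    obtain ⟨ε, hε, hε1, hεw⟩ : ∃ ε : ℝ, 0 < ε ∧ ε ≤ 1 ∧ ε < w.re :=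
      ⟨min (w.re / 2) 1, lt_min (by linarith) one_pos, min_le_right _ _,
        (min_le_left _ _).trans_lt (by linarith)⟩
    obtain ⟨R, hR⟩ : ∃ R : ℝ, ‖w‖ < R := exists_gt _
    set V : Set ℂ := {z | ε < z.re} ∩ Metric.ball 0 R
    have hVo : IsOpen V :=
      (isOpen_lt continuous_const Complex.continuous_re).inter Metric.isOpen_ball
    have hwV : w ∈ V := ⟨hεw, by simpa using hR⟩
    have : DifferentiableOn ℂ G V := by
      refine Complex.differentiableOn_tsum_of_summable_norm
        (u := fun j : ℕ => (R + 1) / ε * (1 / ((j : ℝ) + 1) ^ 2))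
        (summable_one_div_nat_add_one_sq.mul_left _) (fun j => ?_) hVo fun j z hz => ?_
      · intro z hz
        have hne : z + j ≠ 0 := by
          intro h
          have := congrArg Complex.re h
          have h1 : ε < z.re := hz.1
          simp at this
          have : (0 : ℝ) ≤ j := j.cast_nonneg
          linarith
        have hd : DifferentiableAt ℂ (fun y : ℂ => y + j) z := differentiableAt_id.add_const _
        exact ((differentiableAt_const _).sub
          ((differentiableAt_const _).fun_div hd hne)).differentiableWithinAt
      · have h1 : ε < z.re := hz.1
        have h2 : ‖z‖ < R := mem_ball_zero_iff.1 hz.2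
        exact norm_digamma_term_le hε hε1 h1.le h2.le j
    exact (this.differentiableAt (hVo.mem_nhds hwV)).differentiableWithinAt
  have hD : DifferentiableOn ℂ (fun z => Complex.digamma z - Complex.digamma 1) U := by
    intro w hw
    have hw' : 0 < w.re := hw
    have hg : ∀ v ∈ U, DifferentiableAt ℂ Complex.Gamma v := fun v hv =>
      Complex.differentiableAt_Gamma _ fun m h => by
        have h0 : (0 : ℝ) ≤ m := m.cast_nonneg
        have := congrArg Complex.re h
        have hv' : 0 < v.re := hv
        simp at this
        linarith
    have hg' : DifferentiableOn ℂ Complex.Gamma U := fun v hv => (hg v hv).differentiableWithinAt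
    have h1 : DifferentiableOn ℂ (deriv Complex.Gamma) U := hg'.deriv hUo
    have h2 : DifferentiableAt ℂ Complex.digamma w := by
      rw [Complex.digamma_def]
      exact (h1.differentiableAt (hUo.mem_nhds hw)).div (hg w hw)
        (Complex.Gamma_ne_zero_of_re_pos hw')
    exact (h2.sub_const _).differentiableWithinAt
  have heq : EqOn G (fun z => Complex.digamma z - Complex.digamma 1) U := by
    refine (hGd.analyticOnNhd hUo).eqOn_of_preconnected_of_frequently_eq
      (hD.analyticOnNhd hUo) (convex_halfSpace_re_gt 0).isPreconnected (z₀ := 1) (by simp [hU]) ?_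
    have ht : Tendsto (fun n : ℕ => (1 + 1 / ((n : ℂ) + 1))) atTop (𝓝[≠] 1) := by
      refine tendsto_nhdsWithin_iff.2 ⟨?_, Eventually.of_forall fun n => ?_⟩
      · have := (tendsto_one_div_add_atTop_nhds_zero_nat (𝕜 := ℂ)).const_add 1
        rwa [add_zero] at this
      · have : (n : ℂ) + 1 ≠ 0 := by exact_mod_cast n.succ_ne_zero
        simp [this]
    refine ht.frequently (Frequently.of_forall fun n => ?_)
    have h := hasSum_digamma_sub_digamma_ofReal (x := 1 + 1 / ((n : ℝ) + 1)) (by positivity)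
    have := h.tsum_eq
    push_cast at this
    exact this
  have := heq (show z ∈ U from hz)
  rw [hG] at this
  simp only at this
  rw [← this]
  exact (summable_digamma_term hz).hasSum

theorem hasSum_digamma_sub {z w : ℂ} (hz : 0 < z.re) (hw : 0 < w.re) :
    HasSum (fun j : ℕ => 1 / (w + j) - 1 / (z + j)) (Complex.digamma z - Complex.digamma w) := by
  have := (hasSum_digamma_sub_digamma_one hz).sub (hasSum_digamma_sub_digamma_one hw)
  convert! this using 1
  · ext j; ring
  · ring

theorem log_norm_add_one_sub_log_norm_le {z : ℂ} (hz : 0 < z.re) :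
    Real.log ‖z + 1‖ - Real.log ‖z‖ ≤ (1 / z).re + 1 / (2 * z.re ^ 2) := by
  have hz0 : z ≠ 0 := by rintro rfl; simp at hz
  have hn : 0 < ‖z‖ := norm_pos_iff.2 hz0
  have hz1 : z + 1 ≠ 0 := by
    intro h
    have := congrArg Complex.re h
    simp at this; linarith
  have hn1 : 0 < ‖z + 1‖ := norm_pos_iff.2 hz1
  have e1 : ‖z‖ ^ 2 = z.re ^ 2 + z.im ^ 2 := by
    rw [← Complex.normSq_eq_norm_sq, Complex.normSq_apply]; ring
  have e2 : ‖z + 1‖ ^ 2 = ‖z‖ ^ 2 + 2 * z.re + 1 := by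
    rw [e1, ← Complex.normSq_eq_norm_sq, Complex.normSq_apply]; simp; ring
  have h1 : 2 * (Real.log ‖z + 1‖ - Real.log ‖z‖) = Real.log (‖z + 1‖ ^ 2 / ‖z‖ ^ 2) := by
    rw [Real.log_div (by positivity) (by positivity), Real.log_pow, Real.log_pow]
    push_cast; ring
  have h2 := Real.log_le_sub_one_of_pos (x := ‖z + 1‖ ^ 2 / ‖z‖ ^ 2) (by positivity)
  have h3 : ‖z + 1‖ ^ 2 / ‖z‖ ^ 2 - 1 = 2 * (1 / z).re + 1 / ‖z‖ ^ 2 := by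
    rw [e2, one_div z, Complex.inv_re, Complex.normSq_eq_norm_sq]
    field_simp
    ring
  have h4 : 1 / ‖z‖ ^ 2 ≤ 1 / z.re ^ 2 := by
    gcongr
    exact Complex.re_le_norm z
  have h5 : 1 / (2 * z.re ^ 2) = (1 / z.re ^ 2) / 2 := by field_simp
  rw [h5]
  linarith

theorem re_digamma_le {z : ℂ} (hz : 1 < z.re) :
    (Complex.digamma z).re ≤ Real.log ‖z‖ + 1 / (2 * z.re - 1) := by
  set x := z.re with hx
  have hx0 : 0 < x := by linarith
  have hpart : ∀ N : ℕ, Real.log ‖z + N‖ - Real.log ‖z‖ ≤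
      ∑ j ∈ Finset.range N, (1 / (z + j)).re + (1 / (2 * x - 1) - 1 / (2 * (x + N) - 1)) := by
    intro N
    induction N with
    | zero => simp
    | succ N ih =>
      have hN : (0 : ℝ) ≤ N := N.cast_nonneg
      have h1 := log_norm_add_one_sub_log_norm_le (z := z + N) (by simp; linarith)
      have h2 : 1 / (2 * (z + N).re ^ 2) ≤ 1 / (2 * (x + N) - 1) - 1 / (2 * (x + (N + 1)) - 1) := by
        have : (z + N).re = x + N := by simp [hx]
        rw [this]
        have a1 : 0 < 2 * (x + N) - 1 := by linarith
        have a2 : 0 < 2 * (x + (N + 1)) - 1 := by linarith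
        rw [div_sub_div _ _ a1.ne' a2.ne', div_le_div_iff₀ (by positivity) (by positivity)]
        nlinarith
      rw [Finset.sum_range_succ]
      push_cast at h1 ⊢
      rw [← add_assoc]
      linarith
  have hs := (hasSum_digamma_sub (z := z) (w := x) hx0 (by simpa using hx0))
    |>.tendsto_sum_nat
  have hs2 := (Complex.continuous_re.tendsto _).comp hs
  have hb : (Complex.digamma z - Complex.digamma x).re ≤
      Real.log ‖z‖ + 1 / (2 * x - 1) - deriv (Real.log ∘ Real.Gamma) x := by
    refine le_of_tendsto hs2 (Eventually.of_forall fun N => ?_)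
    have hN : (0 : ℝ) ≤ N := N.cast_nonneg
    have e : (∑ j ∈ Finset.range N, (1 / ((x : ℂ) + j) - 1 / (z + j))).re =
        ∑ j ∈ Finset.range N, 1 / (x + j) - ∑ j ∈ Finset.range N, (1 / (z + j)).re := by
      rw [Complex.re_sum, ← Finset.sum_sub_distrib]
      refine Finset.sum_congr rfl fun j _ => ?_
      rw [Complex.sub_re]
      congr 1
      have : 1 / ((x : ℂ) + j) = ((1 / (x + j) : ℝ) : ℂ) := by push_cast; rfl
      rw [this, Complex.ofReal_re]
    simp only [Function.comp]
    rw [e]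
    have h1 := hpart N
    have h2 := deriv_log_Gamma_add_nat hx0 N
    have h3 := deriv_log_Gamma_le_log (x := x + N) (by linarith)
    have h4 : Real.log (x + N) ≤ Real.log ‖z + N‖ := by
      apply Real.log_le_log (by linarith)
      refine le_trans (le_of_eq ?_) (Complex.re_le_norm _)
      simp [hx]
    have h5 : 0 ≤ 1 / (2 * (x + N) - 1) := by
      apply one_div_nonneg.2; linarith
    linarith
  rw [Complex.sub_re, digamma_ofReal hx0, Complex.ofReal_re] at hb
  linarith

theorem logDeriv_entireXi_eq {s : ℂ} (hs : 1 < s.re) :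
    logDeriv entireXi s = 1 / (s - 1) - Real.log Real.pi / 2 + Complex.digamma (s / 2 + 1) / 2 +
      deriv riemannZeta s / riemannZeta s := by
  have hs0 : s ≠ 0 := by rintro rfl; simp at hs; linarith
  have hs1 : s ≠ 1 := by rintro rfl; simp at hs
  have hs1' : s - 1 ≠ 0 := sub_ne_zero.2 hs1
  have hre : 0 < (s / 2).re := by simp; linarith
  have hpole : ∀ m : ℕ, s / 2 ≠ -m := fun m h => by
    have h0 : (0 : ℝ) ≤ m := m.cast_nonneg
    rw [h] at hre
    simp at hre
    linarith
  have hpi : (Real.pi : ℂ) ≠ 0 := by exact_mod_cast Real.pi_ne_zero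
  have hev : entireXi =ᶠ[𝓝 s] fun z => z * ((z - 1) *
      (((Real.pi : ℂ) ^ (-z / 2) * Complex.Gamma (z / 2)) * riemannZeta z)) := by
    have hopen : IsOpen {z : ℂ | 1 < z.re} := isOpen_lt continuous_const Complex.continuous_re
    filter_upwards [hopen.mem_nhds hs] with z hz
    have hz : 1 < z.re := hz
    have h0 : z ≠ 0 := by rintro rfl; simp at hz; linarith
    have h1 : z ≠ 1 := by rintro rfl; simp at hz
    have hG : Complex.Gammaℝ z ≠ 0 := Complex.Gammaℝ_ne_zero_of_re_pos (by linarith)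
    rw [entireXi_eq h0 h1, riemannZeta_def_of_ne_zero h0, ← Complex.Gammaℝ_def,
      mul_div_cancel₀ _ hG, mul_assoc]
  have hd1 : DifferentiableAt ℂ (fun z : ℂ => (Real.pi : ℂ) ^ (-z / 2)) s := by
    have : HasDerivAt (fun z : ℂ => -z / 2) (-1 / 2) s := ((hasDerivAt_id s).neg).div_const 2
    exact (this.const_cpow (Or.inl hpi)).differentiableAt
  have hld1 : logDeriv (fun z : ℂ => (Real.pi : ℂ) ^ (-z / 2)) s = -(Real.log Real.pi / 2) := by
    have : HasDerivAt (fun z : ℂ => -z / 2) (-1 / 2) s := ((hasDerivAt_id s).neg).div_const 2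
    have h := (this.const_cpow (Or.inl hpi) (c := (Real.pi : ℂ))).deriv
    rw [logDeriv_apply, h, ← Complex.ofReal_log Real.pi_pos.le]
    have : (Real.pi : ℂ) ^ (-s / 2) ≠ 0 := by simp [Complex.cpow_eq_zero_iff, hpi]
    field_simp
  have hdG : DifferentiableAt ℂ Complex.Gamma (s / 2) := Complex.differentiableAt_Gamma _ hpole
  have hdh : HasDerivAt (fun z : ℂ => z / 2) (1 / 2) s := (hasDerivAt_id s).div_const 2
  have hd2 : DifferentiableAt ℂ (fun z : ℂ => Complex.Gamma (z / 2)) s :=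
    DifferentiableAt.fun_comp' s hdG hdh.differentiableAt
  have hld2 : logDeriv (fun z : ℂ => Complex.Gamma (z / 2)) s = Complex.digamma (s / 2) / 2 := by
    have h : deriv (fun z : ℂ => Complex.Gamma (z / 2)) s = _ :=
      (HasDerivAt.comp (h₂ := Complex.Gamma) s hdG.hasDerivAt hdh).deriv
    rw [logDeriv_apply, h, Complex.digamma_def, logDeriv_apply]
    ring
  have hz := riemannZeta_ne_zero_of_one_lt_re hs
  have hdz := differentiableAt_riemannZeta hs1
  have hG0 : Complex.Gamma (s / 2) ≠ 0 := Complex.Gamma_ne_zero hpole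
  have hp0 : (Real.pi : ℂ) ^ (-s / 2) ≠ 0 := by simp [Complex.cpow_eq_zero_iff, hpi]
  have hds : DifferentiableAt ℂ (fun z : ℂ => z - 1) s := differentiableAt_id.sub_const 1
  have hd3 := hd1.mul hd2
  have hd4 := hd3.mul hdz
  have hd5 := hds.mul hd4
  have hlds : logDeriv (fun z : ℂ => z - 1) s = 1 / (s - 1) := by
    rw [logDeriv_apply]; simp
  have hdig := Complex.digamma_apply_add_one (s / 2) hpole
  have e1 : logDeriv entireXi s = logDeriv (fun z => z * ((z - 1) *
      (((Real.pi : ℂ) ^ (-z / 2) * Complex.Gamma (z / 2)) * riemannZeta z))) s := by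
    rw [logDeriv_apply, logDeriv_apply, hev.deriv_eq, hev.eq_of_nhds]
  have m1 : logDeriv entireXi s = _ :=
    e1.trans (logDeriv_mul (f := fun z => z) s hs0 (by simp [*]) differentiableAt_id hd5)
  have m2 := logDeriv_mul (f := fun z => z - 1) s hs1' (by simp [*]) hds hd4
  have m3 := logDeriv_mul s (by simp [*]) hz hd3 hdz
  have m4 := logDeriv_mul s hp0 hG0 hd1 hd2
  have hm (f g : ℂ → ℂ) : (fun z => f z * g z) = f * g := rfl
  rw [hm] at m2 m3 m4
  have m5 : logDeriv (fun z => (z - 1) *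
      ((Real.pi : ℂ) ^ (-z / 2) * Complex.Gamma (z / 2) * riemannZeta z)) s = _ := m2
  rw [m1, m5, m3, m4, hld1, hld2, hlds, hdig, logDeriv_apply riemannZeta]
  have : logDeriv (fun z : ℂ => z) s = 1 / s := by rw [logDeriv_apply]; simp
  rw [this]
  field_simp
  ring

theorem log_le_sqrt {x : ℝ} (hx : 0 < x) : Real.log x ≤ √x := by
  have h0 : 0 < √x := Real.sqrt_pos.2 hx
  have h1 : Real.log x = 2 * Real.log (√x) := by
    rw [Real.log_sqrt hx.le]; ring
  have h2 := Real.log_le_sub_one_of_pos (half_pos h0)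
  rw [Real.log_div h0.ne' two_ne_zero] at h2
  have := Real.log_two_lt_d9
  linarith

theorem norm_term_vonMangoldt_le {s : ℂ} (hs : 5 / 2 ≤ s.re) (n : ℕ) :
    ‖LSeries.term (fun n => (ArithmeticFunction.vonMangoldt n : ℂ)) s n‖ ≤
      if n = 1 then 0 else 1 / (n : ℝ) ^ 2 := by
  rw [LSeries.norm_term_eq]
  split_ifs with h0 h1 h1
  · simp
  · positivity
  · simp [h1]
  · have hn : (1 : ℝ) ≤ n := by exact_mod_cast Nat.one_le_iff_ne_zero.2 h0
    have hn0 : (0 : ℝ) < n := by linarith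
    have h2 : ‖((ArithmeticFunction.vonMangoldt n : ℝ) : ℂ)‖ ≤ √n := by
      rw [Complex.norm_real, Real.norm_of_nonneg ArithmeticFunction.vonMangoldt_nonneg]
      exact ArithmeticFunction.vonMangoldt_le_log.trans (log_le_sqrt hn0)
    have h3 : (n : ℝ) ^ (5 / 2 : ℝ) ≤ (n : ℝ) ^ s.re := Real.rpow_le_rpow_of_exponent_le hn hs
    have h4 : (n : ℝ) ^ (5 / 2 : ℝ) = √n * (n : ℝ) ^ 2 := by
      rw [Real.sqrt_eq_rpow, ← Real.rpow_natCast, ← Real.rpow_add hn0]; norm_num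
    have h5 : 0 < √(n : ℝ) := Real.sqrt_pos.2 hn0
    rw [div_le_div_iff₀ (by positivity) (by positivity), one_mul]
    calc _ ≤ √(n : ℝ) * (n : ℝ) ^ 2 := by gcongr
      _ = _ := h4.symm
      _ ≤ _ := h3

theorem norm_logDeriv_zeta_le {s : ℂ} (hs : 5 / 2 ≤ s.re) :
    ‖deriv riemannZeta s / riemannZeta s‖ ≤ 0.645 := by
  have h1 := ArithmeticFunction.LSeries_vonMangoldt_eq_deriv_riemannZeta_div
    (s := s) (by linarith)
  rw [← norm_neg, ← neg_div, ← h1, LSeries]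
  have hz := hasSum_zeta_two
  have hz' : HasSum (fun n : ℕ => if n = 1 then 0 else 1 / (n : ℝ) ^ 2)
      (Real.pi ^ 2 / 6 - 1) := by
    have := hz.update 1 0
    have e : Function.update (fun n : ℕ => 1 / (n : ℝ) ^ 2) 1 0 =
        fun n : ℕ => if n = 1 then 0 else 1 / (n : ℝ) ^ 2 := by
      ext n; simp [Function.update_apply]
    have e' : 0 - 1 / ((1 : ℕ) : ℝ) ^ 2 + Real.pi ^ 2 / 6 = Real.pi ^ 2 / 6 - 1 := by
      norm_num; ring
    rwa [e, e'] at this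
  have h2 := tsum_of_norm_bounded hz' (norm_term_vonMangoldt_le hs)
  refine h2.trans ?_
  have := Real.pi_lt_d4
  have := Real.pi_pos
  nlinarith

theorem one_le_log_pi : 1 ≤ Real.log Real.pi := by
  rw [Real.le_log_iff_exp_le Real.pi_pos]
  have := Real.exp_one_lt_d9
  have := Real.pi_gt_three
  linarith

theorem re_logDeriv_entireXi_le_of_real {A : ℝ} (hA : 20 ≤ A) :
    (logDeriv entireXi (1 / 2 + A)).re ≤ 1 / 2 * Real.log A := by
  have hs : 1 < (1 / 2 + A : ℂ).re := by simp; linarith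
  rw [logDeriv_entireXi_eq hs]
  have h1 : (1 / ((1 / 2 + A : ℂ) - 1)).re ≤ 1 / 19 := by
    have : (1 / ((1 / 2 + A : ℂ) - 1)) = ((1 / (A - 1 / 2) : ℝ) : ℂ) := by
      push_cast; congr 1; ring
    rw [this, Complex.ofReal_re]
    exact one_div_le_one_div_of_le (by norm_num) (by linarith)
  have h2 : (Complex.digamma ((1 / 2 + A : ℂ) / 2 + 1)).re ≤ Real.log A := by
    have e : ((1 / 2 + A : ℂ) / 2 + 1) = ((A / 2 + 5 / 4 : ℝ) : ℂ) := by push_cast; ring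
    rw [e, digamma_ofReal (by linarith), Complex.ofReal_re]
    refine (deriv_log_Gamma_le_log (by linarith)).trans ?_
    exact Real.log_le_log (by linarith) (by linarith)
  have h3 : (deriv riemannZeta (1 / 2 + A) / riemannZeta (1 / 2 + A)).re ≤ 0 := by
    have h := ArithmeticFunction.LSeries_vonMangoldt_eq_deriv_riemannZeta_div hs
    have : deriv riemannZeta (1 / 2 + A) / riemannZeta (1 / 2 + A) =
        -LSeries (fun n => (ArithmeticFunction.vonMangoldt n : ℂ)) (1 / 2 + A) := by
      rw [h]; ring
    rw [this, Complex.neg_re, neg_nonpos, LSeries,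
      Complex.re_tsum (ArithmeticFunction.LSeriesSummable_vonMangoldt hs)]
    refine tsum_nonneg fun n => ?_
    rcases eq_or_ne n 0 with rfl | hn
    · simp
    have e : (1 / 2 + A : ℂ) = ((1 / 2 + A : ℝ) : ℂ) := by push_cast; ring
    have e2 : ((n : ℂ) ^ ((1 / 2 + A : ℝ) : ℂ)) = (((n : ℝ) ^ (1 / 2 + A : ℝ) : ℝ) : ℂ) := by
      rw [Complex.ofReal_cpow n.cast_nonneg]; norm_cast
    rw [LSeries.term_of_ne_zero hn, e, e2, ← Complex.ofReal_div, Complex.ofReal_re]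
    have := ArithmeticFunction.vonMangoldt_nonneg (n := n)
    positivity
  have h4 := one_le_log_pi
  simp only [Complex.add_re, Complex.sub_re] at *
  have e1 : ((Real.log Real.pi : ℂ) / 2).re = Real.log Real.pi / 2 := by
    norm_cast
  have e2 : ((Complex.digamma ((1 / 2 + A : ℂ) / 2 + 1)) / 2).re =
    (Complex.digamma ((1 / 2 + A : ℂ) / 2 + 1)).re / 2 := by
    rw [Complex.div_ofNat_re]
  rw [e1, e2]
  linarith

theorem two_mul_re_logDeriv_entireXi_le {A : ℝ} (hA : 5 ≤ A) (t : ℝ) :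
    2 * (logDeriv entireXi (1 / 2 + (2 + t * Complex.I))).re ≤
      1 / 2 * Real.log (A ^ 2 + t ^ 2) + 1.22 := by
  set s : ℂ := 1 / 2 + (2 + t * Complex.I) with hs
  have hre : s.re = 5 / 2 := by simp [hs]; norm_num
  have him : s.im = t := by simp [hs]
  rw [logDeriv_entireXi_eq (by linarith)]
  have h1 : (1 / (s - 1)).re ≤ 2 / 3 := by
    rw [one_div]
    refine (Complex.re_le_norm _).trans ?_
    rw [norm_inv]
    have : 3 / 2 ≤ ‖s - 1‖ := by
      refine le_trans ?_ (Complex.re_le_norm _)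
      simp [hre]; norm_num
    calc ‖s - 1‖⁻¹ ≤ (3 / 2 : ℝ)⁻¹ := by gcongr
      _ = _ := by norm_num
  have h2 : (Complex.digamma (s / 2 + 1)).re ≤ 1 / 2 * Real.log (A ^ 2 + t ^ 2) - Real.log 2 + 2 / 7 := by
    have r : (s / 2 + 1).re = 9 / 4 := by simp [hre]; norm_num
    have i : (s / 2 + 1).im = t / 2 := by simp [him]
    have h := re_digamma_le (z := s / 2 + 1) (by rw [r]; norm_num)
    rw [r] at h
    have hn : Real.log ‖s / 2 + 1‖ ≤ 1 / 2 * Real.log (A ^ 2 + t ^ 2) - Real.log 2 := by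
      have e : Real.log ‖s / 2 + 1‖ = 1 / 2 * Real.log (‖s / 2 + 1‖ ^ 2) := by
        rw [Real.log_pow]; push_cast; ring
      have e2 : Real.log 2 = 1 / 2 * Real.log (2 ^ 2) := by
        rw [Real.log_pow]; push_cast; ring
      have hp : 0 < A ^ 2 + t ^ 2 := by positivity
      rw [e, e2, ← mul_sub, ← Real.log_div hp.ne' (by norm_num), Complex.sq_norm,
        Complex.normSq_apply, r, i]
      have : 9 / 4 * (9 / 4) + t / 2 * (t / 2) ≤ (A ^ 2 + t ^ 2) / 2 ^ 2 := by nlinarith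
      have : 0 < 9 / 4 * (9 / 4) + t / 2 * (t / 2) := by nlinarith
      gcongr
    norm_num at h ⊢
    linarith
  have h3 := (Complex.re_le_norm _).trans (norm_logDeriv_zeta_le (s := s) (by linarith))
  have h4 := one_le_log_pi
  simp only [Complex.add_re, Complex.sub_re] at *
  have e1 : ((Real.log Real.pi : ℂ) / 2).re = Real.log Real.pi / 2 := by
    norm_cast
  rw [e1, Complex.div_ofNat_re]
  have := Real.log_two_gt_d9
  norm_num at *
  linarith

/-- The kernel `4 / (4 + u²)` is twice the real part of `1 / (w - iγ)` at distance `2`. -/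
theorem re_div_sq_add_sq (t γ : ℝ) :
    2 * ((2 + t * Complex.I) / ((2 + t * Complex.I) ^ 2 + (γ : ℂ) ^ 2)).re =
      2 / (4 + (t - γ) ^ 2) + 2 / (4 + (t + γ) ^ 2) := by
  have e1 : (2 + (t - γ) * Complex.I : ℂ) ≠ 0 := by
    intro h; have := congrArg Complex.re h; simp at this
  have e2 : (2 + (t + γ) * Complex.I : ℂ) ≠ 0 := by
    intro h; have := congrArg Complex.re h; simp at this
  have e : (2 + t * Complex.I) / ((2 + t * Complex.I) ^ 2 + (γ : ℂ) ^ 2) =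
      (1 / 2 : ℝ) * ((2 + ((t - γ : ℝ) : ℂ) * Complex.I)⁻¹ + (2 + ((t + γ : ℝ) : ℂ) * Complex.I)⁻¹) := by
    have e3 : (2 + t * Complex.I) ^ 2 + (γ : ℂ) ^ 2 =
        (2 + (t - γ) * Complex.I) * (2 + (t + γ) * Complex.I) := by
      linear_combination (γ : ℂ) ^ 2 * Complex.I_sq
    rw [e3]; push_cast
    rw [inv_add_inv e1 e2, div_eq_mul_inv, div_eq_mul_inv]; ring
  have key : ∀ u : ℝ, ((2 + (u : ℂ) * Complex.I)⁻¹).re = 2 / (4 + u ^ 2) := by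
    intro u
    rw [Complex.inv_re, Complex.normSq_apply]; simp; ring
  rw [e, Complex.re_ofReal_mul, Complex.add_re, key, key]
  ring

section ZeroSums

variable {ι : Type} {γ : ι → ℝ}

theorem hasSum_div_sq_add_sq
    (H : ∀ w : ℂ, 0 < w.re →
      HasSum (fun i => w / (w ^ 2 + (γ i : ℂ) ^ 2)) (logDeriv entireXi (1 / 2 + w)))
    {A : ℝ} (hA : 0 < A) :
    HasSum (fun i => A / (A ^ 2 + γ i ^ 2)) (logDeriv entireXi (1 / 2 + A)).re := by
  have := Complex.hasSum_re (H A (by simpa using hA))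
  convert this using 2 with i
  exact_mod_cast (Complex.ofReal_re _).symm

theorem tsum_div_sq_add_sq_le
    (H : ∀ w : ℂ, 0 < w.re →
      HasSum (fun i => w / (w ^ 2 + (γ i : ℂ) ^ 2)) (logDeriv entireXi (1 / 2 + w)))
    {A : ℝ} (hA : 20 ≤ A) : ∑' i, A / (A ^ 2 + γ i ^ 2) ≤ 1 / 2 * Real.log A := by
  rw [(hasSum_div_sq_add_sq H (by linarith)).tsum_eq]
  exact re_logDeriv_entireXi_le_of_real hA

theorem hasSum_two_div_four_add
    (H : ∀ w : ℂ, 0 < w.re →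
      HasSum (fun i => w / (w ^ 2 + (γ i : ℂ) ^ 2)) (logDeriv entireXi (1 / 2 + w))) (t : ℝ) :
    HasSum (fun i => 2 / (4 + (t - γ i) ^ 2) + 2 / (4 + (t + γ i) ^ 2))
      (2 * (logDeriv entireXi (1 / 2 + (2 + t * Complex.I))).re) := by
  have := (Complex.hasSum_re (H (2 + t * Complex.I) (by simp))).mul_left 2
  simpa only [re_div_sq_add_sq] using this

theorem tsum_two_div_four_add_le
    (H : ∀ w : ℂ, 0 < w.re →
      HasSum (fun i => w / (w ^ 2 + (γ i : ℂ) ^ 2)) (logDeriv entireXi (1 / 2 + w)))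
    {A : ℝ} (hA : 5 ≤ A) (t : ℝ) :
    ∑' i, (2 / (4 + (t - γ i) ^ 2) + 2 / (4 + (t + γ i) ^ 2)) ≤
      1 / 2 * Real.log (A ^ 2 + t ^ 2) + 1.22 := by
  rw [(hasSum_two_div_four_add H t).tsum_eq]
  exact two_mul_re_logDeriv_entireXi_le hA t

end ZeroSums

theorem hasMellin_of_hasSum {ι : Type*} [Countable ι] {g : ι → ℝ → ℂ} {f : ℝ → ℂ} {m : ι → ℂ}
    {s : ℂ} (hg : ∀ i, HasMellin (g i) s (m i))
    (hsum : Summable fun i => ∫ t in Ioi (0 : ℝ), ‖(t : ℂ) ^ (s - 1) • g i t‖)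
    (hf : ∀ t > 0, HasSum (fun i => g i t) (f t)) : HasMellin f s (∑' i, m i) := by
  have hint : ∀ i, IntegrableOn (fun t : ℝ => (t : ℂ) ^ (s - 1) • g i t) (Ioi 0) := fun i => (hg i).1
  have hlim : ∀ t > (0 : ℝ), HasSum (fun i => (t : ℂ) ^ (s - 1) • g i t) ((t : ℂ) ^ (s - 1) • f t) :=
    fun t ht => (hf t ht).const_smul _
  have hmeas : AEStronglyMeasurable (fun t : ℝ => (t : ℂ) ^ (s - 1) • f t)
      (volume.restrict (Ioi 0)) := by
    refine aestronglyMeasurable_of_tendsto_ae (atTop : Filter (Finset ι))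
      (f := fun S (t : ℝ) => ∑ i ∈ S, (t : ℂ) ^ (s - 1) • g i t) (fun S => ?_) ?_
    · exact (integrable_finsetSum S fun i _ => hint i).1
    · filter_upwards [ae_restrict_mem measurableSet_Ioi] with t ht
      exact hlim t ht
  have hfin : ∑' i, ∫⁻ t in Ioi (0 : ℝ), ‖(t : ℂ) ^ (s - 1) • g i t‖ₑ ≠ ⊤ := by
    have (i : ι) : ∫⁻ t in Ioi (0 : ℝ), ‖(t : ℂ) ^ (s - 1) • g i t‖ₑ =
        ENNReal.ofReal (∫ t in Ioi (0 : ℝ), ‖(t : ℂ) ^ (s - 1) • g i t‖) :=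
      (ofReal_integral_norm_eq_lintegral_enorm (hint i)).symm
    rw [funext this, ← ENNReal.ofReal_tsum_of_nonneg (fun i => integral_nonneg fun _ => norm_nonneg _) hsum]
    exact ENNReal.ofReal_ne_top
  refine ⟨⟨hmeas, ?_⟩, ?_⟩
  · rw [HasFiniteIntegral]
    refine lt_of_le_of_lt ?_ hfin.lt_top
    rw [← lintegral_tsum fun i => (hint i).1.enorm]
    refine lintegral_mono_ae ?_
    filter_upwards [ae_restrict_mem measurableSet_Ioi] with t ht
    rw [← (hlim t ht).tsum_eq]
    exact enorm_tsum_le_tsum_enorm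
  · have h := hasSum_integral_of_summable_integral_norm hint hsum
    rw [tsum_congr fun i => (hg i).2.symm]
    refine Eq.trans ?_ h.tsum_eq.symm
    refine setIntegral_congr_fun measurableSet_Ioi fun t ht => ?_
    exact (hlim t ht).tsum_eq.symm

theorem HasMellin.add {f g : ℝ → ℂ} {s a b : ℂ} (hf : HasMellin f s a) (hg : HasMellin g s b) :
    HasMellin (fun t => f t + g t) s (a + b) := by
  have := hasMellin_add hf.1 hg.1
  rwa [hf.2, hg.2] at this

theorem HasMellin.sub {f g : ℝ → ℂ} {s a b : ℂ} (hf : HasMellin f s a) (hg : HasMellin g s b) :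
    HasMellin (fun t => f t - g t) s (a - b) := by
  have := hasMellin_sub hf.1 hg.1
  rwa [hf.2, hg.2] at this

theorem HasMellin.const_mul {f : ℝ → ℂ} {s a : ℂ} (hf : HasMellin f s a) (c : ℂ) :
    HasMellin (fun t => c * f t) s (c * a) := by
  have := hasMellin_const_smul hf.1 c
  rwa [hf.2] at this

theorem HasMellin.comp_mul_left {f : ℝ → ℂ} {s m : ℂ} (hf : HasMellin f s m) {a : ℝ} (ha : 0 < a) :
    HasMellin (fun t => f (a * t)) s ((a : ℂ) ^ (-s) * m) :=
  ⟨(MellinConvergent.comp_mul_left ha).2 hf.1, by rw [mellin_comp_mul_left f s ha, hf.2, smul_eq_mul]⟩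

theorem integral_norm_cpow_smul_comp_mul_left (f : ℝ → ℂ) (s : ℂ) {a : ℝ} (ha : 0 < a) :
    ∫ t in Ioi (0 : ℝ), ‖(t : ℂ) ^ (s - 1) • f (a * t)‖ =
      a ^ (-s.re) * ∫ t in Ioi (0 : ℝ), ‖(t : ℂ) ^ (s - 1) • f t‖ := by
  have h1 : ∀ t ∈ Ioi (0 : ℝ), ‖(t : ℂ) ^ (s - 1) • f (a * t)‖ =
      a ^ (1 - s.re) * ‖((a * t : ℝ) : ℂ) ^ (s - 1) • f (a * t)‖ := by
    intro t ht
    have ht : 0 < t := ht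
    rw [norm_smul, norm_smul, Complex.norm_cpow_eq_rpow_re_of_pos ht,
      Complex.norm_cpow_eq_rpow_re_of_pos (mul_pos ha ht), Real.mul_rpow ha.le ht.le, ← mul_assoc,
      ← mul_assoc, ← Real.rpow_add ha]
    simp
  rw [setIntegral_congr_fun measurableSet_Ioi h1, integral_const_mul,
    integral_comp_mul_left_Ioi (fun u : ℝ => ‖(u : ℂ) ^ (s - 1) • f u‖) 0 ha, mul_zero, smul_eq_mul,
    ← mul_assoc]
  congr 1
  rw [← Real.rpow_neg_one, ← Real.rpow_add ha]
  ring_nf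

/-- A function whose Mellin transform vanishes on a vertical line vanishes where it is
continuous. -/
theorem eq_zero_of_hasMellin_zero {h : ℝ → ℂ} {σ : ℝ}
    (hh : ∀ s : ℂ, s.re = σ → HasMellin h s 0) {x : ℝ} (hx : 0 < x) (hc : ContinuousAt h x) :
    h x = 0 := by
  have h0 : ∀ y : ℝ, mellin h (σ + y * Complex.I) = 0 := fun y => (hh _ (by simp)).2
  rw [← mellinInv_mellin_eq σ h hx (hh σ (by simp)).1 ?_ hc]
  · simp [mellinInv, h0]
  · simp [Complex.VerticalIntegrable, h0]

theorem integral_norm_cpow_smul_le {g : ℝ → ℂ} {C : ℝ} {s : ℂ} (hs : s.re = 2) (hC : 0 ≤ C)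
    (hg1 : ∀ t > 1, g t = 0) (hg : ∀ t > 0, t ≤ 1 → ‖g t‖ ≤ C * t ^ (-(1 / 2) : ℝ)) :
    ∫ t in Ioi (0 : ℝ), ‖(t : ℂ) ^ (s - 1) • g t‖ ≤ C := by
  have h1 : ∀ t ∈ Ioi (0 : ℝ), ‖(t : ℂ) ^ (s - 1) • g t‖ ≤ indicator (Ioc 0 1) (fun _ => C) t := by
    intro t ht
    have ht : 0 < t := ht
    rcases le_or_gt t 1 with h | h
    · rw [indicator_of_mem (show t ∈ Ioc (0 : ℝ) 1 from ⟨ht, h⟩), norm_smul,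
        Complex.norm_cpow_eq_rpow_re_of_pos ht]
      have e : (s - 1).re = 1 := by simp [hs]; norm_num
      rw [e]
      calc t ^ (1 : ℝ) * ‖g t‖ ≤ t ^ (1 : ℝ) * (C * t ^ (-(1 / 2) : ℝ)) := by
            gcongr; exact hg t ht h
        _ = C * t ^ (1 / 2 : ℝ) := by
            rw [mul_left_comm, ← Real.rpow_add ht]; norm_num
        _ ≤ C * 1 := by gcongr; exact Real.rpow_le_one ht.le h (by norm_num)
        _ = C := mul_one C
    · rw [hg1 t h]
      simp [indicator_of_notMem (show t ∉ Ioc (0 : ℝ) 1 from fun h' => by linarith [h'.2])]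
  have hi : IntegrableOn (indicator (Ioc (0 : ℝ) 1) (fun _ => C)) (Ioi 0) :=
    IntegrableOn.integrable_indicator (by simp [IntegrableOn, Ioc_inter_Ioi])
      measurableSet_Ioc
  calc _ ≤ ∫ t in Ioi (0 : ℝ), indicator (Ioc 0 1) (fun _ => C) t :=
        integral_mono_of_nonneg (Eventually.of_forall fun _ => norm_nonneg _) hi
          ((ae_restrict_iff' measurableSet_Ioi).2 (Eventually.of_forall h1))
    _ = C := by
        rw [setIntegral_indicator measurableSet_Ioc, inter_eq_right.2 Ioc_subset_Ioi_self]
        simp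

/-- The power function `t ↦ t ^ a` cut off to `(0, 1]`. -/
noncomputable def cutPow (a : ℂ) (t : ℝ) : ℂ := indicator (Ioc 0 1) (fun u : ℝ => (u : ℂ) ^ a) t

theorem cutPow_of_mem {t : ℝ} (ht : 0 < t) (ht1 : t ≤ 1) (a : ℂ) : cutPow a t = (t : ℂ) ^ a :=
  indicator_of_mem (show t ∈ Ioc (0 : ℝ) 1 from ⟨ht, ht1⟩) _

theorem cutPow_of_one_lt {t : ℝ} (ht : 1 < t) (a : ℂ) : cutPow a t = 0 :=
  indicator_of_notMem (fun h => by linarith [h.2]) _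

theorem hasMellin_cutPow (a : ℂ) {s : ℂ} (hs : 0 < s.re + a.re) :
    HasMellin (cutPow a) s (1 / (s + a)) := hasMellin_cpow_Ioc a hs

/-- The hat function `(1 - t)₊` on `(0, ∞)`. -/
noncomputable def cutHat (t : ℝ) : ℂ := cutPow 0 t - cutPow 1 t

theorem hasMellin_cutHat {s : ℂ} (hs : 0 < s.re) : HasMellin cutHat s (1 / (s * (s + 1))) := by
  have h := (hasMellin_cutPow 0 (s := s) (by simpa)).sub (hasMellin_cutPow 1 (s := s) (by simp; linarith))
  have h0 : s ≠ 0 := by rintro rfl; simp at hs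
  have h1 : s + 1 ≠ 0 := fun h => by have := congrArg Complex.re h; simp at this; linarith
  have e : 1 / (s + 0) - 1 / (s + 1) = 1 / (s * (s + 1)) := by
    rw [add_zero]; field_simp; ring
  rwa [e] at h

theorem cutHat_eq {t : ℝ} (ht : 0 < t) : cutHat t = ((max (1 - t) 0 : ℝ) : ℂ) := by
  rcases le_or_gt t 1 with h | h
  · simp [cutHat, cutPow_of_mem ht h, max_eq_left (sub_nonneg.2 h)]
  · rw [cutHat, cutPow_of_one_lt h, cutPow_of_one_lt h, max_eq_right (by linarith)]
    simp

/-- The contribution of the pair of zeros `1 / 2 ± iγ`. -/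
noncomputable def zeroPiece (ρ : ℂ) (t : ℝ) : ℂ :=
  1 / (ρ * (ρ + 1)) * cutPow (-ρ) t - 1 / ρ * cutPow 0 t + 1 / (ρ + 1) * cutPow 1 t

theorem hasMellin_zeroPiece {ρ s : ℂ} (hρ : ρ.re = 1 / 2) (hs : s.re = 2) :
    HasMellin (zeroPiece ρ) s (1 / (s - ρ) / (s * (s + 1))) := by
  have h := (((hasMellin_cutPow (-ρ) (s := s) (by simp [hρ, hs]; norm_num)).const_mul (1 / (ρ * (ρ + 1)))).sub
    ((hasMellin_cutPow 0 (s := s) (by simp [hs])).const_mul (1 / ρ))).add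
    ((hasMellin_cutPow 1 (s := s) (by simp [hs]; norm_num)).const_mul (1 / (ρ + 1)))
  have r0 : ρ ≠ 0 := fun h => by rw [h] at hρ; simp at hρ
  have r1 : ρ + 1 ≠ 0 := fun h => by
    have := congrArg Complex.re h; simp [hρ] at this; norm_num at this
  have s0 : s ≠ 0 := fun h => by rw [h] at hs; simp at hs
  have s1 : s + 1 ≠ 0 := fun h => by
    have := congrArg Complex.re h; simp [hs] at this; norm_num at this
  have s2 : s - ρ ≠ 0 := fun h => by
    have := congrArg Complex.re h; simp [hs, hρ] at this; norm_num at this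
  refine (congrArg (HasMellin _ s) ?_).mp h
  symm
  rw [← sub_eq_add_neg, add_zero]
  field_simp
  ring

theorem norm_zeroPiece_add_zeroPiece_le (γ : ℝ) {t : ℝ} (ht : 0 < t) (ht1 : t ≤ 1) :
    ‖1 / 2 * (zeroPiece (1 / 2 + γ * Complex.I) t + zeroPiece (1 / 2 - γ * Complex.I) t)‖ ≤
      6 * (1 / 2 / ((1 / 2) ^ 2 + γ ^ 2)) * t ^ (-(1 / 2) : ℝ) := by
  set ρ : ℂ := 1 / 2 + γ * Complex.I with hρ
  set ρ' : ℂ := 1 / 2 - γ * Complex.I with hρ'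
  have hre : ρ.re = 1 / 2 := by simp [hρ]
  have hre' : ρ'.re = 1 / 2 := by simp [hρ']
  have him : ρ.im = γ := by simp [hρ]
  have him' : ρ'.im = -γ := by simp [hρ']
  set q : ℝ := (1 / 2) ^ 2 + γ ^ 2 with hq
  have hq0 : 0 < q := by positivity
  have n1 : ‖ρ‖ ^ 2 = q := by rw [Complex.sq_norm, Complex.normSq_apply, hre, him, hq]; ring
  have n1' : ‖ρ'‖ ^ 2 = q := by rw [Complex.sq_norm, Complex.normSq_apply, hre', him', hq]; ring
  have n2 : ‖ρ‖ ≤ ‖ρ + 1‖ := by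
    rw [← sq_le_sq₀ (norm_nonneg _) (norm_nonneg _), Complex.sq_norm, Complex.sq_norm,
      Complex.normSq_apply, Complex.normSq_apply]
    simp [hre]; norm_num
  have n2' : ‖ρ'‖ ≤ ‖ρ' + 1‖ := by
    rw [← sq_le_sq₀ (norm_nonneg _) (norm_nonneg _), Complex.sq_norm, Complex.sq_norm,
      Complex.normSq_apply, Complex.normSq_apply]
    simp [hre']; norm_num
  have a1 : ‖1 / (ρ * (ρ + 1))‖ ≤ 1 / q := by
    rw [norm_div, norm_one, norm_mul, ← n1, sq]
    have : 0 < ‖ρ‖ := by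
      rw [norm_pos_iff]; intro h; rw [h] at hre; simp at hre
    gcongr
  have a1' : ‖1 / (ρ' * (ρ' + 1))‖ ≤ 1 / q := by
    rw [norm_div, norm_one, norm_mul, ← n1', sq]
    have : 0 < ‖ρ'‖ := by
      rw [norm_pos_iff]; intro h; rw [h] at hre'; simp at hre'
    gcongr
  have r0 : ρ ≠ 0 := fun h => by rw [h] at hre; simp at hre
  have r0' : ρ' ≠ 0 := fun h => by rw [h] at hre'; simp at hre'
  have r1 : ρ + 1 ≠ 0 := fun h => by
    have := congrArg Complex.re h; simp [hre] at this; norm_num at this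
  have r1' : ρ' + 1 ≠ 0 := fun h => by
    have := congrArg Complex.re h; simp [hre'] at this; norm_num at this
  have m0 : ρ * ρ' = q := by
    rw [hρ, hρ', hq]; push_cast; linear_combination (-(γ : ℂ) ^ 2) * Complex.I_sq
  have m1 : (ρ + 1) * (ρ' + 1) = ((q + 2 : ℝ) : ℂ) := by
    have : ρ + ρ' = 1 := by rw [hρ, hρ']; ring
    push_cast; linear_combination m0 + this
  have a2 : ‖1 / ρ + 1 / ρ'‖ = 1 / q := by
    have : 1 / ρ + 1 / ρ' = ((1 / q : ℝ) : ℂ) := by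
      rw [div_add_div _ _ r0 r0', m0]; push_cast; congr 1; rw [hρ, hρ']; ring
    rw [this, Complex.norm_real, Real.norm_of_nonneg (by positivity)]
  have a3 : ‖1 / (ρ + 1) + 1 / (ρ' + 1)‖ ≤ 3 / q := by
    have : 1 / (ρ + 1) + 1 / (ρ' + 1) = ((3 / (q + 2) : ℝ) : ℂ) := by
      rw [div_add_div _ _ r1 r1', m1]; push_cast; congr 1; rw [hρ, hρ']; ring
    rw [this, Complex.norm_real, Real.norm_of_nonneg (by positivity)]
    gcongr; linarith
  have p1 : ‖(t : ℂ) ^ (-ρ)‖ = t ^ (-(1 / 2) : ℝ) := by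
    rw [Complex.norm_cpow_eq_rpow_re_of_pos ht]; simp [hre]
  have p1' : ‖(t : ℂ) ^ (-ρ')‖ = t ^ (-(1 / 2) : ℝ) := by
    rw [Complex.norm_cpow_eq_rpow_re_of_pos ht]; simp [hre']
  have p2 : 1 ≤ t ^ (-(1 / 2) : ℝ) := Real.one_le_rpow_of_pos_of_le_one_of_nonpos ht ht1 (by norm_num)
  have e : 1 / 2 * (zeroPiece ρ t + zeroPiece ρ' t) = 1 / 2 * (1 / (ρ * (ρ + 1)) * (t : ℂ) ^ (-ρ) +
      1 / (ρ' * (ρ' + 1)) * (t : ℂ) ^ (-ρ') - (1 / ρ + 1 / ρ') + (1 / (ρ + 1) + 1 / (ρ' + 1)) * t) := by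
    simp only [zeroPiece, cutPow_of_mem ht ht1, Complex.cpow_zero, Complex.cpow_one]
    ring
  rw [e, norm_mul]
  have b1 : ‖1 / (ρ * (ρ + 1)) * (t : ℂ) ^ (-ρ)‖ ≤ 1 / q * t ^ (-(1 / 2) : ℝ) := by
    rw [norm_mul, p1]; gcongr
  have b2 : ‖1 / (ρ' * (ρ' + 1)) * (t : ℂ) ^ (-ρ')‖ ≤ 1 / q * t ^ (-(1 / 2) : ℝ) := by
    rw [norm_mul, p1']; gcongr
  have b3 : ‖(1 / (ρ + 1) + 1 / (ρ' + 1)) * (t : ℂ)‖ ≤ 3 / q * t ^ (-(1 / 2) : ℝ) := by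
    rw [norm_mul, Complex.norm_real, Real.norm_of_nonneg ht.le]
    have : t ≤ t ^ (-(1 / 2) : ℝ) := ht1.trans p2
    gcongr
  have b4 : ‖1 / ρ + 1 / ρ'‖ ≤ 1 / q * t ^ (-(1 / 2) : ℝ) := by
    rw [a2]; exact le_mul_of_one_le_right (by positivity) p2
  have hh : ‖(1 / 2 : ℂ)‖ = 1 / 2 := by simp
  rw [hh]
  have t1 := norm_add_le (1 / (ρ * (ρ + 1)) * (t : ℂ) ^ (-ρ) +
      1 / (ρ' * (ρ' + 1)) * (t : ℂ) ^ (-ρ') - (1 / ρ + 1 / ρ')) ((1 / (ρ + 1) + 1 / (ρ' + 1)) * t)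
  have t2 := norm_sub_le (1 / (ρ * (ρ + 1)) * (t : ℂ) ^ (-ρ) +
      1 / (ρ' * (ρ' + 1)) * (t : ℂ) ^ (-ρ')) (1 / ρ + 1 / ρ')
  have t3 := norm_add_le (1 / (ρ * (ρ + 1)) * (t : ℂ) ^ (-ρ)) (1 / (ρ' * (ρ' + 1)) * (t : ℂ) ^ (-ρ'))
  have : 6 * (1 / 2 / q) * t ^ (-(1 / 2) : ℝ) =
      1 / 2 * (1 / q * t ^ (-(1 / 2) : ℝ) + 1 / q * t ^ (-(1 / 2) : ℝ)
    + 1 / q * t ^ (-(1 / 2) : ℝ) + 3 / q * t ^ (-(1 / 2) : ℝ)) := by ring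
  rw [this]
  linarith

/-- The contribution of the trivial zero `-2 (j + 1)`. -/
noncomputable def trivialPiece (j : ℕ) (t : ℝ) : ℂ :=
  1 / ((2 * (j + 1)) * (2 * j + 1)) * (cutPow 1 t - cutPow (2 * (j + 1)) t)

theorem hasMellin_trivialPiece (j : ℕ) {s : ℂ} (hs : s.re = 2) :
    HasMellin (trivialPiece j) s (1 / 2 * (1 / (1 + j) - 1 / (s / 2 + 1 + j)) / (s * (s + 1))) := by
  have hj : (0 : ℝ) ≤ j := j.cast_nonneg
  have h := ((hasMellin_cutPow 1 (s := s) (by simp [hs]; norm_num)).sub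
    (hasMellin_cutPow (2 * (j + 1)) (s := s) (by simp [hs]; nlinarith))).const_mul
      (1 / ((2 * (j + 1)) * (2 * j + 1)))
  have s0 : s ≠ 0 := fun h => by rw [h] at hs; simp at hs
  have s1 : s + 1 ≠ 0 := fun h => by
    have := congrArg Complex.re h; simp [hs] at this; norm_num at this
  have j1 : (1 + j : ℂ) ≠ 0 := by rw [add_comm]; exact Nat.cast_add_one_ne_zero j
  have j2 : (2 * j + 1 : ℂ) ≠ 0 := by exact_mod_cast (by omega : 2 * j + 1 ≠ 0)
  have s2 : s / 2 + 1 + j ≠ 0 := fun h => by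
    have := congrArg Complex.re h
    simp [hs] at this
    linarith
  have s3 : s + 2 * (j + 1) ≠ 0 := fun h => s2 (by linear_combination h / 2)
  have e : s / 2 + 1 + j = (s + 2 * (j + 1)) / 2 := by ring
  refine (congrArg (HasMellin _ s) ?_).mp h
  symm
  have j1' : (j + 1 : ℂ) ≠ 0 := by rwa [add_comm] at j1
  rw [e, add_comm (1 : ℂ)]
  field_simp
  ring

theorem norm_trivialPiece_le (j : ℕ) {t : ℝ} (ht : 0 < t) (ht1 : t ≤ 1) :
    ‖trivialPiece j t‖ ≤ 1 / ((j : ℝ) + 1) ^ 2 * t ^ (-(1 / 2) : ℝ) := by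
  have hj : (0 : ℝ) ≤ j := j.cast_nonneg
  have p2 : 1 ≤ t ^ (-(1 / 2) : ℝ) := Real.one_le_rpow_of_pos_of_le_one_of_nonpos ht ht1 (by norm_num)
  have e : (2 * ((j : ℂ) + 1)) = ((2 * (j + 1) : ℕ) : ℂ) := by push_cast; ring
  have e2 : ((2 * ((j : ℂ) + 1)) * (2 * j + 1)) = (((2 * (j + 1)) * (2 * j + 1) : ℝ) : ℂ) := by
    push_cast; ring
  rw [trivialPiece, cutPow_of_mem ht ht1, cutPow_of_mem ht ht1, e2, e, Complex.cpow_one,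
    Complex.cpow_natCast, norm_mul]
  have h1 : ‖(t : ℂ) - (t : ℂ) ^ (2 * (j + 1))‖ ≤ 1 := by
    rw [← Complex.ofReal_pow, ← Complex.ofReal_sub, Complex.norm_real, Real.norm_eq_abs, abs_le]
    have : 0 ≤ t ^ (2 * (j + 1)) := by positivity
    have : t ^ (2 * (j + 1)) ≤ 1 := pow_le_one₀ ht.le ht1
    constructor <;> linarith
  have h2 : ‖1 / (((2 * (j + 1)) * (2 * j + 1) : ℝ) : ℂ)‖ ≤ 1 / ((j : ℝ) + 1) ^ 2 := by
    rw [norm_div, norm_one, Complex.norm_real, Real.norm_of_nonneg (by positivity)]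
    gcongr
    nlinarith
  calc _ ≤ 1 / ((j : ℝ) + 1) ^ 2 * 1 := by gcongr
    _ ≤ _ := by gcongr

theorem continuousAt_cutPow (a : ℂ) {t : ℝ} (ht : 0 < t) (ht1 : t < 1) :
    ContinuousAt (cutPow a) t := by
  have h : ContinuousAt (fun u : ℝ => (u : ℂ) ^ a) t :=
    Complex.continuousAt_ofReal_cpow_const t a (Or.inr ht.ne')
  refine h.congr ?_
  filter_upwards [Ioo_mem_nhds ht ht1] with u hu
  exact (cutPow_of_mem hu.1 hu.2.le a).symm

theorem continuousAt_tsum_of_norm_le {ι : Type*} {g : ι → ℝ → ℂ} {C : ι → ℝ} (hC : Summable C)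
    (hC0 : ∀ i, 0 ≤ C i)
    (hg : ∀ i, ∀ t > 0, t ≤ 1 → ‖g i t‖ ≤ C i * t ^ (-(1 / 2) : ℝ))
    (hgc : ∀ i, ∀ t > 0, t < 1 → ContinuousAt (g i) t) {t : ℝ} (ht : 0 < t) (ht1 : t < 1) :
    ContinuousAt (fun t => ∑' i, g i t) t := by
  have : ContinuousOn (fun t => ∑' i, g i t) (Ioo (t / 2) 1) := by
    refine continuousOn_tsum (u := fun i => C i * (t / 2) ^ (-(1 / 2) : ℝ))
      (fun i u hu => (hgc i u (by linarith [hu.1]) hu.2).continuousWithinAt) (hC.mul_right _)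
      fun i u hu => ?_
    refine (hg i u (by linarith [hu.1]) hu.2.le).trans ?_
    have := Real.rpow_le_rpow_of_nonpos (half_pos ht) hu.1.le (by norm_num : (-(1 / 2) : ℝ) ≤ 0)
    exact mul_le_mul_of_nonneg_left this (hC0 i)
  exact this.continuousAt (Ioo_mem_nhds (half_lt_self ht) ht1)

theorem mangoldt_hat_eq_zero {N n : ℕ} {t : ℝ} (hN : 1 ≤ t * N) (ht : 0 < t) (hn : N ≤ n) :
    max (1 - n * t) 0 = 0 := by
  refine max_eq_right (sub_nonpos.2 (hN.trans ?_))
  rw [mul_comm]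
  gcongr

theorem hasSum_mangoldt_hat {t : ℝ} (ht : 0 < t) :
    HasSum (fun n : ℕ => ArithmeticFunction.vonMangoldt n * max (1 - n * t) 0)
      (∑' n : ℕ, ArithmeticFunction.vonMangoldt n * max (1 - n * t) 0) := by
  obtain ⟨N, hN⟩ := exists_nat_ge (1 / t)
  rw [div_le_iff₀ ht, mul_comm] at hN
  refine (summable_of_ne_finset_zero (s := Finset.range N) fun n hn => ?_).hasSum
  rw [mangoldt_hat_eq_zero hN ht (by simpa using hn), mul_zero]

theorem continuousAt_tsum_mangoldt_hat {t : ℝ} (ht : 0 < t) :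
    ContinuousAt (fun t : ℝ => ∑' n : ℕ, ArithmeticFunction.vonMangoldt n * max (1 - n * t) 0) t := by
  obtain ⟨N, hN⟩ := exists_nat_ge (1 / (t / 2))
  rw [div_le_iff₀ (half_pos ht), mul_comm] at hN
  have : ContinuousAt (fun t : ℝ => ∑ n ∈ Finset.range N,
      ArithmeticFunction.vonMangoldt n * max (1 - n * t) 0) t :=
    (continuous_finsetSum _ fun n _ => by fun_prop).continuousAt
  refine this.congr ?_
  filter_upwards [lt_mem_nhds (half_lt_self ht)] with u hu
  refine (tsum_eq_sum fun n hn => ?_).symm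
  have hN' : 1 ≤ u * N := hN.trans (by gcongr)
  rw [mangoldt_hat_eq_zero hN' (by linarith) (by simpa using hn), mul_zero]

theorem hasMellin_tsum_mangoldt_hat {s : ℂ} (hs : s.re = 2) :
    HasMellin (fun t : ℝ => ((∑' n : ℕ, ArithmeticFunction.vonMangoldt n * max (1 - n * t) 0 : ℝ) : ℂ)) s
      (-(deriv riemannZeta s / riemannZeta s) / (s * (s + 1))) := by
  have hs1 : 1 < s.re := by linarith
  have hL := ArithmeticFunction.LSeries_vonMangoldt_eq_deriv_riemannZeta_div hs1
  have hLs := ArithmeticFunction.LSeriesSummable_vonMangoldt hs1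
  have hterm : ∀ n : ℕ, HasMellin (fun t : ℝ => (ArithmeticFunction.vonMangoldt n : ℂ) * cutHat (n * t)) s
      (LSeries.term (fun n => (ArithmeticFunction.vonMangoldt n : ℂ)) s n * (1 / (s * (s + 1)))) := by
    intro n
    rcases eq_or_ne n 0 with rfl | hn
    · have := (hasMellin_cutHat (s := s) (by linarith)).const_mul 0
      simpa using this
    · have hn0 : (0 : ℝ) < n := by positivity
      have := ((hasMellin_cutHat (s := s) (by linarith)).comp_mul_left hn0).const_mul
        (ArithmeticFunction.vonMangoldt n : ℂ)
      rw [LSeries.term_of_ne_zero hn]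
      rw [Complex.cpow_neg, ← mul_assoc, ← div_eq_mul_inv] at this
      exact_mod_cast this
  have hnorm : Summable fun n : ℕ => ∫ t in Ioi (0 : ℝ),
      ‖(t : ℂ) ^ (s - 1) • ((ArithmeticFunction.vonMangoldt n : ℂ) * cutHat (n * t))‖ := by
    have h2 := (hLs.norm).mul_right (∫ t in Ioi (0 : ℝ), ‖(t : ℂ) ^ (s - 1) • cutHat t‖)
    refine h2.congr fun n => ?_
    rcases eq_or_ne n 0 with rfl | hn
    · simp
    · have hn0 : (0 : ℝ) < n := by positivity
      have e : ∀ t : ℝ, ‖(t : ℂ) ^ (s - 1) • ((ArithmeticFunction.vonMangoldt n : ℂ) * cutHat (n * t))‖ =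
          ‖(ArithmeticFunction.vonMangoldt n : ℂ)‖ * ‖(t : ℂ) ^ (s - 1) • cutHat (n * t)‖ := by
        intro t; rw [← norm_mul, smul_eq_mul, smul_eq_mul]; congr 1; ring
      simp_rw [e]
      rw [integral_const_mul, integral_norm_cpow_smul_comp_mul_left _ _ hn0, LSeries.norm_term_eq,
        if_neg hn, Real.rpow_neg hn0.le]
      ring
  have h := hasMellin_of_hasSum hterm hnorm
    (f := fun t : ℝ => ((∑' n : ℕ, ArithmeticFunction.vonMangoldt n * max (1 - n * t) 0 : ℝ) : ℂ)) ?_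
  · rw [tsum_mul_right] at h
    refine (congrArg (HasMellin _ s) ?_).mp h
    rw [← LSeries, hL]; ring
  · intro t ht
    have h3 := Complex.hasSum_ofReal.2 (hasSum_mangoldt_hat ht)
    refine (congrArg (fun f : ℕ → ℂ => HasSum f _) (funext fun n => ?_)).mp h3
    rcases eq_or_ne n 0 with rfl | hn
    · simp
    · rw [cutHat_eq (by positivity)]; push_cast; ring

section ExplicitFormula

variable {ι : Type} {γ : ι → ℝ}

theorem countable_of_hasSum
    (H : ∀ w : ℂ, 0 < w.re →
      HasSum (fun i => w / (w ^ 2 + (γ i : ℂ) ^ 2)) (logDeriv entireXi (1 / 2 + w))) :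
    Countable ι := by
  have h := (hasSum_div_sq_add_sq H one_pos).summable.countable_support
  have : Function.support (fun i => 1 / ((1 : ℝ) ^ 2 + γ i ^ 2)) = univ := by
    ext i; simp; positivity
  rw [this] at h
  exact countable_univ_iff.1 h

theorem tsum_mangoldt_hat_eq
    (H : ∀ w : ℂ, 0 < w.re →
      HasSum (fun i => w / (w ^ 2 + (γ i : ℂ) ^ 2)) (logDeriv entireXi (1 / 2 + w))) :
    ∃ c : ℂ, ∀ t : ℝ, 0 < t → t < 1 →
    ((∑' n : ℕ, ArithmeticFunction.vonMangoldt n * max (1 - n * t) 0 : ℝ) : ℂ) =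
      1 / 2 * (t : ℂ)⁻¹ - 1 + 1 / 2 * t + c * (1 - t) + ∑' j, trivialPiece j t -
      ∑' i, 1 / 2 * (zeroPiece (1 / 2 + γ i * Complex.I) t + zeroPiece (1 / 2 - γ i * Complex.I) t) := by
  have hcount := countable_of_hasSum H
  set c : ℂ := -(Real.log Real.pi / 2) + Complex.digamma 1 / 2 with hc
  set Z : ι → ℝ → ℂ := fun i t =>
    1 / 2 * (zeroPiece (1 / 2 + γ i * Complex.I) t + zeroPiece (1 / 2 - γ i * Complex.I) t) with hZ
  set C : ι → ℝ := fun i => 6 * (1 / 2 / ((1 / 2) ^ 2 + γ i ^ 2)) with hCdef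
  have hC : Summable C := (hasSum_div_sq_add_sq H (by norm_num : (0 : ℝ) < 1 / 2)).summable.mul_left 6
  have hC0 : ∀ i, 0 ≤ C i := fun i => by simp only [hCdef]; positivity
  have hZb : ∀ i, ∀ t > 0, t ≤ 1 → ‖Z i t‖ ≤ C i * t ^ (-(1 / 2) : ℝ) :=
    fun i t ht ht1 => norm_zeroPiece_add_zeroPiece_le (γ i) ht ht1
  have hz1 : ∀ ρ : ℂ, ∀ t > 1, zeroPiece ρ t = 0 := fun ρ t ht => by
    simp [zeroPiece, cutPow_of_one_lt ht]
  have hzc : ∀ ρ : ℂ, ∀ t > 0, t < 1 → ContinuousAt (zeroPiece ρ) t := fun ρ t ht ht1 =>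
    ((continuousAt_const.mul (continuousAt_cutPow _ ht ht1)).sub
      (continuousAt_const.mul (continuousAt_cutPow _ ht ht1))).add
      (continuousAt_const.mul (continuousAt_cutPow _ ht ht1))
  have hZ1 : ∀ i, ∀ t > 1, Z i t = 0 := fun i t ht => by simp [hZ, hz1 _ t ht]
  have hZc : ∀ i, ∀ t > 0, t < 1 → ContinuousAt (Z i) t := fun i t ht ht1 =>
    continuousAt_const.mul ((hzc _ t ht ht1).add (hzc _ t ht ht1))
  have hT : Summable fun j : ℕ => 1 / ((j : ℝ) + 1) ^ 2 := summable_one_div_nat_add_one_sq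
  have hT0 : ∀ j : ℕ, 0 ≤ 1 / ((j : ℝ) + 1) ^ 2 := fun j => by positivity
  have hTb : ∀ j : ℕ, ∀ t > 0, t ≤ 1 → ‖trivialPiece j t‖ ≤ 1 / ((j : ℝ) + 1) ^ 2 * t ^ (-(1 / 2) : ℝ) :=
    fun j t ht ht1 => norm_trivialPiece_le j ht ht1
  have hT1 : ∀ j : ℕ, ∀ t > 1, trivialPiece j t = 0 := fun j t ht => by
    simp [trivialPiece, cutPow_of_one_lt ht]
  have hTc : ∀ j : ℕ, ∀ t > 0, t < 1 → ContinuousAt (trivialPiece j) t := fun j t ht ht1 =>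
    continuousAt_const.mul ((continuousAt_cutPow _ ht ht1).sub (continuousAt_cutPow _ ht ht1))
  have hsummable : ∀ {κ : Type} {g : κ → ℝ → ℂ} {D : κ → ℝ}, Summable D →
      (∀ i, ∀ t > 0, t ≤ 1 → ‖g i t‖ ≤ D i * t ^ (-(1 / 2) : ℝ)) → (∀ i, ∀ t > 1, g i t = 0) →
      ∀ t > 0, HasSum (fun i => g i t) (∑' i, g i t) := by
    intro κ g D hD hg hg1 t ht
    rcases le_or_gt t 1 with h | h
    · exact (Summable.of_norm_bounded (hD.mul_right _) fun i => hg i t ht h).hasSum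
    · simp [hg1 _ t h]
  set h : ℝ → ℂ := fun t =>
    ((∑' n : ℕ, ArithmeticFunction.vonMangoldt n * max (1 - n * t) 0 : ℝ) : ℂ) -
      (1 / 2 * cutPow (-1) t - cutPow 0 t + 1 / 2 * cutPow 1 t + c * (cutPow 0 t - cutPow 1 t)) -
      ∑' j, trivialPiece j t + ∑' i, Z i t with hh
  have hmel : ∀ s : ℂ, s.re = 2 → HasMellin h s 0 := by
    intro s hs
    have s0 : s ≠ 0 := fun h => by rw [h] at hs; simp at hs
    have s1 : s + 1 ≠ 0 := fun h => by
      have := congrArg Complex.re h; simp [hs] at this; norm_num at this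
    have s2 : s - 1 ≠ 0 := fun h => by
      have := congrArg Complex.re h; simp [hs] at this; norm_num at this
    have mZ : ∀ i, HasMellin (Z i) s ((s - 1 / 2) / ((s - 1 / 2) ^ 2 + (γ i : ℂ) ^ 2) / (s * (s + 1))) := by
      intro i
      have h1 := ((hasMellin_zeroPiece (ρ := 1 / 2 + γ i * Complex.I) (by simp) hs).add
        (hasMellin_zeroPiece (ρ := 1 / 2 - γ i * Complex.I) (by simp) hs)).const_mul (1 / 2)
      refine (congrArg (HasMellin _ s) ?_).mp h1
      have n1 : s - (1 / 2 + γ i * Complex.I) ≠ 0 := fun h => by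
        have := congrArg Complex.re h; simp [hs] at this; norm_num at this
      have n2 : s - (1 / 2 - γ i * Complex.I) ≠ 0 := fun h => by
        have := congrArg Complex.re h; simp [hs] at this; norm_num at this
      have e : (s - 1 / 2) ^ 2 + (γ i : ℂ) ^ 2 =
          (s - (1 / 2 + γ i * Complex.I)) * (s - (1 / 2 - γ i * Complex.I)) := by
        linear_combination (γ i : ℂ) ^ 2 * Complex.I_sq
      rw [← add_div, div_add_div _ _ n1 n2, ← e]
      ring
    have mZs : HasMellin (fun t => ∑' i, Z i t) s (logDeriv entireXi s / (s * (s + 1))) := by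
      have h1 := hasMellin_of_hasSum mZ (f := fun t => ∑' i, Z i t)
        (Summable.of_nonneg_of_le (fun i => integral_nonneg fun _ => norm_nonneg _)
          (fun i => integral_norm_cpow_smul_le hs (hC0 i) (hZ1 i) (hZb i)) hC)
        (hsummable hC hZb hZ1)
      have h2 := (H (s - 1 / 2) (by simp [hs]; norm_num)).tsum_eq
      rwa [tsum_div_const, h2, add_sub_cancel] at h1
    have mTs : HasMellin (fun t => ∑' j, trivialPiece j t) s
        (1 / 2 * (Complex.digamma (s / 2 + 1) - Complex.digamma 1) / (s * (s + 1))) := by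
      have h1 := hasMellin_of_hasSum (fun j => hasMellin_trivialPiece j hs)
        (f := fun t => ∑' j, trivialPiece j t)
        (Summable.of_nonneg_of_le (fun i => integral_nonneg fun _ => norm_nonneg _)
          (fun i => integral_norm_cpow_smul_le hs (hT0 i) (hT1 i) (hTb i)) hT)
        (hsummable hT hTb hT1)
      have h2 := (hasSum_digamma_sub (z := s / 2 + 1) (w := 1) (by simp [hs]) (by simp)).tsum_eq
      rwa [tsum_div_const, tsum_mul_left, h2] at h1
    have m0 := hasMellin_cutPow 0 (s := s) (by simp [hs])
    have m1 := hasMellin_cutPow 1 (s := s) (by simp [hs]; norm_num)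
    have mP := ((((hasMellin_cutPow (-1) (s := s) (by simp [hs])).const_mul (1 / 2)).sub m0).add
      (m1.const_mul (1 / 2))).add ((m0.sub m1).const_mul c)
    have htot := (((hasMellin_tsum_mangoldt_hat hs).sub mP).sub mTs).add mZs
    refine (congrArg (HasMellin _ s) ?_).mp htot
    rw [logDeriv_entireXi_eq (by linarith), hc, ← sub_eq_add_neg, add_zero]
    field_simp
    ring
  refine ⟨c, fun t ht ht1 => ?_⟩
  have hcont : ContinuousAt h t := by
    refine ((ContinuousAt.sub ?_ ?_).sub (continuousAt_tsum_of_norm_le hT hT0 hTb hTc ht ht1)).add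
      (continuousAt_tsum_of_norm_le hC hC0 hZb hZc ht ht1)
    · exact Complex.continuous_ofReal.continuousAt.comp (continuousAt_tsum_mangoldt_hat ht)
    · have c0 := continuousAt_cutPow 0 ht ht1
      have c1 := continuousAt_cutPow 1 ht ht1
      exact (((continuousAt_const.mul (continuousAt_cutPow (-1) ht ht1)).sub c0).add
        (continuousAt_const.mul c1)).add (continuousAt_const.mul (c0.sub c1))
  have h0 := eq_zero_of_hasMellin_zero hmel ht hcont
  simp only [hh, cutPow_of_mem ht ht1.le, Complex.cpow_zero, Complex.cpow_one, Complex.cpow_neg_one] at h0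
  linear_combination h0

end ExplicitFormula

/-- The integrated Chebyshev function `∫₀^y ψ`. -/
noncomputable def psiOne (y : ℝ) : ℝ := ∑' n : ℕ, ArithmeticFunction.vonMangoldt n * max (y - n) 0

theorem psiOne_eq_sum {y : ℝ} {N : ℕ} (h : y ≤ N) :
    psiOne y = ∑ n ∈ Finset.range N, ArithmeticFunction.vonMangoldt n * max (y - n) 0 := by
  refine tsum_eq_sum fun n hn => ?_
  have : (N : ℝ) ≤ n := by exact_mod_cast (by simpa using hn)
  rw [max_eq_right (by linarith), mul_zero]

theorem integral_ite_le (n a b : ℝ) :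
    ∫ u in a..b, (if n ≤ u then (1 : ℝ) else 0) = max (b - n) 0 - max (a - n) 0 := by
  refine intervalIntegral.integral_eq_sub_of_hasDeriv_right (f := fun u => max (u - n) 0)
    (by fun_prop) (fun u _ => ?_) ?_
  · split_ifs with h
    · have : HasDerivWithinAt (fun u : ℝ => u - n) 1 (Ioi u) u :=
        ((hasDerivAt_id u).sub_const n).hasDerivWithinAt
      refine this.congr (fun v hv => max_eq_left ?_) (max_eq_left ?_)
      · have : u < v := hv
        linarith
      · linarith
    · have : HasDerivAt (fun u : ℝ => max (u - n) 0) 0 u := by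
        refine (hasDerivAt_const u (0 : ℝ)).congr_of_eventuallyEq ?_
        filter_upwards [gt_mem_nhds (not_le.1 h)] with v hv
        exact max_eq_right (by linarith)
      exact this.hasDerivWithinAt
  · refine Monotone.intervalIntegrable fun u v huv => ?_
    show (if n ≤ u then (1 : ℝ) else 0) ≤ if n ≤ v then 1 else 0
    split_ifs with h1 h2 h2
    · exact le_rfl
    · exact absurd (h1.trans huv) h2
    · exact zero_le_one
    · exact le_rfl

theorem intervalIntegrable_ite_le (n a b : ℝ) :
    IntervalIntegrable (fun u => if n ≤ u then (1 : ℝ) else 0) volume a b := by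
  refine Monotone.intervalIntegrable fun u v huv => ?_
  show (if n ≤ u then (1 : ℝ) else 0) ≤ if n ≤ v then 1 else 0
  split_ifs with h1 h2 h2
  · exact le_rfl
  · exact absurd (h1.trans huv) h2
  · exact zero_le_one
  · exact le_rfl

theorem psi_eq_sum_range {u : ℝ} (hu : 0 ≤ u) {N : ℕ} (h : u < N) :
    Chebyshev.psi u =
      ∑ n ∈ Finset.range N, ArithmeticFunction.vonMangoldt n * (if (n : ℝ) ≤ u then 1 else 0) := by
  simp only [mul_ite, mul_one, mul_zero]
  rw [← Finset.sum_filter, Chebyshev.psi_eq_sum_Icc]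
  refine Finset.sum_congr ?_ fun _ _ => rfl
  ext n
  simp only [Finset.mem_Icc, zero_le, true_and, Finset.mem_filter, Finset.mem_range, Nat.le_floor_iff hu]
  refine ⟨fun hn => ⟨?_, hn⟩, fun hn => hn.2⟩
  exact_mod_cast hn.trans_lt h

theorem integral_psi {a b : ℝ} (ha : 0 ≤ a) (hab : a ≤ b) :
    ∫ u in a..b, Chebyshev.psi u = psiOne b - psiOne a := by
  obtain ⟨N, hN⟩ := exists_nat_gt b
  rw [psiOne_eq_sum hN.le, psiOne_eq_sum (hab.trans hN.le), ← Finset.sum_sub_distrib]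
  have : ∫ u in a..b, Chebyshev.psi u = ∫ u in a..b, ∑ n ∈ Finset.range N,
      ArithmeticFunction.vonMangoldt n * (if (n : ℝ) ≤ u then 1 else 0) := by
    refine intervalIntegral.integral_congr fun u hu => ?_
    rw [uIcc_of_le hab] at hu
    exact psi_eq_sum_range (ha.trans hu.1) (hu.2.trans_lt hN)
  rw [this, intervalIntegral.integral_finsetSum (f := fun n u => ArithmeticFunction.vonMangoldt n *
    (if (n : ℝ) ≤ u then (1 : ℝ) else 0)) fun n _ => (intervalIntegrable_ite_le n a b).const_mul _]
  refine Finset.sum_congr rfl fun n _ => ?_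
  rw [intervalIntegral.integral_const_mul, integral_ite_le]
  ring

theorem integral_psi_comp_mul {c a b : ℝ} (hc : 0 < c) (ha : 0 ≤ a) (hab : a ≤ b) :
    ∫ u in a..b, Chebyshev.psi (c * u) = (psiOne (c * b) - psiOne (c * a)) / c := by
  rw [intervalIntegral.integral_comp_mul_left _ hc.ne', integral_psi (by positivity) (by gcongr),
    smul_eq_mul]
  field_simp

theorem intervalIntegrable_psi_comp_mul {c : ℝ} (hc : 0 ≤ c) (a b : ℝ) :
    IntervalIntegrable (fun u => Chebyshev.psi (c * u)) volume a b :=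
  Monotone.intervalIntegrable fun _ _ h => Chebyshev.psi_mono (by gcongr)

theorem integral_psi_increment {a b y : ℝ} (ha : 0 < a) (hb : 1 ≤ b) (hy : 0 < y) :
    ∫ u in y..b * y, (Chebyshev.psi (a * u) - Chebyshev.psi u - (a - 1) * u) =
      psiOne (a * (b * y)) / a - psiOne (a * y) / a - psiOne (b * y) + psiOne y
        - (a - 1) * ((b * y) ^ 2 - y ^ 2) / 2 := by
  have hyb : y ≤ b * y := le_mul_of_one_le_left hy.le hb
  have i1 := intervalIntegrable_psi_comp_mul ha.le y (b * y)
  have i2 : IntervalIntegrable Chebyshev.psi volume y (b * y) := Chebyshev.psi_mono.intervalIntegrable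
  have i3 : IntervalIntegrable (fun u => (a - 1) * u) volume y (b * y) :=
    (continuous_const.mul continuous_id).intervalIntegrable _ _
  rw [intervalIntegral.integral_sub (i1.sub i2) i3, intervalIntegral.integral_sub i1 i2,
    integral_psi_comp_mul ha hy.le hyb, integral_psi hy.le hyb, intervalIntegral.integral_const_mul,
    integral_id]
  ring

theorem psiOne_eq_mul {y : ℝ} (hy : 0 < y) :
    psiOne y = y * ∑' n : ℕ, ArithmeticFunction.vonMangoldt n * max (1 - n * y⁻¹) 0 := by
  rw [psiOne, ← tsum_mul_left]
  refine tsum_congr fun n => ?_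
  have : max (y - n) 0 = y * max (1 - n * y⁻¹) 0 := by
    rw [mul_max_of_nonneg _ _ hy.le, mul_zero]; congr 1; field_simp
  rw [this]; ring

section ExplicitFormula

variable {ι : Type} {γ : ι → ℝ}

theorem exists_psiOne_eq
    (H : ∀ w : ℂ, 0 < w.re →
      HasSum (fun i => w / (w ^ 2 + (γ i : ℂ) ^ 2)) (logDeriv entireXi (1 / 2 + w))) :
    ∃ c : ℂ, ∀ y : ℝ, 1 < y → ∃ S T : ℂ,
      HasSum (fun j => y * trivialPiece j y⁻¹) T ∧
      HasSum (fun i => y * (1 / 2 * (zeroPiece (1 / 2 + γ i * Complex.I) y⁻¹ +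
        zeroPiece (1 / 2 - γ i * Complex.I) y⁻¹))) S ∧
      (psiOne y : ℂ) = 1 / 2 * y ^ 2 - y + 1 / 2 + c * (y - 1) + T - S := by
  obtain ⟨c, hc⟩ := tsum_mangoldt_hat_eq H
  refine ⟨c, fun y hy => ?_⟩
  have hy0 : 0 < y := by linarith
  have ht0 : 0 < y⁻¹ := inv_pos.2 hy0
  have ht1 : y⁻¹ < 1 := inv_lt_one_of_one_lt₀ hy
  have hC : Summable fun i => 6 * (1 / 2 / ((1 / 2) ^ 2 + γ i ^ 2)) :=
    (hasSum_div_sq_add_sq H (by norm_num : (0 : ℝ) < 1 / 2)).summable.mul_left 6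
  have s1 := (Summable.of_norm_bounded (summable_one_div_nat_add_one_sq.mul_right _)
    fun j => norm_trivialPiece_le j ht0 ht1.le).hasSum.mul_left (y : ℂ)
  have s2 := (Summable.of_norm_bounded (hC.mul_right _)
    fun i => norm_zeroPiece_add_zeroPiece_le (γ i) ht0 ht1.le).hasSum.mul_left (y : ℂ)
  refine ⟨_, _, s1, s2, ?_⟩
  have hyc : (y : ℂ) ≠ 0 := by exact_mod_cast hy0.ne'
  rw [psiOne_eq_mul hy0, Complex.ofReal_mul, hc _ ht0 ht1]
  generalize ∑' j, trivialPiece j y⁻¹ = P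
  generalize ∑' i, 1 / 2 * (zeroPiece (1 / 2 + γ i * Complex.I) y⁻¹ +
    zeroPiece (1 / 2 - γ i * Complex.I) y⁻¹) = Q
  push_cast
  field_simp

theorem mul_zeroPiece_inv {y : ℝ} (hy : 1 < y) {ρ : ℂ} :
    y * zeroPiece ρ y⁻¹ = 1 / (ρ * (ρ + 1)) * (y * (y : ℂ) ^ ρ) - y / ρ + 1 / (ρ + 1) := by
  have hy0 : 0 < y := by linarith
  have ht0 : 0 < y⁻¹ := inv_pos.2 hy0
  have ht1 : y⁻¹ ≤ 1 := (inv_lt_one_of_one_lt₀ hy).le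
  have hyc : (y : ℂ) ≠ 0 := by exact_mod_cast hy0.ne'
  have e : ((y⁻¹ : ℝ) : ℂ) ^ (-ρ) = (y : ℂ) ^ ρ := by
    rw [Complex.ofReal_inv, Complex.inv_cpow _ _
        (by rw [Complex.arg_ofReal_of_nonneg hy0.le]; exact Real.pi_ne_zero.symm),
      Complex.cpow_neg, inv_inv]
  rw [zeroPiece, cutPow_of_mem ht0 ht1, cutPow_of_mem ht0 ht1, cutPow_of_mem ht0 ht1, e,
    Complex.cpow_zero, Complex.cpow_one]
  push_cast
  field_simp

theorem mul_trivialPiece_inv {y : ℝ} (hy : 1 < y) (j : ℕ) :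
    y * trivialPiece j y⁻¹ =
      ((1 / ((2 * (j + 1)) * (2 * j + 1)) * (1 - (y ^ (2 * j + 1))⁻¹) : ℝ) : ℂ) := by
  have hy0 : 0 < y := by linarith
  have ht0 : 0 < y⁻¹ := inv_pos.2 hy0
  have ht1 : y⁻¹ ≤ 1 := (inv_lt_one_of_one_lt₀ hy).le
  have hyc : (y : ℂ) ≠ 0 := by exact_mod_cast hy0.ne'
  have e : (2 * ((j : ℂ) + 1)) = ((2 * (j + 1) : ℕ) : ℂ) := by push_cast; ring
  rw [trivialPiece, cutPow_of_mem ht0 ht1, cutPow_of_mem ht0 ht1, Complex.cpow_one]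
  have e3 : ((y⁻¹ : ℝ) : ℂ) ^ (2 * ((j : ℂ) + 1)) = (((y⁻¹ : ℝ) : ℂ)) ^ (2 * (j + 1)) := by
    rw [e, Complex.cpow_natCast]
  rw [e3]
  push_cast
  have : (y : ℂ) * ((y : ℂ)⁻¹ - (y : ℂ)⁻¹ ^ (2 * (j + 1))) = 1 - ((y : ℂ) ^ (2 * j + 1))⁻¹ := by
    rw [show 2 * (j + 1) = (2 * j + 1) + 1 by ring, inv_pow, pow_succ _ (2 * j + 1)]
    field_simp
  rw [← this]; ring

/-- The amplitude `((a ^ ρ - 1) / ρ) ((b ^ (ρ + 1) - 1) / (ρ + 1))` at the zero `ρ = 1 / 2 + iγ`. -/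
noncomputable def zeroCoeff (a b γ : ℝ) : ℂ :=
  ((a : ℂ) ^ (1 / 2 + γ * Complex.I : ℂ) - 1) / (1 / 2 + γ * Complex.I) *
    (((b : ℂ) ^ (3 / 2 + γ * Complex.I : ℂ) - 1) / (3 / 2 + γ * Complex.I))

theorem second_difference_zeroPiece {a b y : ℝ} (ha : 1 ≤ a) (hb : 1 ≤ b) (hy : 1 < y) (γ : ℝ) :
    ((a * (b * y) : ℝ) : ℂ) * (1 / 2 * (zeroPiece (1 / 2 + γ * Complex.I) (a * (b * y))⁻¹ +
        zeroPiece (1 / 2 - γ * Complex.I) (a * (b * y))⁻¹)) / a -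
      ((a * y : ℝ) : ℂ) * (1 / 2 * (zeroPiece (1 / 2 + γ * Complex.I) (a * y)⁻¹ +
        zeroPiece (1 / 2 - γ * Complex.I) (a * y)⁻¹)) / a -
      ((b * y : ℝ) : ℂ) * (1 / 2 * (zeroPiece (1 / 2 + γ * Complex.I) (b * y)⁻¹ +
        zeroPiece (1 / 2 - γ * Complex.I) (b * y)⁻¹)) +
      (y : ℂ) * (1 / 2 * (zeroPiece (1 / 2 + γ * Complex.I) y⁻¹ +
        zeroPiece (1 / 2 - γ * Complex.I) y⁻¹)) =
      ((y * (zeroCoeff a b γ * (y : ℂ) ^ (1 / 2 + γ * Complex.I : ℂ)).re : ℝ) : ℂ) := by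
  have a0 : 0 < a := by linarith
  have b0 : 0 < b := by linarith
  have y0 : 0 < y := by linarith
  have hby : 1 < b * y := by nlinarith
  have hay : 1 < a * y := by nlinarith
  have haby : 1 < a * (b * y) := by nlinarith
  have ac : (a : ℂ) ≠ 0 := by exact_mod_cast a0.ne'
  have bc : (b : ℂ) ≠ 0 := by exact_mod_cast b0.ne'
  have key : ∀ ρ : ℂ, ρ ≠ 0 → ρ + 1 ≠ 0 → ((a * (b * y) : ℝ) : ℂ) * zeroPiece ρ (a * (b * y))⁻¹ / a -
      ((a * y : ℝ) : ℂ) * zeroPiece ρ (a * y)⁻¹ / a - ((b * y : ℝ) : ℂ) * zeroPiece ρ (b * y)⁻¹ +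
      y * zeroPiece ρ y⁻¹ =
      y * (((a : ℂ) ^ ρ - 1) / ρ * (((b : ℂ) ^ (ρ + 1) - 1) / (ρ + 1)) * (y : ℂ) ^ ρ) := by
    intro ρ h0 h1
    rw [mul_zeroPiece_inv haby, mul_zeroPiece_inv hay, mul_zeroPiece_inv hby, mul_zeroPiece_inv hy,
      Complex.ofReal_mul, Complex.mul_cpow_ofReal_nonneg a0.le (by positivity),
      Complex.ofReal_mul, Complex.mul_cpow_ofReal_nonneg b0.le y0.le, Complex.ofReal_mul,
      Complex.mul_cpow_ofReal_nonneg a0.le y0.le, Complex.cpow_add _ _ bc, Complex.cpow_one]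
    field_simp
    ring
  set ρ : ℂ := 1 / 2 + γ * Complex.I with hρ
  set ρ' : ℂ := 1 / 2 - γ * Complex.I with hρ'
  have hre : ρ.re = 1 / 2 := by simp [hρ]
  have hre' : ρ'.re = 1 / 2 := by simp [hρ']
  have r0 : ρ ≠ 0 := fun h => by rw [h] at hre; simp at hre
  have r0' : ρ' ≠ 0 := fun h => by rw [h] at hre'; simp at hre'
  have r1 : ρ + 1 ≠ 0 := fun h => by
    have := congrArg Complex.re h; simp [hre] at this; norm_num at this
  have r1' : ρ' + 1 ≠ 0 := fun h => by
    have := congrArg Complex.re h; simp [hre'] at this; norm_num at this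
  have hconj : ρ' = (starRingEnd ℂ) ρ := by
    apply Complex.ext <;> simp [hρ, hρ']
  have hcp : ∀ {u : ℝ}, 0 < u → ∀ z : ℂ, (u : ℂ) ^ ((starRingEnd ℂ) z) = (starRingEnd ℂ) ((u : ℂ) ^ z) := by
    intro u hu z
    rw [Complex.cpow_conj _ _ (by rw [Complex.arg_ofReal_of_nonneg hu.le]; exact Real.pi_ne_zero.symm),
      Complex.conj_ofReal]
  have k1 := key ρ r0 r1
  have k2 := key ρ' r0' r1'
  have e1 : zeroCoeff a b γ = ((a : ℂ) ^ ρ - 1) / ρ * (((b : ℂ) ^ (ρ + 1) - 1) / (ρ + 1)) := by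
    have : ρ + 1 = 3 / 2 + γ * Complex.I := by rw [hρ]; ring
    rw [zeroCoeff, this]
  have e2 : ((a : ℂ) ^ ρ' - 1) / ρ' * (((b : ℂ) ^ (ρ' + 1) - 1) / (ρ' + 1)) * (y : ℂ) ^ ρ' =
      (starRingEnd ℂ) (zeroCoeff a b γ * (y : ℂ) ^ ρ) := by
    have : ρ' + 1 = (starRingEnd ℂ) (ρ + 1) := by rw [hconj]; simp
    rw [this, hconj, hcp a0, hcp b0, hcp y0, e1]
    simp only [map_mul, map_div₀, map_sub, map_one]
  rw [← e1] at k1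
  rw [e2] at k2
  have e3 := Complex.add_conj (zeroCoeff a b γ * (y : ℂ) ^ ρ)
  push_cast at e3 ⊢
  push_cast at k1 k2
  linear_combination 1 / 2 * k1 + 1 / 2 * k2 + 1 / 2 * y * e3

theorem one_sub_inv_pow_le {a : ℝ} (ha : 1 ≤ a) (m : ℕ) :
    0 ≤ 1 - (a ^ m)⁻¹ ∧ 1 - (a ^ m)⁻¹ ≤ m * (a - 1) := by
  have a0 : 0 < a := by linarith
  refine ⟨sub_nonneg.2 (inv_le_one_of_one_le₀ (one_le_pow₀ ha)), ?_⟩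
  have h := one_add_mul_sub_le_pow (a := a⁻¹) (by linarith [inv_pos.2 a0]) m
  rw [inv_pow] at h
  have h2 : 1 - a⁻¹ ≤ a - 1 := by
    have := mul_inv_cancel₀ a0.ne'
    nlinarith [inv_pos.2 a0, mul_nonneg (sub_nonneg.2 ha) (sub_nonneg.2 (inv_le_one_of_one_le₀ ha))]
  have := mul_le_mul_of_nonneg_left h2 (Nat.cast_nonneg (α := ℝ) m)
  linarith

theorem second_difference_trivialPiece {a b y : ℝ} (ha : 1 ≤ a) (hb : 1 ≤ b) (hy : 1 < y) (j : ℕ) :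
    ((a * (b * y) : ℝ) : ℂ) * trivialPiece j (a * (b * y))⁻¹ / a -
      ((a * y : ℝ) : ℂ) * trivialPiece j (a * y)⁻¹ / a -
      ((b * y : ℝ) : ℂ) * trivialPiece j (b * y)⁻¹ + (y : ℂ) * trivialPiece j y⁻¹ =
      ((-(1 / ((2 * (j + 1)) * (2 * j + 1)) * (1 - (a ^ (2 * j + 2))⁻¹) *
        (1 - (b ^ (2 * j + 1))⁻¹) * (y ^ (2 * j + 1))⁻¹) : ℝ) : ℂ) := by
  have a0 : 0 < a := by linarith
  have b0 : 0 < b := by linarith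
  have y0 : 0 < y := by linarith
  have hby : 1 < b * y := by nlinarith
  have hay : 1 < a * y := by nlinarith
  have haby : 1 < a * (b * y) := by nlinarith
  rw [mul_trivialPiece_inv haby, mul_trivialPiece_inv hay, mul_trivialPiece_inv hby,
    mul_trivialPiece_inv hy]
  norm_cast
  simp only [mul_pow, pow_succ a (2 * j + 1)]
  have := pow_pos a0 (2 * j + 1)
  have := pow_pos b0 (2 * j + 1)
  have := pow_pos y0 (2 * j + 1)
  generalize a ^ (2 * j + 1) = A at *
  generalize b ^ (2 * j + 1) = B at *
  generalize y ^ (2 * j + 1) = Y at *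
  push_cast
  have h1 : (j : ℝ) + 1 ≠ 0 := by positivity
  have h2 : 2 * (j : ℝ) + 1 ≠ 0 := by positivity
  field_simp
  ring

theorem hasSum_smoothed
    (H : ∀ w : ℂ, 0 < w.re →
      HasSum (fun i => w / (w ^ 2 + (γ i : ℂ) ^ 2)) (logDeriv entireXi (1 / 2 + w)))
    {a b y : ℝ} (ha : 1 ≤ a) (hb : 1 ≤ b) (hy : 1 < y) :
    ∃ T : ℝ, |T| ≤ (a - 1) * (b - 1) * (y / (y ^ 2 - 1)) ∧
      HasSum (fun i => y * (zeroCoeff a b (γ i) * (y : ℂ) ^ (1 / 2 + γ i * Complex.I : ℂ)).re)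
        (T - ∫ u in y..b * y, (Chebyshev.psi (a * u) - Chebyshev.psi u - (a - 1) * u)) := by
  have a0 : 0 < a := by linarith
  have b0 : 0 < b := by linarith
  have y0 : 0 < y := by linarith
  have hby : 1 < b * y := by nlinarith
  have hay : 1 < a * y := by nlinarith
  have haby : 1 < a * (b * y) := by nlinarith
  have ac : (a : ℂ) ≠ 0 := by exact_mod_cast a0.ne'
  obtain ⟨c, hc⟩ := exists_psiOne_eq H
  obtain ⟨S1, T1, t1, s1, e1⟩ := hc _ haby
  obtain ⟨S2, T2, t2, s2, e2⟩ := hc _ hay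
  obtain ⟨S3, T3, t3, s3, e3⟩ := hc _ hby
  obtain ⟨S4, T4, t4, s4, e4⟩ := hc _ hy
  have s := (((s1.div_const (a : ℂ)).sub (s2.div_const (a : ℂ))).sub s3).add s4
  have t := (((t1.div_const (a : ℂ)).sub (t2.div_const (a : ℂ))).sub t3).add t4
  simp only [second_difference_zeroPiece ha hb hy] at s
  simp only [second_difference_trivialPiece ha hb hy] at t
  have tre := Complex.hasSum_re t
  have sre := Complex.hasSum_re s
  simp only [Complex.ofReal_re] at tre sre
  refine ⟨(T1 / a - T2 / a - T3 + T4).re, ?_, ?_⟩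
  · have hg : HasSum (fun j : ℕ => (a - 1) * (b - 1) * (y ^ (2 * j + 1))⁻¹)
        ((a - 1) * (b - 1) * (y / (y ^ 2 - 1))) := by
      refine HasSum.mul_left _ ?_
      have hq : (y ^ 2)⁻¹ < 1 := inv_lt_one_of_one_lt₀ (one_lt_pow₀ hy two_ne_zero)
      have := (hasSum_geometric_of_lt_one (by positivity) hq).mul_left y⁻¹
      convert this using 1
      · ext j; rw [pow_succ, pow_mul, mul_inv, inv_pow]; ring
      · have : y ^ 2 - 1 ≠ 0 := by nlinarith
        field_simp
    rw [← tre.tsum_eq, ← Real.norm_eq_abs]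
    refine tsum_of_norm_bounded hg fun j => ?_
    obtain ⟨p1, p2⟩ := one_sub_inv_pow_le ha (2 * j + 2)
    obtain ⟨q1, q2⟩ := one_sub_inv_pow_le hb (2 * j + 1)
    rw [norm_neg, Real.norm_of_nonneg (by positivity)]
    push_cast at p2 q2
    calc 1 / ((2 * ((j : ℝ) + 1)) * (2 * j + 1)) * (1 - (a ^ (2 * j + 2))⁻¹) *
        (1 - (b ^ (2 * j + 1))⁻¹) * (y ^ (2 * j + 1))⁻¹
        ≤ 1 / ((2 * ((j : ℝ) + 1)) * (2 * j + 1)) * ((2 * j + 2) * (a - 1)) *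
        ((2 * j + 1) * (b - 1)) * (y ^ (2 * j + 1))⁻¹ := by gcongr
      _ = (a - 1) * (b - 1) * (y ^ (2 * j + 1))⁻¹ := by field_simp
  · convert sre using 1
    have hint := integral_psi_increment a0 hb y0
    have hkey : ((∫ u in y..b * y, (Chebyshev.psi (a * u) - Chebyshev.psi u - (a - 1) * u) : ℝ) : ℂ) =
        (T1 / a - T2 / a - T3 + T4) - (S1 / a - S2 / a - S3 + S4) := by
      rw [hint]
      push_cast at e1 e2 e3 e4 ⊢
      rw [e1, e2, e3, e4]
      field_simp
      ring
    have := congrArg Complex.re hkey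
    rw [Complex.ofReal_re, Complex.sub_re] at this
    rw [this]; ring

end ExplicitFormula

theorem hasIntegral_two_sided_cpow {x : ℝ} (hx : 0 < x) (ξ : ℝ) :
    (∫ y in (0 : ℝ)..x, (y : ℂ) ^ (1 + ξ * Complex.I : ℂ)) +
      x ^ 4 * ∫ y in Ioi x, (y : ℂ) ^ (-3 + ξ * Complex.I : ℂ) =
      (x : ℂ) ^ (2 + ξ * Complex.I : ℂ) * ((4 / (4 + ξ ^ 2) : ℝ) : ℂ) := by
  have xc : (x : ℂ) ≠ 0 := by exact_mod_cast hx.ne'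
  rw [integral_cpow (Or.inl (by simp)), integral_Ioi_cpow_of_lt (by simp) hx]
  have h1 : (1 + ξ * Complex.I + 1 : ℂ) = 2 + ξ * Complex.I := by ring
  have h2 : (-3 + ξ * Complex.I + 1 : ℂ) = 2 + ξ * Complex.I - (4 : ℕ) := by push_cast; ring
  have n1 : (2 + ξ * Complex.I : ℂ) ≠ 0 := fun h => by
    have := congrArg Complex.re h; simp at this
  have n2 : (2 - ξ * Complex.I : ℂ) ≠ 0 := fun h => by
    have := congrArg Complex.re h; simp at this
  have n3 : (2 + ξ * Complex.I : ℂ) - (4 : ℕ) ≠ 0 := fun h => by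
    have := congrArg Complex.re h; norm_num at this
  have n4 : (4 + (ξ : ℂ) ^ 2) = (2 + ξ * Complex.I) * (2 - ξ * Complex.I) := by
    linear_combination (ξ : ℂ) ^ 2 * Complex.I_sq
  rw [h1, h2, Complex.cpow_sub _ _ xc, Complex.cpow_natCast, Complex.ofReal_zero,
    Complex.zero_cpow n1]
  push_cast at n3 ⊢
  rw [n4]
  have n5 : (2 + ξ * Complex.I - 4 : ℂ) = -(2 - ξ * Complex.I) := by ring
  rw [n5]
  field_simp
  ring

theorem two_sided_re_cpow_le {x : ℝ} (hx : 0 < x) (z : ℂ) (ξ : ℝ) :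
    (∫ y in (0 : ℝ)..x, (z * (y : ℂ) ^ (1 + ξ * Complex.I : ℂ)).re) +
      x ^ 4 * ∫ y in Ioi x, (z * (y : ℂ) ^ (-3 + ξ * Complex.I : ℂ)).re ≤
      x ^ 2 * (‖z‖ * (4 / (4 + ξ ^ 2))) := by
  have i1 : IntervalIntegrable (fun y : ℝ => z * (y : ℂ) ^ (1 + ξ * Complex.I : ℂ)) volume 0 x :=
    (intervalIntegral.intervalIntegrable_cpow' (by simp)).const_mul z
  have i2 : IntegrableOn (fun y : ℝ => z * (y : ℂ) ^ (-3 + ξ * Complex.I : ℂ)) (Ioi x) :=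
    (integrableOn_Ioi_cpow_of_lt (by simp) hx).const_mul z
  have e1 : (∫ y in (0 : ℝ)..x, (z * (y : ℂ) ^ (1 + ξ * Complex.I : ℂ)).re) =
      (∫ y in (0 : ℝ)..x, z * (y : ℂ) ^ (1 + ξ * Complex.I : ℂ)).re :=
    (Complex.reCLM.intervalIntegral_comp_comm i1)
  have e2 : (∫ y in Ioi x, (z * (y : ℂ) ^ (-3 + ξ * Complex.I : ℂ)).re) =
      (∫ y in Ioi x, z * (y : ℂ) ^ (-3 + ξ * Complex.I : ℂ)).re :=
    (Complex.reCLM.integral_comp_comm i2)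
  rw [e1, e2, intervalIntegral.integral_const_mul, integral_const_mul]
  have e3 := congrArg (fun w => (z * w).re) (hasIntegral_two_sided_cpow hx ξ)
  have e4 : ∀ w : ℂ, x ^ 4 * w.re = (((x : ℂ) ^ 4) * w).re := fun w => by
    rw [← Complex.ofReal_pow, Complex.re_ofReal_mul]
  rw [e4, ← Complex.add_re]
  have e5 : ∀ A B : ℂ, z * A + (x : ℂ) ^ 4 * (z * B) = z * (A + x ^ 4 * B) := fun A B => by ring
  rw [e5]
  refine e3.trans_le ((Complex.re_le_norm _).trans_eq ?_)
  rw [norm_mul, norm_mul, Complex.norm_cpow_eq_rpow_re_of_pos hx, Complex.norm_real,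
    Real.norm_of_nonneg (by positivity)]
  simp
  ring

theorem re_mul_re (z w : ℂ) :
    z.re * w.re = 1 / 2 * ((z * (starRingEnd ℂ) w).re + (z * w).re) := by
  simp [Complex.mul_re]; ring

theorem intervalIntegrable_re_cpow (z : ℂ) (ξ x : ℝ) :
    IntervalIntegrable (fun y : ℝ => (z * (y : ℂ) ^ (1 + ξ * Complex.I : ℂ)).re) volume 0 x := by
  have := (intervalIntegral.intervalIntegrable_cpow' (a := 0) (b := x)
    (r := 1 + ξ * Complex.I) (by simp)).const_mul z
  exact ⟨this.1.re, this.2.re⟩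

theorem integrableOn_re_cpow (z : ℂ) (ξ : ℝ) {x : ℝ} (hx : 0 < x) :
    IntegrableOn (fun y : ℝ => (z * (y : ℂ) ^ (-3 + ξ * Complex.I : ℂ)).re) (Ioi x) :=
  ((integrableOn_Ioi_cpow_of_lt (by simp) hx).const_mul z).re

section QuadraticForm

variable {ι : Type} (c : ι → ℂ) (γ : ι → ℝ)

/-- The Fourier kernel of the two-sided exponential weight, symmetrised. -/
noncomputable def zeroKernel (s t : ℝ) : ℝ := 2 / (4 + (s - t) ^ 2) + 2 / (4 + (s + t) ^ 2)

theorem zeroKernel_nonneg (s t : ℝ) : 0 ≤ zeroKernel s t := by unfold zeroKernel; positivity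

theorem zeroKernel_comm (s t : ℝ) : zeroKernel s t = zeroKernel t s := by
  unfold zeroKernel; rw [add_comm s t, ← neg_sub s t, neg_sq]

theorem rpow_mul_sq_sum_re (S : Finset ι) {y : ℝ} (hy : 0 < y) (s : ℝ) :
    y ^ s * (∑ i ∈ S, (c i * (y : ℂ) ^ (γ i * Complex.I : ℂ)).re) ^ 2 =
      ∑ i ∈ S, ∑ k ∈ S, 1 / 2 *
        ((c i * (starRingEnd ℂ) (c k) * (y : ℂ) ^ (s + (γ i - γ k : ℝ) * Complex.I : ℂ)).re +
          (c i * c k * (y : ℂ) ^ (s + (γ i + γ k : ℝ) * Complex.I : ℂ)).re) := by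
  have yc : (y : ℂ) ≠ 0 := by exact_mod_cast hy.ne'
  rw [sq, Finset.sum_mul_sum, Finset.mul_sum]
  refine Finset.sum_congr rfl fun i _ => ?_
  rw [Finset.mul_sum]
  refine Finset.sum_congr rfl fun k _ => ?_
  rw [re_mul_re]
  have hcj : (starRingEnd ℂ) ((y : ℂ) ^ (γ k * Complex.I : ℂ)) = (y : ℂ) ^ (-(γ k * Complex.I) : ℂ) := by
    have := Complex.cpow_conj (y : ℂ) (γ k * Complex.I)
      (by rw [Complex.arg_ofReal_of_nonneg hy.le]; exact Real.pi_ne_zero.symm)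
    rw [Complex.conj_ofReal] at this
    rw [← this]; simp
  have r : ∀ w : ℂ, y ^ s * w.re = ((y : ℂ) ^ (s : ℂ) * w).re := fun w => by
    rw [← Complex.ofReal_cpow hy.le, Complex.re_ofReal_mul]
  have e1 : (s + (γ i - γ k : ℝ) * Complex.I : ℂ) = s + γ i * Complex.I + -(γ k * Complex.I) := by
    push_cast; ring
  have e2 : (s + (γ i + γ k : ℝ) * Complex.I : ℂ) = s + γ i * Complex.I + γ k * Complex.I := by
    push_cast; ring
  rw [e1, e2, Complex.cpow_add _ _ yc, Complex.cpow_add _ _ yc, Complex.cpow_add (_ + _) _ yc,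
    Complex.cpow_add _ _ yc, map_mul, hcj,
    mul_left_comm, mul_add, r, r]
  congr 3 <;> ring

theorem integral_sq_finset_sum_le (S : Finset ι) {x : ℝ} (hx : 1 ≤ x) :
    ∫ y in (1 : ℝ)..x, (∑ i ∈ S, (c i * (y : ℂ) ^ (1 / 2 + γ i * Complex.I : ℂ)).re) ^ 2 ≤
      x ^ 2 * ∑ i ∈ S, ‖c i‖ ^ 2 * ∑ k ∈ S, zeroKernel (γ i) (γ k) := by
  have x0 : 0 < x := by linarith
  set g : ℝ → ℝ := fun y => ∑ i ∈ S, (c i * (y : ℂ) ^ (γ i * Complex.I : ℂ)).re with hg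
  set P : ι → ι → ℝ → ℝ := fun i k y =>
    1 / 2 * ((c i * (starRingEnd ℂ) (c k) * (y : ℂ) ^ (1 + (γ i - γ k : ℝ) * Complex.I : ℂ)).re +
          (c i * c k * (y : ℂ) ^ (1 + (γ i + γ k : ℝ) * Complex.I : ℂ)).re) with hP
  set Q : ι → ι → ℝ → ℝ := fun i k y =>
    1 / 2 * ((c i * (starRingEnd ℂ) (c k) * (y : ℂ) ^ (-3 + (γ i - γ k : ℝ) * Complex.I : ℂ)).re +
          (c i * c k * (y : ℂ) ^ (-3 + (γ i + γ k : ℝ) * Complex.I : ℂ)).re) with hQ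
  have iP : ∀ i k, IntervalIntegrable (P i k) volume 0 x := fun i k =>
    ((intervalIntegrable_re_cpow _ _ x).add (intervalIntegrable_re_cpow _ _ x)).const_mul _
  have iQ : ∀ i k, IntegrableOn (Q i k) (Ioi x) := fun i k =>
    ((integrableOn_re_cpow _ _ x0).add (integrableOn_re_cpow _ _ x0)).const_mul _
  have hPg : ∀ y, 0 < y → ∑ i ∈ S, ∑ k ∈ S, P i k y = y * g y ^ 2 := fun y hy => by
    have := rpow_mul_sq_sum_re c γ S hy 1
    rw [Real.rpow_one] at this
    rw [this]; simp [hP]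
  have hQg : ∀ y, 0 < y → ∑ i ∈ S, ∑ k ∈ S, Q i k y = y ^ (-3 : ℝ) * g y ^ 2 := fun y hy => by
    have := rpow_mul_sq_sum_re c γ S hy (-3)
    rw [this]; simp [hQ]
  have iPs : IntervalIntegrable (fun y => ∑ i ∈ S, ∑ k ∈ S, P i k y) volume 0 x := by
    have := IntervalIntegrable.sum S fun i _ => IntervalIntegrable.sum S fun k _ => iP i k
    refine this.congr_ae (ae_of_all _ fun y => ?_)
    simp only [Finset.sum_apply]
  have h1 : ∫ y in (1 : ℝ)..x, (∑ i ∈ S, (c i * (y : ℂ) ^ (1 / 2 + γ i * Complex.I : ℂ)).re) ^ 2 =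
      ∫ y in (1 : ℝ)..x, ∑ i ∈ S, ∑ k ∈ S, P i k y := by
    refine intervalIntegral.integral_congr fun y hy => ?_
    rw [uIcc_of_le hx] at hy
    have hy0 : 0 < y := by linarith [hy.1]
    have yc : (y : ℂ) ≠ 0 := by exact_mod_cast hy0.ne'
    rw [hPg y hy0]
    have : ∑ i ∈ S, (c i * (y : ℂ) ^ (1 / 2 + γ i * Complex.I : ℂ)).re = y ^ (1 / 2 : ℝ) * g y := by
      rw [hg, Finset.mul_sum]
      refine Finset.sum_congr rfl fun i _ => ?_
      rw [Complex.cpow_add _ _ yc, ← Complex.re_ofReal_mul, Complex.ofReal_cpow hy0.le]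
      push_cast
      congr 1; ring
    rw [this, mul_pow, ← Real.rpow_natCast, ← Real.rpow_mul hy0.le]
    norm_num
  have h2 : ∫ y in (1 : ℝ)..x, ∑ i ∈ S, ∑ k ∈ S, P i k y ≤
      ∫ y in (0 : ℝ)..x, ∑ i ∈ S, ∑ k ∈ S, P i k y := by
    refine intervalIntegral.integral_mono_interval zero_le_one hx le_rfl ?_ iPs
    refine (ae_restrict_iff' measurableSet_Ioc).2 (ae_of_all _ fun y hy => ?_)
    exact le_of_le_of_eq (mul_nonneg hy.1.le (sq_nonneg _)) (hPg y hy.1).symm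
  have h3 : 0 ≤ ∫ y in Ioi x, ∑ i ∈ S, ∑ k ∈ S, Q i k y := by
    refine setIntegral_nonneg measurableSet_Ioi fun y hy => ?_
    have hy0 : 0 < y := x0.trans hy
    refine le_of_le_of_eq ?_ (hQg y hy0).symm
    positivity
  have h4 : ∫ y in (0 : ℝ)..x, ∑ i ∈ S, ∑ k ∈ S, P i k y =
      ∑ i ∈ S, ∑ k ∈ S, ∫ y in (0 : ℝ)..x, P i k y := by
    rw [intervalIntegral.integral_finsetSum (f := fun i y => ∑ k ∈ S, P i k y)]
    · exact Finset.sum_congr rfl fun i _ => intervalIntegral.integral_finsetSum fun k _ => iP i k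
    · intro i _
      refine (IntervalIntegrable.sum S fun k _ => iP i k).congr_ae (ae_of_all _ fun y => ?_)
      simp only [Finset.sum_apply]
  have h5 : ∫ y in Ioi x, ∑ i ∈ S, ∑ k ∈ S, Q i k y =
      ∑ i ∈ S, ∑ k ∈ S, ∫ y in Ioi x, Q i k y := by
    rw [integral_finsetSum (f := fun i y => ∑ k ∈ S, Q i k y)]
    · exact Finset.sum_congr rfl fun i _ => integral_finsetSum _ fun k _ => iQ i k
    · intro i _
      exact integrable_finsetSum _ fun k _ => iQ i k
  have h6 : ∀ i k, (∫ y in (0 : ℝ)..x, P i k y) + x ^ 4 * ∫ y in Ioi x, Q i k y ≤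
      x ^ 2 * ((1 / 2 * ‖c i‖ ^ 2 + 1 / 2 * ‖c k‖ ^ 2) * zeroKernel (γ i) (γ k)) := fun i k => by
    have a1 := two_sided_re_cpow_le x0 (c i * (starRingEnd ℂ) (c k)) (γ i - γ k)
    have a2 := two_sided_re_cpow_le x0 (c i * c k) (γ i + γ k)
    rw [hP, hQ]
    simp only
    rw [intervalIntegral.integral_const_mul, integral_const_mul,
      intervalIntegral.integral_add (intervalIntegrable_re_cpow _ _ x) (intervalIntegrable_re_cpow _ _ x),
      integral_add (integrableOn_re_cpow _ _ x0) (integrableOn_re_cpow _ _ x0)]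
    rw [norm_mul, RCLike.norm_conj] at a1
    rw [norm_mul] at a2
    have a3 : x ^ 2 * (‖c i‖ * ‖c k‖ * zeroKernel (γ i) (γ k)) ≤
      x ^ 2 * ((1 / 2 * ‖c i‖ ^ 2 + 1 / 2 * ‖c k‖ ^ 2) * zeroKernel (γ i) (γ k)) := by
      have := zeroKernel_nonneg (γ i) (γ k)
      gcongr
      nlinarith [sq_nonneg (‖c i‖ - ‖c k‖)]
    refine le_trans ?_ a3
    have e : x ^ 2 * (‖c i‖ * ‖c k‖ * zeroKernel (γ i) (γ k)) = 1 / 2 *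
      (x ^ 2 * (‖c i‖ * ‖c k‖ * (4 / (4 + (γ i - γ k) ^ 2))) +
        x ^ 2 * (‖c i‖ * ‖c k‖ * (4 / (4 + (γ i + γ k) ^ 2)))) := by
      unfold zeroKernel; ring
    rw [e]
    linarith
  have h7 : ∑ i ∈ S, ∑ k ∈ S, (1 / 2 * ‖c i‖ ^ 2 + 1 / 2 * ‖c k‖ ^ 2) * zeroKernel (γ i) (γ k) =
      ∑ i ∈ S, ‖c i‖ ^ 2 * ∑ k ∈ S, zeroKernel (γ i) (γ k) := by
    have e1 : ∑ i ∈ S, ∑ k ∈ S, 1 / 2 * ‖c k‖ ^ 2 * zeroKernel (γ i) (γ k) =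
        ∑ i ∈ S, ∑ k ∈ S, 1 / 2 * ‖c i‖ ^ 2 * zeroKernel (γ i) (γ k) := by
      rw [Finset.sum_comm]
      exact Finset.sum_congr rfl fun i _ => Finset.sum_congr rfl fun k _ => by rw [zeroKernel_comm]
    simp only [add_mul, Finset.sum_add_distrib]
    rw [e1, ← Finset.sum_add_distrib]
    refine Finset.sum_congr rfl fun i _ => ?_
    rw [← Finset.sum_add_distrib, Finset.mul_sum]
    exact Finset.sum_congr rfl fun k _ => by ring
  rw [h1, ← h7]
  refine h2.trans ?_
  have h8 : (∫ y in (0 : ℝ)..x, ∑ i ∈ S, ∑ k ∈ S, P i k y) ≤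
      (∫ y in (0 : ℝ)..x, ∑ i ∈ S, ∑ k ∈ S, P i k y) +
        x ^ 4 * ∫ y in Ioi x, ∑ i ∈ S, ∑ k ∈ S, Q i k y :=
    le_add_of_nonneg_right (mul_nonneg (by positivity) h3)
  refine h8.trans ?_
  rw [h4, h5, Finset.mul_sum, ← Finset.sum_add_distrib, Finset.mul_sum]
  refine Finset.sum_le_sum fun i _ => ?_
  rw [Finset.mul_sum, ← Finset.sum_add_distrib, Finset.mul_sum]
  exact Finset.sum_le_sum fun k _ => h6 i k

theorem integral_sq_le_of_hasSum [Countable ι] (hc : Summable fun i => ‖c i‖) {D : ℝ}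
    (hD : ∀ S : Finset ι, ∑ i ∈ S, ‖c i‖ ^ 2 * ∑ k ∈ S, zeroKernel (γ i) (γ k) ≤ D)
    {x : ℝ} (hx : 1 ≤ x) {f : ℝ → ℝ}
    (hf : ∀ y : ℝ, 1 < y → HasSum (fun i => (c i * (y : ℂ) ^ (1 / 2 + γ i * Complex.I : ℂ)).re) (f y)) :
    ∫ y in (1 : ℝ)..x, f y ^ 2 ≤ x ^ 2 * D := by
  have lim : Tendsto (fun S : Finset ι =>
      ∫ y in (1 : ℝ)..x, (∑ i ∈ S, (c i * (y : ℂ) ^ (1 / 2 + γ i * Complex.I : ℂ)).re) ^ 2) atTop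
      (𝓝 (∫ y in (1 : ℝ)..x, f y ^ 2)) := by
    refine intervalIntegral.tendsto_integral_filter_of_dominated_convergence
      (fun _ => (∑' i, ‖c i‖ * x ^ (1 / 2 : ℝ)) ^ 2) (Eventually.of_forall fun S => ?_)
      (Eventually.of_forall fun S => ae_of_all _ fun y hy => ?_) intervalIntegrable_const
      (ae_of_all _ fun y hy => ?_)
    · refine ContinuousOn.aestronglyMeasurable (fun y hy => ?_) measurableSet_uIoc
      rw [uIoc_of_le hx] at hy
      have hy0 : 0 < y := by linarith [hy.1]
      refine ContinuousAt.continuousWithinAt ?_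
      refine (tendsto_finsetSum _ fun i _ => ?_).pow 2
      exact Complex.continuous_re.continuousAt.comp (continuousAt_const.mul
        (Complex.continuousAt_ofReal_cpow_const _ _ (Or.inr hy0.ne')))
    · rw [uIoc_of_le hx] at hy
      have hy0 : 0 < y := by linarith [hy.1]
      rw [norm_pow]
      gcongr
      refine (norm_sum_le _ _).trans ?_
      refine le_trans (Finset.sum_le_sum fun i _ => ?_)
        ((hc.mul_right (x ^ (1 / 2 : ℝ))).sum_le_tsum S fun i _ => by positivity)
      refine (Complex.abs_re_le_norm _).trans ?_
      rw [norm_mul, Complex.norm_cpow_eq_rpow_re_of_pos hy0]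
      gcongr
      simp only [Complex.add_re, Complex.mul_re, Complex.ofReal_re, Complex.ofReal_im, Complex.I_re,
        Complex.I_im]
      norm_num
      exact Real.rpow_le_rpow hy0.le hy.2 (by norm_num)
    · rw [uIoc_of_le hx] at hy
      exact (hf y hy.1).pow 2
  refine le_of_tendsto' lim fun S => (integral_sq_finset_sum_le c γ S hx).trans ?_
  gcongr
  exact hD S

end QuadraticForm

theorem norm_cpow_sub_one_div_le {a C : ℝ} (ha : 1 ≤ a) {s : ℂ} (hs : 0 < s.re)
    (hC : ∀ u, 1 < u → u ≤ a → u ^ (s.re - 1) ≤ C) :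
    ‖((a : ℂ) ^ s - 1) / s‖ ≤ C * (a - 1) := by
  have h := integral_cpow (a := 1) (b := a) (r := s - 1) (Or.inl (by simpa using hs))
  rw [sub_add_cancel, Complex.ofReal_one, Complex.one_cpow] at h
  rw [← h]
  have := intervalIntegral.norm_integral_le_of_norm_le_const (a := 1) (b := a) (C := C)
    (f := fun u : ℝ => (u : ℂ) ^ (s - 1)) (fun u hu => by
      rw [uIoc_of_le ha] at hu
      rw [Complex.norm_cpow_eq_rpow_re_of_pos (by linarith [hu.1])]
      exact hC u hu.1 hu.2)
  rwa [abs_of_nonneg (by linarith)] at this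

theorem norm_cpow_sub_one_div_le_div {a m : ℝ} (ha : 1 ≤ a) {s : ℂ} (n : ℕ)
    (hsn : s.re ≤ n) (hm : 0 < m) (hms : m ≤ ‖s‖) :
    ‖((a : ℂ) ^ s - 1) / s‖ ≤ (a ^ n + 1) / m := by
  rw [norm_div]
  gcongr
  refine (norm_sub_le _ _).trans ?_
  rw [norm_one, Complex.norm_cpow_eq_rpow_re_of_pos (by linarith), ← Real.rpow_natCast]
  gcongr

theorem sq_norm_zeroCoeff_le {a b δ γ : ℝ} (ha : 1 ≤ a) (haδ : a - 1 ≤ δ) (hδ : 0 < δ) (hb : 1 ≤ b) :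
    ‖zeroCoeff a b γ‖ ^ 2 ≤
      2 * (2 + δ) ^ 2 / ((2 / δ + 1) ^ 2 + γ ^ 2) * ((b - 1) ^ 2 * b) := by
  have hre1 : (1 / 2 + γ * Complex.I : ℂ).re = 1 / 2 := by simp
  have hre2 : (3 / 2 + γ * Complex.I : ℂ).re = 3 / 2 := by simp
  rw [zeroCoeff, norm_mul, mul_pow]
  have hB : ‖((b : ℂ) ^ (3 / 2 + γ * Complex.I : ℂ) - 1) / (3 / 2 + γ * Complex.I)‖ ^ 2 ≤
      (b - 1) ^ 2 * b := by
    have := norm_cpow_sub_one_div_le (C := b ^ (1 / 2 : ℝ)) hb (s := 3 / 2 + γ * Complex.I)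
      (by rw [hre2]; norm_num) (fun u h1 h2 => by
        rw [hre2]; norm_num
        exact Real.rpow_le_rpow (by linarith) h2 (by norm_num))
    refine (pow_le_pow_left₀ (norm_nonneg _) this 2).trans_eq ?_
    rw [mul_pow, ← Real.sqrt_eq_rpow, Real.sq_sqrt (by linarith)]; ring
  have hA1 : ‖((a : ℂ) ^ (1 / 2 + γ * Complex.I : ℂ) - 1) / (1 / 2 + γ * Complex.I)‖ ≤ δ := by
    have := norm_cpow_sub_one_div_le (C := 1) ha (s := 1 / 2 + γ * Complex.I)
      (by rw [hre1]; norm_num) (fun u h1 h2 => by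
        rw [hre1]
        exact Real.rpow_le_one_of_one_le_of_nonpos h1.le (by norm_num))
    linarith
  have hA2 : ‖((a : ℂ) ^ (1 / 2 + γ * Complex.I : ℂ) - 1) / (1 / 2 + γ * Complex.I)‖ * |γ| ≤ 2 + δ := by
    rcases eq_or_ne γ 0 with rfl | hγ
    · simp; linarith
    have hg : 0 < |γ| := abs_pos.2 hγ
    have := norm_cpow_sub_one_div_le_div ha (s := 1 / 2 + γ * Complex.I)
      1 (by rw [hre1]; norm_num) hg
      (by simpa using Complex.abs_im_le_norm (1 / 2 + γ * Complex.I))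
    rw [le_div_iff₀ hg] at this
    linarith
  have hA : ‖((a : ℂ) ^ (1 / 2 + γ * Complex.I : ℂ) - 1) / (1 / 2 + γ * Complex.I)‖ ^ 2 ≤
      2 * (2 + δ) ^ 2 / ((2 / δ + 1) ^ 2 + γ ^ 2) := by
    have hw := norm_nonneg (((a : ℂ) ^ (1 / 2 + γ * Complex.I : ℂ) - 1) / (1 / 2 + γ * Complex.I))
    generalize ‖((a : ℂ) ^ (1 / 2 + γ * Complex.I : ℂ) - 1) / (1 / 2 + γ * Complex.I)‖ = w at *
    rw [le_div_iff₀ (by positivity)]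
    have e1 : w ^ 2 * (2 / δ + 1) ^ 2 ≤ (2 + δ) ^ 2 := by
      have : w * (2 / δ + 1) ≤ 2 + δ := by
        calc w * (2 / δ + 1) ≤ δ * (2 / δ + 1) := by gcongr
          _ = 2 + δ := by field_simp
      rw [← mul_pow]
      gcongr
    have e2 : w ^ 2 * γ ^ 2 ≤ (2 + δ) ^ 2 := by
      rw [← sq_abs γ, ← mul_pow]
      gcongr
    linarith
  gcongr

theorem summable_norm_zeroCoeff {ι : Type} {γ : ι → ℝ}
    (H : ∀ w : ℂ, 0 < w.re →
      HasSum (fun i => w / (w ^ 2 + (γ i : ℂ) ^ 2)) (logDeriv entireXi (1 / 2 + w)))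
    {a b : ℝ} (ha : 1 ≤ a) (hb : 1 ≤ b) : Summable fun i => ‖zeroCoeff a b (γ i)‖ := by
  refine Summable.of_nonneg_of_le (fun _ => norm_nonneg _) (fun i => ?_)
    ((hasSum_div_sq_add_sq H (by norm_num : (0 : ℝ) < 1 / 2)).summable.mul_left
      (2 * ((a ^ 1 + 1) * (b ^ 2 + 1))))
  have hre1 : (1 / 2 + γ i * Complex.I : ℂ).re = 1 / 2 := by simp
  have hre2 : (3 / 2 + γ i * Complex.I : ℂ).re = 3 / 2 := by simp
  have m0 : 0 < √((1 / 2) ^ 2 + γ i ^ 2) := by positivity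
  have h1 := norm_cpow_sub_one_div_le_div ha (s := 1 / 2 + γ i * Complex.I)
      1 (by rw [hre1]; norm_num) m0
      (by
        rw [Complex.norm_eq_sqrt_sq_add_sq]
        simp)
  have h2 := norm_cpow_sub_one_div_le_div hb (s := 3 / 2 + γ i * Complex.I)
      2 (by rw [hre2]; norm_num) m0
      (by
        rw [Complex.norm_eq_sqrt_sq_add_sq]
        refine Real.sqrt_le_sqrt ?_
        simp
        norm_num)
  rw [zeroCoeff, norm_mul]
  refine (mul_le_mul h1 h2 (norm_nonneg _) (by positivity)).trans_eq ?_
  have := Real.sq_sqrt (by positivity : 0 ≤ (1 / 2) ^ 2 + γ i ^ 2)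
  rw [div_mul_div_comm, ← sq, this]
  ring

theorem sum_log_one_add_div_le {ι : Type} {γ : ι → ℝ} {A : ℝ} (hA : 1 ≤ A)
    (hX : ∀ r, A ≤ r → ∀ S : Finset ι, ∑ i ∈ S, 1 / (r ^ 2 + γ i ^ 2) ≤ 1 / 2 * Real.log r / r)
    (S : Finset ι) :
    ∑ i ∈ S, 1 / 2 * Real.log (1 + γ i ^ 2 / A ^ 2) / (A ^ 2 + γ i ^ 2) ≤
      (Real.log A + 1) / (2 * A) := by
  have A0 : 0 < A := by linarith
  set G : ℝ → ℝ := fun r => (Real.log r + 1) / r - ∑ i ∈ S, Real.log (1 + γ i ^ 2 / r ^ 2) / γ i ^ 2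
    with hG
  set G' : ℝ → ℝ := fun r => -(Real.log r / r ^ 2) +
    ∑ i ∈ S, (2 / r * (γ i ^ 2 / (r ^ 2 + γ i ^ 2))) / γ i ^ 2 with hG'
  have hd : ∀ r, 0 < r → HasDerivAt G (G' r) r := by
    intro r hr
    have h1 : HasDerivAt (fun r => (Real.log r + 1) / r) (-(Real.log r / r ^ 2)) r := by
      refine (((Real.hasDerivAt_log hr.ne').add_const 1).fun_div (hasDerivAt_id' r) hr.ne').congr_deriv ?_
      field_simp; ring
    have h2 : ∀ i ∈ S, HasDerivAt (fun r => Real.log (1 + γ i ^ 2 / r ^ 2) / γ i ^ 2)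
        (-(2 / r * (γ i ^ 2 / (r ^ 2 + γ i ^ 2))) / γ i ^ 2) r := by
      intro i _
      refine HasDerivAt.div_const ?_ _
      have h3 : HasDerivAt (fun r : ℝ => 1 + γ i ^ 2 / r ^ 2) (-(2 * γ i ^ 2 / r ^ 3)) r := by
        refine (((hasDerivAt_const r (γ i ^ 2)).fun_div (hasDerivAt_pow 2 r)
          (by positivity)).const_add 1).congr_deriv ?_
        push_cast; field_simp; ring
      have h5 : 1 + γ i ^ 2 / r ^ 2 ≠ 0 := by positivity
      refine (h3.log h5).congr_deriv ?_
      have h4 : r ^ 2 + γ i ^ 2 ≠ 0 := by positivity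
      field_simp
    refine (h1.fun_sub (HasDerivAt.fun_sum h2)).congr_deriv ?_
    simp only [hG', neg_div, Finset.sum_neg_distrib, sub_neg_eq_add]
  have hanti : AntitoneOn G (Ici A) := by
    refine antitoneOn_of_deriv_nonpos (convex_Ici A)
      (fun r hr => (hd r (A0.trans_le hr)).continuousAt.continuousWithinAt)
      (fun r hr => ?_) fun r hr => ?_
    · rw [interior_Ici] at hr
      exact (hd r (A0.trans hr)).differentiableAt.differentiableWithinAt
    · rw [interior_Ici] at hr
      have hr0 : 0 < r := A0.trans hr
      rw [(hd r hr0).deriv]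
      have h1 : ∑ i ∈ S, (2 / r * (γ i ^ 2 / (r ^ 2 + γ i ^ 2))) / γ i ^ 2 ≤
          2 / r * ∑ i ∈ S, 1 / (r ^ 2 + γ i ^ 2) := by
        rw [Finset.mul_sum]
        refine Finset.sum_le_sum fun i _ => ?_
        rcases eq_or_ne (γ i) 0 with h | h
        · rw [h]; simp; positivity
        · have h4 : r ^ 2 + γ i ^ 2 ≠ 0 := by positivity
          refine le_of_eq ?_
          field_simp
      have h2 := mul_le_mul_of_nonneg_left (hX r (le_of_lt hr) S) (by positivity : 0 ≤ 2 / r)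
      have h3 : 2 / r * (1 / 2 * Real.log r / r) = Real.log r / r ^ 2 := by field_simp
      simp only [hG']
      linarith
  have hlim : Tendsto G atTop (𝓝 0) := by
    have l1 : Tendsto (fun r : ℝ => (Real.log r + 1) / r) atTop (𝓝 0) := by
      have := (Real.isLittleO_log_id_atTop.tendsto_div_nhds_zero).add tendsto_inv_atTop_zero
      rw [add_zero] at this
      refine this.congr fun r => ?_
      simp only [id]; ring
    have l2 : Tendsto (fun r : ℝ => ∑ i ∈ S, Real.log (1 + γ i ^ 2 / r ^ 2) / γ i ^ 2) atTop
        (𝓝 (∑ i ∈ S, 0)) := by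
      refine tendsto_finsetSum _ fun i _ => ?_
      have l3 : Tendsto (fun r : ℝ => 1 + γ i ^ 2 / r ^ 2) atTop (𝓝 (1 + 0)) :=
        ((tendsto_const_nhds).div_atTop (tendsto_pow_atTop two_ne_zero)).const_add 1
      have := ((Real.continuousAt_log (by norm_num : (1 + 0 : ℝ) ≠ 0)).tendsto.comp l3).div_const
        (γ i ^ 2)
      simpa using this
    simpa using l1.sub l2
  have hpos : 0 ≤ G A := by
    refine le_of_tendsto hlim ?_
    filter_upwards [eventually_ge_atTop A] with r hr
    exact hanti self_mem_Ici hr hr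
  have h1 : ∑ i ∈ S, 1 / 2 * Real.log (1 + γ i ^ 2 / A ^ 2) / (A ^ 2 + γ i ^ 2) ≤
      1 / 2 * ∑ i ∈ S, Real.log (1 + γ i ^ 2 / A ^ 2) / γ i ^ 2 := by
    rw [Finset.mul_sum]
    refine Finset.sum_le_sum fun i _ => ?_
    rcases eq_or_ne (γ i) 0 with h | h
    · rw [h]; simp
    · have : 0 ≤ Real.log (1 + γ i ^ 2 / A ^ 2) := Real.log_nonneg (by
        have : 0 ≤ γ i ^ 2 / A ^ 2 := by positivity
        linarith)
      rw [mul_div_assoc]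
      gcongr
      nlinarith [sq_nonneg A]
  simp only [hG] at hpos
  have h2 : (Real.log A + 1) / (2 * A) = 1 / 2 * ((Real.log A + 1) / A) := by field_simp
  rw [h2]
  linarith

/-- The quadratic form in the zeros is bounded by this quantity times `x ^ 2`. -/
noncomputable def zeroEnergy (δ : ℝ) : ℝ :=
  δ * (2 + δ) * (Real.log (2 / δ + 1) ^ 2 + 2.22 * Real.log (2 / δ + 1) + 1)

theorem sum_sq_zeroCoeff_mul_le {ι : Type} {γ : ι → ℝ}
    (H : ∀ w : ℂ, 0 < w.re →
      HasSum (fun i => w / (w ^ 2 + (γ i : ℂ) ^ 2)) (logDeriv entireXi (1 / 2 + w)))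
    {a b δ : ℝ} (ha : 1 ≤ a) (haδ : a - 1 ≤ δ) (hδ : 0 < δ) (hδ1 : δ ≤ 1 / 10) (hb : 1 ≤ b)
    (S : Finset ι) :
    ∑ i ∈ S, ‖zeroCoeff a b (γ i)‖ ^ 2 * ∑ k ∈ S, zeroKernel (γ i) (γ k) ≤
      (b - 1) ^ 2 * b * zeroEnergy δ := by
  set A := 2 / δ + 1 with hA
  have hA20 : 20 ≤ A := by
    have : 20 ≤ 2 / δ := by rw [le_div_iff₀ hδ]; linarith
    linarith
  have A0 : 0 < A := by linarith
  have hl : 0 ≤ Real.log A := Real.log_nonneg (by linarith)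
  have hX : ∀ r, A ≤ r → ∀ S : Finset ι, ∑ i ∈ S, 1 / (r ^ 2 + γ i ^ 2) ≤ 1 / 2 * Real.log r / r := by
    intro r hr S
    have r0 : 0 < r := A0.trans_le hr
    rw [le_div_iff₀ r0, Finset.sum_mul]
    refine le_trans ?_ (tsum_div_sq_add_sq_le H (hA20.trans hr))
    refine le_trans (le_of_eq ?_)
      ((hasSum_div_sq_add_sq H r0).summable.sum_le_tsum S fun i _ => by positivity)
    exact Finset.sum_congr rfl fun i _ => by ring
  have hker : ∀ i, ∑ k ∈ S, zeroKernel (γ i) (γ k) ≤ 1 / 2 * Real.log (A ^ 2 + γ i ^ 2) + 1.22 := by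
    intro i
    refine le_trans ?_ (tsum_two_div_four_add_le H (by linarith) (γ i))
    exact (hasSum_two_div_four_add H (γ i)).summable.sum_le_tsum S fun k _ => zeroKernel_nonneg _ _
  have hlog : ∀ i, 1 / 2 * Real.log (A ^ 2 + γ i ^ 2) =
      Real.log A + 1 / 2 * Real.log (1 + γ i ^ 2 / A ^ 2) := by
    intro i
    have : A ^ 2 + γ i ^ 2 = A ^ 2 * (1 + γ i ^ 2 / A ^ 2) := by field_simp
    rw [this, Real.log_mul (by positivity) (by positivity), Real.log_pow]
    push_cast; ring
  have hterm : ∀ i ∈ S, ‖zeroCoeff a b (γ i)‖ ^ 2 * ∑ k ∈ S, zeroKernel (γ i) (γ k) ≤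
      (b - 1) ^ 2 * b * (2 * (2 + δ) ^ 2) * ((Real.log A + 1.22) * (1 / (A ^ 2 + γ i ^ 2)) +
        1 / 2 * Real.log (1 + γ i ^ 2 / A ^ 2) / (A ^ 2 + γ i ^ 2)) := by
    intro i _
    refine (mul_le_mul (sq_norm_zeroCoeff_le ha haδ hδ hb) (hker i)
      (Finset.sum_nonneg fun k _ => zeroKernel_nonneg _ _) (by positivity)).trans_eq ?_
    rw [hlog, ← hA]
    ring
  refine (Finset.sum_le_sum hterm).trans ?_
  rw [← Finset.mul_sum, Finset.sum_add_distrib, ← Finset.mul_sum]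
  have h1 := hX A le_rfl S
  have h2 := sum_log_one_add_div_le (by linarith) hX S
  calc (b - 1) ^ 2 * b * (2 * (2 + δ) ^ 2) * ((Real.log A + 1.22) * ∑ i ∈ S, 1 / (A ^ 2 + γ i ^ 2) +
        ∑ i ∈ S, 1 / 2 * Real.log (1 + γ i ^ 2 / A ^ 2) / (A ^ 2 + γ i ^ 2))
      ≤ (b - 1) ^ 2 * b * (2 * (2 + δ) ^ 2) * ((Real.log A + 1.22) * (1 / 2 * Real.log A / A) +
        (Real.log A + 1) / (2 * A)) := by gcongr
    _ = (b - 1) ^ 2 * b * zeroEnergy δ := by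
      have hAδ : A * δ = 2 + δ := by rw [hA]; field_simp
      rw [zeroEnergy, ← hA, ← hAδ]
      field_simp
      ring

theorem integral_sq_zeroSum_le {ι : Type} {γ : ι → ℝ}
    (H : ∀ w : ℂ, 0 < w.re →
      HasSum (fun i => w / (w ^ 2 + (γ i : ℂ) ^ 2)) (logDeriv entireXi (1 / 2 + w)))
    {a b δ : ℝ} (ha : 1 ≤ a) (haδ : a - 1 ≤ δ) (hδ : 0 < δ) (hδ1 : δ ≤ 1 / 10) (hb : 1 ≤ b)
    {x : ℝ} (hx : 1 ≤ x) {f : ℝ → ℝ}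
    (hf : ∀ y : ℝ, 1 < y → HasSum (fun i =>
      (zeroCoeff a b (γ i) * (y : ℂ) ^ (1 / 2 + γ i * Complex.I : ℂ)).re) (f y)) :
    ∫ y in (1 : ℝ)..x, f y ^ 2 ≤ x ^ 2 * ((b - 1) ^ 2 * b * zeroEnergy δ) := by
  have := countable_of_hasSum H
  exact integral_sq_le_of_hasSum _ _ (summable_norm_zeroCoeff H ha hb)
    (sum_sq_zeroCoeff_mul_le H ha haδ hδ hδ1 hb) hx hf

/-- The increment of `ψ` over `[u, a u]`, centred at its expected size. -/
noncomputable def psiIncrement (a u : ℝ) : ℝ := Chebyshev.psi (a * u) - Chebyshev.psi u - (a - 1) * u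

theorem continuousWithinAt_psi_Ici (y : ℝ) :
    ContinuousWithinAt Chebyshev.psi (Ici y) y := by
  have h := tendsto_floor_right_pure_floor y
  rw [tendsto_pure] at h
  refine (continuousWithinAt_const (b := Chebyshev.psi y)).congr_of_eventuallyEq ?_ rfl
  filter_upwards [h] with u hu
  rw [Chebyshev.psi_eq_psi_coe_floor u, Chebyshev.psi_eq_psi_coe_floor y, ← Int.floor_toNat,
    ← Int.floor_toNat, hu]

theorem continuousWithinAt_psiIncrement {a : ℝ} (ha : 0 ≤ a) (y : ℝ) :
    ContinuousWithinAt (psiIncrement a) (Ici y) y := by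
  refine ContinuousWithinAt.sub (ContinuousWithinAt.sub ?_ (continuousWithinAt_psi_Ici y))
    (by fun_prop)
  refine ContinuousWithinAt.comp (t := Ici (a * y)) (f := fun u => a * u) (g := Chebyshev.psi)
    (continuousWithinAt_psi_Ici (a * y)) (by fun_prop) fun u hu => ?_
  exact mul_le_mul_of_nonneg_left hu ha

theorem intervalIntegrable_psiIncrement {a : ℝ} (ha : 0 ≤ a) (p q : ℝ) :
    IntervalIntegrable (psiIncrement a) volume p q :=
  ((intervalIntegrable_psi_comp_mul ha p q).sub Chebyshev.psi_mono.intervalIntegrable).sub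
    ((continuous_const.mul continuous_id).intervalIntegrable _ _)

theorem abs_psiIncrement_le {a u v : ℝ} (ha : 1 ≤ a) (hu : 0 ≤ u) (huv : u ≤ v) :
    |psiIncrement a u| ≤ Chebyshev.psi (a * v) + (a - 1) * v := by
  have h1 : Chebyshev.psi u ≤ Chebyshev.psi (a * u) :=
    Chebyshev.psi_mono (le_mul_of_one_le_left hu ha)
  have h2 : Chebyshev.psi (a * u) ≤ Chebyshev.psi (a * v) := Chebyshev.psi_mono (by gcongr)
  have h3 := Chebyshev.psi_nonneg u
  have h4 : 0 ≤ (a - 1) * u := mul_nonneg (by linarith) hu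
  have h5 : (a - 1) * u ≤ (a - 1) * v := mul_le_mul_of_nonneg_left huv (by linarith)
  rw [psiIncrement, abs_le]
  constructor <;> linarith

/-- The average of `psiIncrement a` over `[y, b y]`. -/
noncomputable def smoothedIncrement (a b y : ℝ) : ℝ :=
  ((b - 1) * y)⁻¹ * ∫ u in y..b * y, psiIncrement a u

theorem continuousOn_smoothedIncrement {a b : ℝ} (ha : 0 ≤ a) (hb : 1 < b) :
    ContinuousOn (smoothedIncrement a b) (Ioi 0) := by
  have hP : Continuous fun y => ∫ u in (0 : ℝ)..y, psiIncrement a u :=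
    intervalIntegral.continuous_primitive (intervalIntegrable_psiIncrement ha) 0
  have he : ∀ y, ∫ u in y..b * y, psiIncrement a u =
      (∫ u in (0 : ℝ)..b * y, psiIncrement a u) - ∫ u in (0 : ℝ)..y, psiIncrement a u := fun y =>
    (intervalIntegral.integral_interval_sub_left (intervalIntegrable_psiIncrement ha _ _)
      (intervalIntegrable_psiIncrement ha _ _)).symm
  refine ContinuousOn.mul (ContinuousOn.inv₀ (by fun_prop) fun y hy => ?_) ?_
  · have : 0 < y := hy
    have : 0 < b - 1 := by linarith
    positivity
  · simp only [he]
    exact ((hP.comp (continuous_const.mul continuous_id)).sub hP).continuousOn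

theorem abs_smoothedIncrement_le {a b y x : ℝ} (ha : 1 ≤ a) (hb : 1 < b) (hb2 : b ≤ 2) (hy : 0 < y)
    (hyx : y ≤ x) :
    |smoothedIncrement a b y| ≤ Chebyshev.psi (a * (2 * x)) + (a - 1) * (2 * x) := by
  have h0 : 0 < (b - 1) * y := mul_pos (by linarith) hy
  have hyb : y ≤ b * y := le_mul_of_one_le_left hy.le hb.le
  have := intervalIntegral.norm_integral_le_of_norm_le_const (a := y) (b := b * y)
    (f := psiIncrement a) (C := Chebyshev.psi (a * (2 * x)) + (a - 1) * (2 * x)) fun u hu => by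
      rw [uIoc_of_le hyb] at hu
      exact abs_psiIncrement_le ha (hy.le.trans hu.1.le) (hu.2.trans (by gcongr))
  rw [smoothedIncrement, abs_mul, abs_of_pos (inv_pos.2 h0), inv_mul_le_iff₀ h0]
  rw [abs_of_nonneg (by linarith), Real.norm_eq_abs] at this
  linarith

theorem tendsto_smoothedIncrement {a y : ℝ} (ha : 0 ≤ a) (hy : 0 < y) :
    Tendsto (fun n : ℕ => smoothedIncrement a (1 + 1 / ((n : ℝ) + 1)) y) atTop
      (𝓝 (psiIncrement a y)) := by
  have hm : Measurable (psiIncrement a) :=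
    ((Chebyshev.psi_mono.measurable.comp (measurable_const_mul a)).sub
      Chebyshev.psi_mono.measurable).sub (measurable_const_mul (a - 1))
  have hd : HasDerivWithinAt (fun v => ∫ u in y..v, psiIncrement a u) (psiIncrement a y) (Ici y) y :=
    intervalIntegral.integral_hasDerivWithinAt_right (t := Ioi y)
      (intervalIntegrable_psiIncrement ha _ _) hm.stronglyMeasurable.stronglyMeasurableAtFilter
      ((continuousWithinAt_psiIncrement ha y).mono Ioi_subset_Ici_self)
  have hlim : Tendsto (fun n : ℕ => (1 + 1 / ((n : ℝ) + 1)) * y) atTop (𝓝[>] y) := by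
    refine tendsto_nhdsWithin_iff.2 ⟨?_, Eventually.of_forall fun n => ?_⟩
    · have := (tendsto_one_div_add_atTop_nhds_zero_nat (𝕜 := ℝ)).const_add 1
      simpa using this.mul_const y
    · have : 0 < 1 / ((n : ℝ) + 1) * y := by positivity
      rw [mem_Ioi, add_mul, one_mul]
      linarith
  rw [← hasDerivWithinAt_Ioi_iff_Ici, hasDerivWithinAt_iff_tendsto_slope' (by simp)] at hd
  refine (hd.comp hlim).congr fun n => ?_
  rw [Function.comp_apply, slope_def_field, intervalIntegral.integral_same, smoothedIncrement, sub_zero,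
    div_eq_inv_mul]
  ring_nf

theorem intervalIntegrable_sq_of_hasSum {ι : Type} (c : ι → ℂ) (γ : ι → ℝ) [Countable ι]
    (hc : Summable fun i => ‖c i‖) {x : ℝ} (hx : 1 ≤ x) {f : ℝ → ℝ}
    (hf : ∀ y : ℝ, 1 < y → HasSum (fun i => (c i * (y : ℂ) ^ (1 / 2 + γ i * Complex.I : ℂ)).re) (f y)) :
    IntervalIntegrable (fun y => f y ^ 2) volume 1 x := by
  have hb : ∀ y ∈ Ioc 1 x, ∀ i, ‖(c i * (y : ℂ) ^ (1 / 2 + γ i * Complex.I : ℂ)).re‖ ≤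
      ‖c i‖ * x ^ (1 / 2 : ℝ) := by
    intro y hy i
    have hy0 : 0 < y := by linarith [hy.1]
    refine (Complex.abs_re_le_norm _).trans ?_
    rw [norm_mul, Complex.norm_cpow_eq_rpow_re_of_pos hy0]
    gcongr
    simp only [Complex.add_re, Complex.mul_re, Complex.ofReal_re, Complex.ofReal_im, Complex.I_re,
      Complex.I_im]
    norm_num
    exact Real.rpow_le_rpow hy0.le hy.2 (by norm_num)
  have hmeas : AEStronglyMeasurable f (volume.restrict (Ioc 1 x)) := by
    refine aestronglyMeasurable_of_tendsto_ae (u := atTop) (f := fun (S : Finset ι) (y : ℝ) =>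
      ∑ i ∈ S, (c i * (y : ℂ) ^ (1 / 2 + γ i * Complex.I : ℂ)).re) (fun S => ?_) ?_
    · refine ContinuousOn.aestronglyMeasurable (fun y hy => ?_) measurableSet_Ioc
      have hy0 : 0 < y := by linarith [hy.1]
      refine ContinuousAt.continuousWithinAt (tendsto_finsetSum _ fun i _ => ?_)
      exact Complex.continuous_re.continuousAt.comp (continuousAt_const.mul
        (Complex.continuousAt_ofReal_cpow_const _ _ (Or.inr hy0.ne')))
    · exact (ae_restrict_iff' measurableSet_Ioc).2 (ae_of_all _ fun y hy => hf y hy.1)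
  rw [intervalIntegrable_iff_integrableOn_Ioc_of_le hx]
  refine Integrable.of_bound (hmeas.pow 2) ((∑' i, ‖c i‖ * x ^ (1 / 2 : ℝ)) ^ 2)
    ((ae_restrict_iff' measurableSet_Ioc).2 (ae_of_all _ fun y hy => ?_))
  rw [norm_pow]
  gcongr
  rw [← (hf y hy.1).tsum_eq]
  exact tsum_of_norm_bounded (hc.mul_right _).hasSum (hb y hy)

theorem integral_sq_smoothedIncrement_le {ι : Type} {γ : ι → ℝ}
    (H : ∀ w : ℂ, 0 < w.re →
      HasSum (fun i => w / (w ^ 2 + (γ i : ℂ) ^ 2)) (logDeriv entireXi (1 / 2 + w)))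
    {a b δ x : ℝ} (ha : 1 ≤ a) (haδ : a - 1 ≤ δ) (hδ : 0 < δ) (hδ1 : δ ≤ 1 / 10) (hb : 1 < b)
    (hx : 3 / 2 ≤ x) :
    ∫ y in (3 / 2 : ℝ)..x, smoothedIncrement a b y ^ 2 ≤
      1001 / 1000 * (x ^ 2 * (b * zeroEnergy δ)) + 1001 * δ ^ 2 * x := by
  have := countable_of_hasSum H
  have hb0 : 0 < b - 1 := by linarith
  set f : ℝ → ℝ := fun y => ∑' i, (zeroCoeff a b (γ i) * (y : ℂ) ^ (1 / 2 + γ i * Complex.I : ℂ)).re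
    with hf
  have hs : ∀ y : ℝ, 1 < y → HasSum (fun i =>
      (zeroCoeff a b (γ i) * (y : ℂ) ^ (1 / 2 + γ i * Complex.I : ℂ)).re) (f y) := by
    intro y hy
    obtain ⟨T, -, hT⟩ := hasSum_smoothed H ha hb.le hy
    have := hT.summable
    rw [summable_mul_left_iff (by linarith)] at this
    exact this.hasSum
  have hint := integral_sq_zeroSum_le H ha haδ hδ hδ1 hb.le (by linarith : 1 ≤ x) hs
  have hfi := intervalIntegrable_sq_of_hasSum _ _ (summable_norm_zeroCoeff H ha hb.le)
    (by linarith : 1 ≤ x) hs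
  have hfi2 : IntervalIntegrable (fun y => f y ^ 2) volume (3 / 2) x := by
    refine hfi.mono_set ?_
    rw [uIcc_of_le hx, uIcc_of_le (by linarith)]
    exact Icc_subset_Icc_left (by norm_num)
  have hpt : ∀ y ∈ Icc (3 / 2) x, smoothedIncrement a b y ^ 2 ≤
      1001 / 1000 * ((b - 1) ^ 2)⁻¹ * f y ^ 2 + 1001 * δ ^ 2 := by
    intro y hy
    have hy1 : 1 < y := by linarith [hy.1]
    have hy0 : 0 < y := by linarith
    obtain ⟨T, hTb, hT⟩ := hasSum_smoothed H ha hb.le hy1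
    have e1 : y * f y = T - ∫ u in y..b * y, psiIncrement a u := ((hs y hy1).mul_left y).unique hT
    have hT2 : |T / ((b - 1) * y)| ≤ δ := by
      rw [abs_div, abs_of_pos (mul_pos hb0 hy0), div_le_iff₀ (mul_pos hb0 hy0)]
      refine hTb.trans ?_
      have h1 : 1 ≤ y ^ 2 - 1 := by nlinarith [hy.1]
      have h2 : y / (y ^ 2 - 1) ≤ y := div_le_self hy0.le h1
      calc (a - 1) * (b - 1) * (y / (y ^ 2 - 1)) ≤ δ * (b - 1) * y := by gcongr
        _ = _ := by ring
    have e2 : smoothedIncrement a b y = T / ((b - 1) * y) - (b - 1)⁻¹ * f y := by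
      have : ∫ u in y..b * y, psiIncrement a u = T - y * f y := by linarith
      rw [smoothedIncrement, this]
      field_simp
    rw [e2]
    have h3 : (T / ((b - 1) * y)) ^ 2 ≤ δ ^ 2 := sq_le_sq' (abs_le.1 hT2).1 (abs_le.1 hT2).2
    have h4 : ∀ p q : ℝ, (p - q) ^ 2 ≤ 1001 / 1000 * q ^ 2 + 1001 * p ^ 2 := fun p q => by
      nlinarith [sq_nonneg (q + 1000 * p)]
    have h5 : ((b - 1)⁻¹ * f y) ^ 2 = ((b - 1) ^ 2)⁻¹ * f y ^ 2 := by rw [mul_pow, inv_pow]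
    have := h4 (T / ((b - 1) * y)) ((b - 1)⁻¹ * f y)
    rw [h5] at this
    linarith
  have hg : IntervalIntegrable (fun y => smoothedIncrement a b y ^ 2) volume (3 / 2) x := by
    refine ContinuousOn.intervalIntegrable (((continuousOn_smoothedIncrement (by linarith) hb).mono
      fun y hy => ?_).pow 2)
    rw [uIcc_of_le hx] at hy
    exact lt_of_lt_of_le (by norm_num) hy.1
  refine (intervalIntegral.integral_mono_on hx hg
    ((hfi2.const_mul _).add intervalIntegrable_const) hpt).trans ?_
  rw [intervalIntegral.integral_add (hfi2.const_mul _) intervalIntegrable_const,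
    intervalIntegral.integral_const_mul, intervalIntegral.integral_const]
  have h6 : ∫ y in (3 / 2 : ℝ)..x, f y ^ 2 ≤ ∫ y in (1 : ℝ)..x, f y ^ 2 :=
    intervalIntegral.integral_mono_interval (by norm_num) hx le_rfl
      (ae_of_all _ fun y => sq_nonneg _) hfi
  have h7 : 1001 / 1000 * ((b - 1) ^ 2)⁻¹ * ∫ y in (3 / 2 : ℝ)..x, f y ^ 2 ≤
      1001 / 1000 * ((b - 1) ^ 2)⁻¹ * (x ^ 2 * ((b - 1) ^ 2 * b * zeroEnergy δ)) := by
    gcongr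
    exact h6.trans hint
  have h8 : 1001 / 1000 * ((b - 1) ^ 2)⁻¹ * (x ^ 2 * ((b - 1) ^ 2 * b * zeroEnergy δ)) =
      1001 / 1000 * (x ^ 2 * (b * zeroEnergy δ)) := by field_simp
  have h9 : (x - 3 / 2) • (1001 * δ ^ 2) ≤ 1001 * δ ^ 2 * x := by
    rw [smul_eq_mul]; nlinarith [sq_nonneg δ]
  linarith

theorem integral_sq_psiIncrement_le {ι : Type} {γ : ι → ℝ}
    (H : ∀ w : ℂ, 0 < w.re →
      HasSum (fun i => w / (w ^ 2 + (γ i : ℂ) ^ 2)) (logDeriv entireXi (1 / 2 + w)))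
    {a δ x : ℝ} (ha : 1 ≤ a) (haδ : a - 1 ≤ δ) (hδ : 0 < δ) (hδ1 : δ ≤ 1 / 10) (hx : 3 / 2 ≤ x) :
    ∫ y in (1 : ℝ)..x, psiIncrement a y ^ 2 ≤
      1001 / 1000 * (x ^ 2 * zeroEnergy δ) + 1003 * δ ^ 2 * x := by
  have hsq : ∀ p q, 1 ≤ p → p ≤ q → q ≤ x →
      IntervalIntegrable (fun y => psiIncrement a y ^ 2) volume p q := by
    intro p q hp hpq hqx
    rw [intervalIntegrable_iff_integrableOn_Ioc_of_le hpq]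
    have hm : AEStronglyMeasurable (psiIncrement a) (volume.restrict (Ioc p q)) :=
      (intervalIntegrable_psiIncrement (by linarith) p q).1.aestronglyMeasurable
    refine Integrable.of_bound (hm.pow 2) ((Chebyshev.psi (a * x) + (a - 1) * x) ^ 2)
      ((ae_restrict_iff' measurableSet_Ioc).2 (ae_of_all _ fun y hy => ?_))
    rw [norm_pow]
    gcongr
    exact abs_psiIncrement_le ha (by linarith [hy.1]) (hy.2.trans hqx)
  have h1 : ∫ y in (1 : ℝ)..(3 / 2), psiIncrement a y ^ 2 ≤ 2 * δ ^ 2 * x := by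
    have : ∀ y ∈ Icc (1 : ℝ) (3 / 2), psiIncrement a y ^ 2 ≤ δ ^ 2 * (9 / 4) := by
      intro y hy
      have e1 : Chebyshev.psi (a * y) = 0 :=
        Chebyshev.psi_eq_zero_of_lt_two (by nlinarith [hy.1, hy.2])
      have e2 : Chebyshev.psi y = 0 := Chebyshev.psi_eq_zero_of_lt_two (by linarith [hy.2])
      have e3 : (a - 1) * y ≤ δ * (3 / 2) :=
        mul_le_mul haδ hy.2 (by linarith [hy.1]) hδ.le
      have e4 : 0 ≤ (a - 1) * y := mul_nonneg (by linarith) (by linarith [hy.1])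
      rw [psiIncrement, e1, e2]
      nlinarith
    refine (intervalIntegral.integral_mono_on (by norm_num) (hsq _ _ le_rfl (by norm_num) hx)
      intervalIntegrable_const this).trans ?_
    rw [intervalIntegral.integral_const, smul_eq_mul]
    nlinarith [sq_nonneg δ]
  have hlim : Tendsto (fun n : ℕ => ∫ y in (3 / 2 : ℝ)..x,
      smoothedIncrement a (1 + 1 / ((n : ℝ) + 1)) y ^ 2) atTop
      (𝓝 (∫ y in (3 / 2 : ℝ)..x, psiIncrement a y ^ 2)) := by
    refine intervalIntegral.tendsto_integral_filter_of_dominated_convergence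
      (fun _ => (Chebyshev.psi (a * (2 * x)) + (a - 1) * (2 * x)) ^ 2) (Eventually.of_forall fun n => ?_)
      (Eventually.of_forall fun n => ae_of_all _ fun y hy => ?_) intervalIntegrable_const
      (ae_of_all _ fun y hy => ?_)
    · refine ContinuousOn.aestronglyMeasurable (((continuousOn_smoothedIncrement (by linarith)
        (by linarith [(by positivity : 0 < 1 / ((n : ℝ) + 1))])).mono fun y hy => ?_).pow 2)
        measurableSet_uIoc
      rw [uIoc_of_le hx] at hy
      exact lt_trans (by norm_num) hy.1
    · rw [uIoc_of_le hx] at hy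
      rw [norm_pow]
      gcongr
      have h2 : 1 / ((n : ℝ) + 1) ≤ 1 := by
        rw [div_le_one (by positivity)]; linarith [(Nat.cast_nonneg n : (0 : ℝ) ≤ n)]
      exact abs_smoothedIncrement_le ha (by linarith [(by positivity : 0 < 1 / ((n : ℝ) + 1))])
        (by linarith) (by linarith [hy.1]) hy.2
    · rw [uIoc_of_le hx] at hy
      exact (tendsto_smoothedIncrement (by linarith) (by linarith [hy.1])).pow 2
  have hlim2 : Tendsto (fun n : ℕ => 1001 / 1000 * (x ^ 2 * ((1 + 1 / ((n : ℝ) + 1)) * zeroEnergy δ)) +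
      1001 * δ ^ 2 * x) atTop (𝓝 (1001 / 1000 * (x ^ 2 * zeroEnergy δ) + 1001 * δ ^ 2 * x)) := by
    have := (tendsto_one_div_add_atTop_nhds_zero_nat (𝕜 := ℝ)).const_add 1
    have := ((((this.mul_const (zeroEnergy δ)).const_mul (x ^ 2)).const_mul (1001 / 1000)).add_const
      (1001 * δ ^ 2 * x))
    simpa using this
  have h2 := le_of_tendsto_of_tendsto' hlim hlim2 fun n =>
    integral_sq_smoothedIncrement_le H ha haδ hδ hδ1
      (by linarith [(by positivity : 0 < 1 / ((n : ℝ) + 1))]) hx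
  rw [← intervalIntegral.integral_add_adjacent_intervals (hsq 1 (3 / 2) le_rfl (by norm_num) hx)
    (hsq (3 / 2) x (by norm_num) hx le_rfl)]
  linarith

theorem monotone_psi_sub_theta : Monotone fun x => Chebyshev.psi x - Chebyshev.theta x := by
  intro x y hxy
  simp only [Chebyshev.psi_sub_theta_eq_sum_not_prime]
  refine Finset.sum_le_sum_of_subset_of_nonneg (fun n hn => ?_) fun _ _ _ =>
    ArithmeticFunction.vonMangoldt_nonneg
  simp only [Finset.mem_filter, Finset.mem_Ioc] at hn ⊢
  exact ⟨⟨hn.1.1, hn.1.2.trans (Nat.floor_le_floor hxy)⟩, hn.2⟩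

theorem log_four_le : Real.log 4 ≤ 1.3863 := by
  have h : Real.log 4 = 2 * Real.log 2 := by
    rw [show (4 : ℝ) = 2 ^ 2 by norm_num, Real.log_pow]; norm_num
  rw [h]
  linarith [Real.log_two_lt_d9]

theorem psi_sub_theta_le_sqrt {z : ℝ} (hz : (10 : ℝ) ^ 12 ≤ z) :
    Chebyshev.psi z - Chebyshev.theta z ≤ 5 / 2 * √z := by
  have hz0 : 0 < z := lt_of_lt_of_le (by norm_num) hz
  have hz1 : 1 ≤ z := le_trans (by norm_num) hz
  set t : ℝ := √z with ht
  have ht0 : 0 < t := Real.sqrt_pos.2 hz0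
  have ht6 : (10 : ℝ) ^ 6 ≤ t := Real.le_sqrt_of_sq_le (by norm_num at hz ⊢; exact hz)
  have e2 : z ^ (2 : ℝ)⁻¹ = t := by rw [ht, Real.sqrt_eq_rpow]; norm_num
  have e3 : 100 * z ^ (3 : ℝ)⁻¹ ≤ t := by
    have h100 : (100 : ℝ) ≤ z ^ (6 : ℝ)⁻¹ := by
      rw [Real.le_rpow_inv_iff_of_pos (by norm_num) hz0.le (by norm_num)]
      norm_num at hz ⊢
      exact hz
    calc 100 * z ^ (3 : ℝ)⁻¹ ≤ z ^ (6 : ℝ)⁻¹ * z ^ (3 : ℝ)⁻¹ := by gcongr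
      _ = t := by rw [← Real.rpow_add hz0, ← e2]; norm_num
  have e5 : z ^ (5 : ℝ)⁻¹ ≤ z ^ (3 : ℝ)⁻¹ := Real.rpow_le_rpow_of_exponent_le hz1 (by norm_num)
  have h2 : Chebyshev.psi t ≤ 1.3863 * t + 4 / 5 * t := by
    refine (Chebyshev.psi_le (le_trans (by norm_num) ht6)).trans ?_
    have hs : 10 ≤ √√t := by
      refine Real.le_sqrt_of_sq_le (Real.le_sqrt_of_sq_le ?_)
      linarith
    have hl : Real.log t = 4 * Real.log (√√t) := by
      rw [Real.log_sqrt (Real.sqrt_nonneg _), Real.log_sqrt ht0.le]; ring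
    have hl2 : Real.log (√√t) ≤ √√t := (Real.log_le_sub_one_of_pos (by positivity)).trans (by linarith)
    have hq : √√t ^ 2 = √t := Real.sq_sqrt (Real.sqrt_nonneg _)
    have hq2 : √t ^ 2 = t := Real.sq_sqrt ht0.le
    have h3 : √√t ≤ √t / 10 := by
      nlinarith
    have h4 : 2 * √t * Real.log t ≤ 4 / 5 * t := by
      rw [hl]
      calc 2 * √t * (4 * Real.log (√√t)) ≤ 2 * √t * (4 * (√t / 10)) := by
            gcongr
            exact hl2.trans h3
        _ = 4 / 5 * √t ^ 2 := by ring
        _ = _ := by rw [hq2]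
    have h5 : Real.log 4 * t ≤ 1.3863 * t := by
      gcongr
      exact log_four_le
    linarith
  have h3 : ∀ v : ℝ, 0 ≤ v → 100 * v ≤ t → Chebyshev.psi v ≤ 0.06 * t := fun v hv hvt => by
    refine (Chebyshev.psi_le_const_mul_self hv).trans ?_
    have := mul_le_mul_of_nonneg_right (add_le_add_left log_four_le 4) hv
    linarith
  have := Chebyshev.psi_sub_theta_le_psi_add_psi_add_psi z
  rw [e2] at this
  linarith [h3 (z ^ (3 : ℝ)⁻¹) (by positivity) e3, h3 (z ^ (5 : ℝ)⁻¹) (by positivity) (by linarith)]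

theorem integral_sq_increment_le_of_monotone {R : ℝ → ℝ} (hR : Monotone R) (hR0 : ∀ y, 0 ≤ R y)
    {a x : ℝ} (ha : 1 ≤ a) (hx : 1 ≤ x) :
    ∫ y in (1 : ℝ)..x, (R (a * y) - R y) ^ 2 ≤ (a - 1) * x * R (a * x) ^ 2 := by
  have ha0 : 0 < a := by linarith
  have hRa : Monotone fun y => R (a * y) := fun _ _ h => hR (by gcongr)
  have hpt : ∀ y ∈ Icc 1 x, (R (a * y) - R y) ^ 2 ≤ R (a * x) * (R (a * y) - R y) := by
    intro y hy
    have hy0 : 0 ≤ y := by linarith [hy.1]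
    have h1 : R y ≤ R (a * y) := hR (le_mul_of_one_le_left hy0 ha)
    have h2 : R (a * y) ≤ R (a * x) := hRa hy.2
    rw [sq]
    exact mul_le_mul_of_nonneg_right (by linarith [hR0 y]) (by linarith)
  have i1 : ∀ p q, IntervalIntegrable R volume p q := fun p q => hR.intervalIntegrable
  have i2 : ∀ p q, IntervalIntegrable (fun y => R (a * y)) volume p q := fun p q =>
    hRa.intervalIntegrable
  have hsq : IntervalIntegrable (fun y => (R (a * y) - R y) ^ 2) volume 1 x := by
    rw [intervalIntegrable_iff_integrableOn_Ioc_of_le hx]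
    have hm : Measurable fun y => R (a * y) - R y := hRa.measurable.sub hR.measurable
    refine Integrable.of_bound (hm.pow_const 2).aestronglyMeasurable (R (a * x) ^ 2)
      ((ae_restrict_iff' measurableSet_Ioc).2 (ae_of_all _ fun y hy => ?_))
    rw [Real.norm_of_nonneg (sq_nonneg _)]
    refine (hpt y (Ioc_subset_Icc_self hy)).trans ?_
    rw [sq]
    exact mul_le_mul_of_nonneg_left (by linarith [hRa hy.2, hR0 y]) (hR0 _)
  refine (intervalIntegral.integral_mono_on hx hsq (((i2 1 x).sub (i1 1 x)).const_mul _) hpt).trans ?_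
  rw [intervalIntegral.integral_const_mul, intervalIntegral.integral_sub (i2 1 x) (i1 1 x)]
  have hax : x ≤ a * x := le_mul_of_one_le_left (by linarith) ha
  have h0 : 0 ≤ ∫ y in (1 : ℝ)..x, R (a * y) :=
    intervalIntegral.integral_nonneg hx fun y _ => hR0 _
  have h1 : a * ∫ y in (1 : ℝ)..x, R (a * y) = ∫ y in a..a * x, R y := by
    rw [intervalIntegral.integral_comp_mul_left R ha0.ne', smul_eq_mul, mul_one]
    field_simp
  have h2 : ∫ y in a..a * x, R y =
      (∫ y in (1 : ℝ)..x, R y) + (∫ y in x..a * x, R y) - ∫ y in (1 : ℝ)..a, R y := by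
    rw [intervalIntegral.integral_add_adjacent_intervals (i1 _ _) (i1 _ _), eq_sub_iff_add_eq',
      intervalIntegral.integral_add_adjacent_intervals (i1 _ _) (i1 _ _)]
  have h3 : ∫ y in x..a * x, R y ≤ (a * x - x) * R (a * x) := by
    have := intervalIntegral.integral_mono_on hax (i1 x (a * x))
      (intervalIntegrable_const (c := R (a * x))) fun y hy => hR hy.2
    rwa [intervalIntegral.integral_const, smul_eq_mul] at this
  have h4 : 0 ≤ ∫ y in (1 : ℝ)..a, R y := intervalIntegral.integral_nonneg ha fun y _ => hR0 _
  have h5 : (∫ y in (1 : ℝ)..x, R (a * y)) - ∫ y in (1 : ℝ)..x, R y ≤ (a * x - x) * R (a * x) := by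
    nlinarith
  calc _ ≤ R (a * x) * ((a * x - x) * R (a * x)) := mul_le_mul_of_nonneg_left h5 (hR0 _)
    _ = _ := by ring

theorem log_two_div_add_one_le {δ : ℝ} (h0 : 0 < δ) (h1 : δ ≤ 1 / 10000) :
    Real.log (2 / δ + 1) ≤ Real.log (2.0001 / δ) := by
  refine Real.log_le_log (by positivity) ?_
  rw [le_div_iff₀ h0, add_mul, div_mul_cancel₀ _ h0.ne']
  linarith

theorem thirty_le_log {v : ℝ} (hv : 2 * (10 : ℝ) ^ 13 ≤ v) : 30 ≤ Real.log v := by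
  have h : Real.exp 30 ≤ 2 * 10 ^ 13 := by
    have : Real.exp 30 = Real.exp 1 ^ 30 := by rw [← Real.exp_nat_mul]; norm_num
    rw [this]
    calc Real.exp 1 ^ 30 ≤ 2.7182818286 ^ 30 := by
          gcongr
          exact Real.exp_one_lt_d9.le
      _ ≤ _ := by norm_num
  rw [Real.le_log_iff_exp_le (lt_of_lt_of_le (by norm_num) hv)]
  exact h.trans hv

theorem zeroEnergy_le {δ : ℝ} (h0 : 0 < δ) (h1 : δ ≤ 1 / 10000) {L : ℝ} (hL : 30 ≤ L)
    (hl : Real.log (2 / δ + 1) ≤ L) : zeroEnergy δ ≤ 2.1513 * (δ * L ^ 2) := by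
  have hl0 : 0 ≤ Real.log (2 / δ + 1) := Real.log_nonneg (by linarith [(by positivity : 0 < 2 / δ)])
  have h2 : Real.log (2 / δ + 1) ^ 2 ≤ L ^ 2 := by gcongr
  have h3 : Real.log (2 / δ + 1) ^ 2 + 2.22 * Real.log (2 / δ + 1) + 1 ≤ 1.0752 * L ^ 2 := by
    nlinarith
  rw [zeroEnergy]
  calc _ ≤ δ * (2 + 1 / 10000) * (1.0752 * L ^ 2) := by gcongr
    _ ≤ _ := by nlinarith [mul_nonneg h0.le (sq_nonneg L)]

theorem Chebyshev.integral_sq_theta_increment_le (hRH : RiemannHypothesis) {x δ : ℝ}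
    (hx : (10 : ℝ) ^ 12 ≤ x) (hδ0 : 0 < δ) (hδ1 : δ ≤ (10 : ℝ) ^ (-13 : ℤ)) :
    ∫ y in (1 : ℝ)..x, (theta ((1 + δ) * y) - theta y - δ * y) ^ 2 ≤
      2.5571 * δ * Real.log (2.0001 / δ) ^ 2 * x ^ 2 := by
  obtain ⟨ι, γ, H⟩ := exists_hasSum_logDeriv_entireXi hRH
  have hδ2 : δ ≤ 1 / 10 ^ 13 := by norm_num at hδ1 ⊢; exact hδ1
  have hδ3 : δ ≤ 1 / 10000 := hδ2.trans (by norm_num)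
  have hx1 : 1 ≤ x := le_trans (by norm_num) hx
  have hL : 30 ≤ Real.log (2.0001 / δ) := by
    refine thirty_le_log ?_
    rw [le_div_iff₀ hδ0]
    nlinarith
  have hE := zeroEnergy_le hδ0 hδ3 hL (log_two_div_add_one_le hδ0 hδ3)
  set L := Real.log (2.0001 / δ)
  set R : ℝ → ℝ := fun y => psi y - theta y with hR
  have hR0 : ∀ y, 0 ≤ R y := fun y => sub_nonneg.2 (theta_le_psi y)
  have hpsi := integral_sq_psiIncrement_le H (a := 1 + δ) (x := x) (by linarith) (by linarith) hδ0
    (hδ3.trans (by norm_num)) (by linarith [(le_trans (by norm_num) hx : (2 : ℝ) ≤ x)])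
  have hrem := integral_sq_increment_le_of_monotone monotone_psi_sub_theta hR0
    (a := 1 + δ) (by linarith) hx1
  have hRb : R ((1 + δ) * x) ^ 2 ≤ 7 * x := by
    have hxx : x ≤ (1 + δ) * x := le_mul_of_one_le_left (by linarith) (by linarith)
    have h1 := psi_sub_theta_le_sqrt (hx.trans hxx)
    have h2 : R ((1 + δ) * x) ^ 2 ≤ (5 / 2 * √((1 + δ) * x)) ^ 2 :=
      pow_le_pow_left₀ (hR0 _) h1 2
    rw [mul_pow, Real.sq_sqrt (by positivity)] at h2
    nlinarith
  have hbd : ∀ f : ℝ → ℝ, Measurable f → (∃ C, ∀ y ∈ Ioc 1 x, ‖f y‖ ≤ C) →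
      IntervalIntegrable f volume 1 x := fun f hf ⟨C, hC⟩ => by
    rw [intervalIntegrable_iff_integrableOn_Ioc_of_le hx1]
    exact Integrable.of_bound hf.aestronglyMeasurable C
      ((ae_restrict_iff' measurableSet_Ioc).2 (ae_of_all _ hC))
  have hpm : Measurable (psiIncrement (1 + δ)) :=
    ((psi_mono.measurable.comp (measurable_const_mul _)).sub psi_mono.measurable).sub
      (measurable_const_mul _)
  have hRm : Measurable fun y => R ((1 + δ) * y) - R y :=
    (monotone_psi_sub_theta.measurable.comp (measurable_const_mul _)).sub
      monotone_psi_sub_theta.measurable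
  have hpi : IntervalIntegrable (fun y => psiIncrement (1 + δ) y ^ 2) volume 1 x := by
    refine hbd _ (hpm.pow_const 2) ⟨(psi ((1 + δ) * x) + (1 + δ - 1) * x) ^ 2, fun y hy => ?_⟩
    rw [norm_pow]
    gcongr
    exact abs_psiIncrement_le (by linarith) (by linarith [hy.1]) hy.2
  have hRi : IntervalIntegrable (fun y => (R ((1 + δ) * y) - R y) ^ 2) volume 1 x := by
    refine hbd _ (hRm.pow_const 2) ⟨R ((1 + δ) * x) ^ 2, fun y hy => ?_⟩
    rw [norm_pow]
    gcongr
    have hy0 : 0 ≤ y := by linarith [hy.1]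
    have h1 : R y ≤ R ((1 + δ) * y) :=
      monotone_psi_sub_theta (le_mul_of_one_le_left hy0 (by linarith))
    have h2 : R ((1 + δ) * y) ≤ R ((1 + δ) * x) := monotone_psi_sub_theta (by gcongr; exact hy.2)
    rw [Real.norm_of_nonneg (by linarith)]
    linarith [hR0 y]
  have hpt : ∀ y, (theta ((1 + δ) * y) - theta y - δ * y) ^ 2 ≤
      1.078 * psiIncrement (1 + δ) y ^ 2 + 14 * (R ((1 + δ) * y) - R y) ^ 2 := by
    intro y
    have e : theta ((1 + δ) * y) - theta y - δ * y =
        psiIncrement (1 + δ) y - (R ((1 + δ) * y) - R y) := by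
      simp only [psiIncrement, hR]; ring
    rw [e]
    generalize psiIncrement (1 + δ) y = p
    generalize R ((1 + δ) * y) - R y = q
    nlinarith [sq_nonneg (0.078 * p + q)]
  have hti : IntervalIntegrable (fun y => (theta ((1 + δ) * y) - theta y - δ * y) ^ 2) volume 1 x := by
    refine ((hpi.const_mul 1.078).add (hRi.const_mul 14)).mono_fun ?_ (ae_of_all _ fun y => ?_)
    · exact ((((theta_mono.measurable.comp (measurable_const_mul _)).sub theta_mono.measurable).sub
        (measurable_const_mul _)).pow_const 2).aestronglyMeasurable
    · beta_reduce
      rw [Real.norm_of_nonneg (sq_nonneg _)]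
      exact (hpt y).trans (le_abs_self _)
  refine (intervalIntegral.integral_mono_on hx1 hti ((hpi.const_mul 1.078).add (hRi.const_mul 14))
    fun y _ => hpt y).trans ?_
  rw [intervalIntegral.integral_add (hpi.const_mul _) (hRi.const_mul _),
    intervalIntegral.integral_const_mul, intervalIntegral.integral_const_mul]
  have hrem2 : ∫ y in (1 : ℝ)..x, (R ((1 + δ) * y) - R y) ^ 2 ≤ 7 * (δ * x ^ 2) := by
    refine hrem.trans ?_
    rw [add_sub_cancel_left]
    calc δ * x * R ((1 + δ) * x) ^ 2 ≤ δ * x * (7 * x) := by gcongr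
      _ = _ := by ring
  have hmain : x ^ 2 * zeroEnergy δ ≤ 2.1513 * (δ * x ^ 2 * L ^ 2) := by
    calc x ^ 2 * zeroEnergy δ ≤ x ^ 2 * (2.1513 * (δ * L ^ 2)) := by gcongr
      _ = _ := by ring
  have hsmall : δ ^ 2 * x ≤ 1 / 1000 * (δ * x ^ 2) := by
    have : δ ≤ 1 / 1000 * x := by linarith
    calc δ ^ 2 * x = δ * x * δ := by ring
      _ ≤ δ * x * (1 / 1000 * x) := by gcongr
      _ = _ := by ring
  have hW : 0 ≤ δ * x ^ 2 := by positivity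
  have hWL : 900 * (δ * x ^ 2) ≤ δ * x ^ 2 * L ^ 2 := by
    nlinarith [mul_le_mul_of_nonneg_left (show 900 ≤ L ^ 2 by nlinarith) hW]
  have : 2.5571 * δ * L ^ 2 * x ^ 2 = 2.5571 * (δ * x ^ 2 * L ^ 2) := by ring
  rw [this]
  linarith

theorem chebyshevTheta_eq (x : ℝ) : chebyshevTheta x = Chebyshev.theta x := by
  rw [chebyshevTheta, Chebyshev.theta_eq_sum_Icc]
  rfl

end

/-- Assuming RH, for `x ≥ 10^13` and `δ ∈ (0, 10^{-13}]` we have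
`J_θ(x,δ) = ∫₁^x (θ((1+δ)y) − θ(y) − δy)² dy ≤ 2.5571 δ (log(2.0001/δ))² x²`. -/
theorem Jtheta_explicit_bound (hRH : RiemannHypothesis) (x δ : ℝ)
    (hx : (10 : ℝ) ^ (13 : ℕ) ≤ x) (hδ0 : 0 < δ) (hδ1 : δ ≤ (10 : ℝ) ^ (-13 : ℤ)) :
    ∫ y in (1 : ℝ)..x, (chebyshevTheta ((1 + δ) * y) - chebyshevTheta y - δ * y) ^ 2 ≤
      2.5571 * δ * Real.log (2.0001 / δ) ^ 2 * x ^ 2 := by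
  simp only [chebyshevTheta_eq]
  exact Chebyshev.integral_sq_theta_increment_le hRH (le_trans (by norm_num) hx) hδ0 hδ1
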